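/- Fix k ≥ 2 and let m ≥ k be a natural number with k-normal form m =_k H_α(k)·p+q. Then the (k+1)-normal form of m[k←k+1] is H_(α[k←k+1])(k+1)·p + q[k←k+1]; in particular, α[k←k+1] is maximal among β ∈ OT0 with β < Ω such that H_β(k+1) ≤ m[k←k+1], and p is maximal with H_(α[k←k+1])(k+1)·p ≤ m[k←k+1]. -/

import Mathlib

set_option maxHeartbeats 1000000

attribute [local instance] Classical.propDecidable

/-- Raw terms of the system `T`: `0`, `1`, `ψᵢ a` and (right-nested) sums `a + b`. -/
inductive Tm : Type where
  | zero : Tm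
  | one  : Tm
  | psi  : ℕ → Tm → Tm
  | add  : Tm → Tm → Tm
deriving DecidableEq

instance : Nonempty Tm := ⟨Tm.zero⟩

/-- Head (first summand) of a term. -/
def Tm.hd : Tm → Tm
  | .add a _ => a
  | t => t

/-- Tail (remaining summands) of a term. -/
def Tm.tl : Tm → Tm
  | .add _ b => b
  | _ => .zero

/-- Whether a term is a genuine sum. -/
def Tm.isAdd : Tm → Prop
  | .add _ _ => True
  | _ => False

/-- The comparison relation `<` on terms of `T`. -/
inductive TLt : Tm → Tm → Prop where
  | zero_lt {a : Tm} : a ≠ Tm.zero → TLt Tm.zero a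
  | one_lt_psi0 {a : Tm} : TLt Tm.one (Tm.psi 0 a)
  | psi_mono {i : ℕ} {a b : Tm} : TLt a b → TLt (Tm.psi i a) (Tm.psi i b)
  | psi_lt {i j : ℕ} {a b : Tm} : i < j → TLt (Tm.psi i a) (Tm.psi j b)
  | lex_hd {a b : Tm} : (Tm.isAdd a ∨ Tm.isAdd b) → TLt (Tm.hd a) (Tm.hd b) → TLt a b
  | lex_tl {a b : Tm} : (Tm.isAdd a ∨ Tm.isAdd b) → Tm.hd a = Tm.hd b →
      TLt (Tm.tl a) (Tm.tl b) → TLt a b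

/-- `≤` on terms. -/
def TLe (a b : Tm) : Prop := TLt a b ∨ a = b

/-- Addition of terms: summands of the left argument smaller than the head of the
right argument are discarded. -/
noncomputable def Tm.addT : Tm → Tm → Tm
  | .zero, b => b
  | a, .zero => a
  | .add p r, b => if TLt p (Tm.hd b) then b else Tm.add p (Tm.addT r b)
  | a, b => if TLt a (Tm.hd b) then b else Tm.add a b

/-- The term representing a natural number. -/
def natToTm : ℕ → Tm
  | 0 => .zero
  | 1 => .one
  | n + 2 => Tm.add Tm.one (natToTm (n + 1))

/-- The natural number represented by a (numeral) term. -/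
def tmToNat : Tm → ℕ
  | .zero => 0
  | .one => 1
  | .psi _ _ => 0
  | .add a b => tmToNat a + tmToNat b

/-- Multiplication of a (principal) term by a natural number. -/
noncomputable def mulNat (a : Tm) : ℕ → Tm
  | 0 => .zero
  | n + 1 => Tm.addT (mulNat a n) a

/-- Principal terms: `1` and the `ψᵢ`-terms. -/
def Tm.IsPrincipal : Tm → Prop
  | .one => True
  | .psi _ _ => True
  | _ => False

/-- The well-formed terms of the system `T`. -/
inductive InT : Tm → Prop where
  | zero : InT .zero
  | one : InT .one
  | psi {i : ℕ} {a : Tm} : i < 3 → InT a → InT (.psi i a)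
  | add {a b : Tm} : Tm.IsPrincipal a → InT a → InT b → b ≠ .zero →
      TLe (Tm.hd b) a → InT (.add a b)

/-- `ω := ψ₀0`. -/
def omegaT : Tm := .psi 0 .zero
/-- `Ω := ψ₁0`. -/
def OmegaT : Tm := .psi 1 .zero
/-- `Ω₂ := ψ₂0`. -/
def Omega2T : Tm := .psi 2 .zero

/-- The type `tp(α)` of a term. -/
def tp : Tm → Tm
  | .zero => .zero
  | .one => .one
  | .add _ b => tp b
  | .psi i a =>
    if tp a = Tm.zero then Tm.psi i Tm.zero
    else if tp a = Tm.one then omegaT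
    else if (i = 0 ∧ tp a = OmegaT) ∨ (i = 1 ∧ tp a = Omega2T) then omegaT
    else tp a

/-- The fundamental sequence `α[x]` of a term `α` at index `x`. -/
noncomputable def fund : Tm → Tm → Tm
  | .zero, _ => .zero
  | .one, _ => .zero
  | .add a b, x => Tm.addT a (fund b x)
  | .psi i a, x =>
    if tp a = Tm.zero then x
    else if tp a = Tm.one then mulNat (Tm.psi i (fund a Tm.zero)) (tmToNat x)
    else if i = 0 ∧ tp a = OmegaT then
      Tm.psi 0 (fund a (Nat.rec (motive := fun _ => Tm) Tm.zero
        (fun _ ih => Tm.psi 0 (fund a ih)) (tmToNat x)))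
    else if i = 1 ∧ tp a = Omega2T then
      Tm.psi 1 (fund a (Nat.rec (motive := fun _ => Tm) Tm.zero
        (fun _ ih => Tm.psi 1 (fund a ih)) (tmToNat x)))
    else Tm.psi i (fund a x)
termination_by t _ => sizeOf t
decreasing_by all_goals simp

/-- The finite set `G₁(α)`. -/
def G1 : Tm → Finset Tm
  | .zero => ∅
  | .one => ∅
  | .psi 0 _ => ∅
  | .psi 1 b => insert b (G1 b)
  | .psi 2 b => G1 b
  | .psi (_ + 3) _ => ∅
  | .add a b => G1 a ∪ G1 b

/-- The finite set `G₀(α)`. -/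
def G0 : Tm → Finset Tm
  | .zero => ∅
  | .one => ∅
  | .psi 0 b => insert b (G0 b)
  | .psi 1 b => G0 b
  | .psi 2 b => G0 b
  | .psi (_ + 3) _ => ∅
  | .add a b => G0 a ∪ G0 b

/-- The well-founded subsystem `OT ⊆ T`. -/
inductive InOT : Tm → Prop where
  | zero : InOT .zero
  | one : InOT .one
  | psi2 {b : Tm} : InOT b → InOT (.psi 2 b)
  | add {a b : Tm} : InT (.add a b) → InOT a → InOT b → InOT (.add a b)
  | psi1 {b : Tm} : InOT b → (∀ γ ∈ G1 b, TLt γ b) → InOT (.psi 1 b)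
  | psi0 {b : Tm} : InOT b → (∀ γ ∈ G0 b, TLt γ b) → TLt b Omega2T → InOT (.psi 0 b)

/-- The norm `N(α)`. -/
def normN : Tm → ℕ
  | .zero => 0
  | .one => 1
  | .psi _ b => 1 + normN b
  | .add a b => normN a + normN b

/-- `OT₀ := {α ∈ OT : α < ψ₁Ω₂ and G₀α < ψ₁Ω₂}`. -/
def InOT0 (a : Tm) : Prop :=
  InOT a ∧ TLt a (Tm.psi 1 Omega2T) ∧ ∀ γ ∈ G0 a, TLt γ (Tm.psi 1 Omega2T)

/-- Single-step descent: `b = a[x]` for some term `x ≤ n`. -/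
def stepLe (n : ℕ) (b a : Tm) : Prop := ∃ x : Tm, TLe x (natToTm n) ∧ b = fund a x

/-- `a <ₙ b` : transitive closure of single-step descent. -/
def ltN (n : ℕ) (a b : Tm) : Prop := Relation.TransGen (stepLe n) a b

/-- `a ≤ₙ b` : reflexive transitive closure of single-step descent. -/
def leN (n : ℕ) (a b : Tm) : Prop := Relation.ReflTransGen (stepLe n) a b

mutual
/-- Graph of the Hardy hierarchy: `HRel α k n` means `H_α(k) = n`. -/
inductive HRel : Tm → ℕ → ℕ → Prop where
  | zero {k : ℕ} : HRel Tm.zero k k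
  | succ {α : Tm} {k n : ℕ} : tp α = Tm.one → HRel (fund α Tm.zero) k n →
      HRel α k (n * k)
  | lim {α β : Tm} {k n : ℕ} : tp α = omegaT → HIter α k k β → HRel β k n →
      HRel α k n

/-- Graph of the iteration `α{b}`: `HIter α k b β` means `α{b} = β`
(where `α{0} = α[0]` and `α{b+1} = α[H_(α{b})(k)]`). -/
inductive HIter : Tm → ℕ → ℕ → Tm → Prop where
  | zero {α : Tm} {k : ℕ} : HIter α k 0 (fund α Tm.zero)
  | succ {α β : Tm} {k b n : ℕ} : HIter α k b β → HRel β k n →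
      HIter α k (b + 1) (fund α (natToTm n))
end

/-- The Hardy function `H_α(k)`. -/
noncomputable def H (α : Tm) (k : ℕ) : ℕ := sInf {n | HRel α k n}

/-- The (unique, when it exists) ordinal term of the `k`-normal form of `m`:
the maximal `α ∈ OT₀ ∩ Ω` with `H_α(k) ≤ m`. -/
noncomputable def nfAlpha (k m : ℕ) : Tm :=
  Classical.epsilon fun α =>
    InOT0 α ∧ TLt α OmegaT ∧ H α k ≤ m ∧
      ∀ β : Tm, InOT0 β → TLt β OmegaT → TLt α β → m < H β k

theorem tmToNat_le_normN (t : Tm) : tmToNat t ≤ normN t := by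
  induction t with
  | zero => simp [tmToNat, normN]
  | one => simp [tmToNat, normN]
  | psi i a ih => simp [tmToNat, normN]
  | add a b iha ihb => simp only [tmToNat, normN]; omega

mutual
/-- Base change `α[k ← k+1]` on terms. -/
noncomputable def bcT (k : ℕ) : Tm → Tm
  | .zero => .zero
  | .one => .one
  | .psi i a => .psi i (bcT k a)
  | .add a b =>
      if a = Tm.one then natToTm (bcN k (tmToNat (Tm.add a b)))
      else if h : 0 < normN a ∧ 0 < normN b then Tm.add (bcT k a) (bcT k b)
      else Tm.zero
termination_by a => 2 * normN a + 1
decreasing_by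
  all_goals simp only [normN]
  · omega
  · have := tmToNat_le_normN (Tm.add a b); simp only [normN] at this ⊢; omega
  · omega
  · omega

/-- Base change `m[k ← k+1]` on natural numbers. -/
noncomputable def bcN (k m : ℕ) : ℕ :=
  if h1 : m < k then m
  else if h2 : m = k then k + 1
  else if hg : normN (nfAlpha k m) < m ∧ 0 < H (nfAlpha k m) k ∧ H (nfAlpha k m) k ≤ m then
    H (bcT k (nfAlpha k m)) (k + 1) * (m / H (nfAlpha k m) k) + bcN k (m % H (nfAlpha k m) k)
  else 0
termination_by 2 * m
decreasing_by
  · omega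
  · have := Nat.mod_lt m (y := H (nfAlpha k m) k) hg.2.1; omega
end

mutual
/-- The ordinal assignment `o_k` on terms of `OT₀`. -/
noncomputable def oT (k : ℕ) : Tm → Tm
  | .zero => .zero
  | .one => .one
  | .psi 0 b => .psi 1 (oT k b)
  | .psi 1 b => .psi 2 (oT k b)
  | .psi (_ + 2) _ => .zero
  | .add a b =>
      if a = Tm.one then oN k (tmToNat (Tm.add a b))
      else if h : 0 < normN a ∧ 0 < normN b then Tm.addT (oT k a) (oT k b)
      else Tm.zero
termination_by a => 2 * normN a + 1
decreasing_by
  all_goals simp only [normN]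
  · omega
  · omega
  · have := tmToNat_le_normN (Tm.add a b); simp only [normN] at this ⊢; omega
  · omega
  · omega

/-- The ordinal assignment `o_k` on natural numbers. -/
noncomputable def oN (k m : ℕ) : Tm :=
  if h1 : m < k then natToTm m
  else if h2 : m = k then omegaT
  else if hg : normN (nfAlpha k m) < m ∧ 0 < H (nfAlpha k m) k ∧ H (nfAlpha k m) k ≤ m then
    Tm.addT (Tm.psi 0 (oT k (nfAlpha k m))) (oN k (m - H (nfAlpha k m) k))
  else Tm.zero
termination_by 2 * m
decreasing_by
  · omega
  · omega
end

/-- Ordinal contexts: a term with a single hole, either replacing a summand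
(`ξ + ⟦·⟧ + η`) or nested under collapsing functions (`ξ + ψᵢ(μ⟦·⟧) + η`). -/
inductive Ctx : Type where
  | base : Tm → Tm → Ctx
  | psiC : Tm → ℕ → Ctx → Tm → Ctx

/-- Filling the hole of a context with a term. -/
noncomputable def Ctx.fill : Ctx → Tm → Tm
  | .base ξ η, γ => Tm.addT (Tm.addT ξ γ) η
  | .psiC ξ i μ η, γ => Tm.addT (Tm.addT ξ (Tm.psi i (Ctx.fill μ γ))) η

/-- The truncated context `λ⁻⟦·⟧`: all summands following the hole are removed,
at every level. -/
def Ctx.trunc : Ctx → Ctx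
  | .base ξ _ => .base ξ Tm.zero
  | .psiC ξ i μ _ => .psiC ξ i (Ctx.trunc μ) Tm.zero

/-- A context is valid if only `ψ₀` and `ψ₁` occur on the path to the hole. -/
def Ctx.Valid : Ctx → Prop
  | .base _ _ => True
  | .psiC _ i μ _ => i ≤ 1 ∧ Ctx.Valid μ

/-- A context is `ψ₀`-nesting free if its hole is not in the scope of a `ψ₀`. -/
def Ctx.NestFree : Ctx → Prop
  | .base _ _ => True
  | .psiC _ i μ _ => i = 1 ∧ Ctx.NestFree μ

/-!
Base change of a term rewrites its numeral tails by base change `f` of numbers. If `f` is strictly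
increasing, this rewriting preserves and reflects the order on terms and embeds every term
homeomorphically into its image. Hardy functions are monotone along homeomorphic embeddings, and by
the Bachmann property `δ[n] ≤ α < δ` implies that `δ[n]` embeds into `α`.

Call `α` normal at `k` if `H_β(k) > H_α(k)` for all indices `β > α`. The crux is that the image
`α'` of a normal `α` is normal at `k + 1`, which is shown by induction on the competitor `δ > α'`.
For limit `δ` it suffices that the iteration defining `H_δ(k+1)` reaches a term above `α'`. If it
did not, `δ` could be pulled back to the least `ε` with image at least `δ`. Then `ε > α`, and by
induction along the iteration the image of `ε{b}` stays below `δ{b}` for `b ≤ k`, so `ε{k} ≤ α`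
and `H_ε(k) = H_(ε{k})(k) ≤ H_α(k)`, contradicting the normality of `α`.

Since `TLt` leaves `1` and `ψ₁b` incomparable, a term of `OT₀` can have a leading `1` only in
certain positions, and some limits `δ` leave `OT₀` along their fundamental sequence. Such a `δ`
other than `ω` arises from a limit `l < δ` by replacing a final summand `1` inside some `ψᵢ` by `ω`,
and no index lies in `[l, δ)`, so `l` serves in its place.

The image of `H_α(k)` is `H_α'(k+1)`, so normality at `k + 1` makes base change of numbers strictly
increasing up to `m` by induction, and the remaining maximality claims are division with remainder.
-/

namespace Tm

/-! ### The linear order on terms -/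

/-- The order on `T` extended to a total order on raw terms: the clauses of `TLt` together with
`1 < ψᵢ a` for all `i`. -/
def Less : Tm → Tm → Prop
  | _, zero => False
  | zero, _ => True
  | add a b, add c d => Less a c ∨ (a = c ∧ Less b d)
  | add a _, one => Less a one
  | add a _, psi j c => Less a (psi j c)
  | one, add c _ => Less one c ∨ one = c
  | psi i a, add c _ => Less (psi i a) c ∨ psi i a = c
  | one, one => False
  | one, psi _ _ => True
  | psi _ _, one => False
  | psi i a, psi j b => i < j ∨ (i = j ∧ Less a b)
termination_by a b => sizeOf a + sizeOf b

theorem less_irrefl (a : Tm) : ¬Less a a := by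
  induction a with
  | zero | one => simp only [Less, not_false_eq_true]
  | psi i a ih => simpa only [Less, lt_irrefl, true_and, false_or] using ih
  | add a b iha ihb => simp only [Less, iha, ihb, and_false, or_self, not_false_eq_true]

theorem less_trichotomous (a b : Tm) : Less a b ∨ a = b ∨ Less b a := by
  fun_induction Less a b with
  | case1 a => cases a <;> simp [Less]
  | _ => grind [Less]

theorem less_trans {a b c : Tm} (hab : Less a b) (hbc : Less b c) : Less a c := by
  induction hn : sizeOf a + sizeOf b + sizeOf c using Nat.strong_induction_on
    generalizing a b c with
  | _ n ih =>
    have ih' (x y z : Tm) (hlt : sizeOf x + sizeOf y + sizeOf z < sizeOf a + sizeOf b + sizeOf c)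
        (hxy : Less x y) (hyz : Less y z) : Less x z := ih _ (hn ▸ hlt) hxy hyz rfl
    clear ih hn
    rcases a with _ | _ | ⟨i, a⟩ | ⟨a₁, a₂⟩ <;> rcases b with _ | _ | ⟨j, b⟩ | ⟨b₁, b₂⟩ <;>
      rcases c with _ | _ | ⟨l, c⟩ | ⟨c₁, c₂⟩ <;> grind [Less, less_irrefl]

noncomputable instance : LinearOrder Tm where
  lt := Less
  le a b := Less a b ∨ a = b
  le_refl a := Or.inr rfl
  le_trans a b c := by grind [less_trans]
  le_antisymm a b := by grind [less_trans, less_irrefl]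
  lt_iff_le_not_ge a b := by grind [less_trans, less_irrefl]
  le_total a b := by grind [less_trichotomous]
  toDecidableLE := Classical.decRel _
  toDecidableLT := Classical.decRel _
  toDecidableEq := inferInstance

theorem lt_iff_less (a b : Tm) : a < b ↔ Less a b := Iff.rfl

@[simp]
theorem not_lt_zero (a : Tm) : ¬a < zero := by simp [lt_iff_less, Less]

@[simp]
theorem zero_lt (a : Tm) : zero < a ↔ a ≠ zero := by cases a <;> simp [lt_iff_less, Less]

@[simp]
theorem zero_le (a : Tm) : zero ≤ a := not_lt.1 (not_lt_zero a)

@[simp]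
theorem le_zero (a : Tm) : a ≤ zero ↔ a = zero := by
  rw [← not_lt, zero_lt, not_not]

@[simp]
theorem add_lt_add (a b c d : Tm) : add a b < add c d ↔ a < c ∨ (a = c ∧ b < d) := by
  simp only [lt_iff_less, Less]

@[simp]
theorem add_lt_one (a b : Tm) : add a b < one ↔ a < one := by simp only [lt_iff_less, Less]

@[simp]
theorem add_lt_psi (a b : Tm) (i : ℕ) (c : Tm) : add a b < psi i c ↔ a < psi i c := by
  simp only [lt_iff_less, Less]

@[simp]
theorem one_lt_add (a b : Tm) : one < add a b ↔ one ≤ a := by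
  simp only [le_iff_lt_or_eq, lt_iff_less, Less]

@[simp]
theorem psi_lt_add (a b : Tm) (i : ℕ) (c : Tm) : psi i c < add a b ↔ psi i c ≤ a := by
  simp only [le_iff_lt_or_eq, lt_iff_less, Less]

@[simp]
theorem one_lt_psi (i : ℕ) (a : Tm) : one < psi i a := by simp only [lt_iff_less, Less]

@[simp]
theorem one_le_psi (i : ℕ) (a : Tm) : one ≤ psi i a := (one_lt_psi i a).le

@[simp]
theorem not_psi_lt_one (i : ℕ) (a : Tm) : ¬psi i a < one := (one_le_psi i a).not_gt

@[simp]
theorem not_psi_le_one (i : ℕ) (a : Tm) : ¬psi i a ≤ one := (one_lt_psi i a).not_ge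

@[simp]
theorem psi_lt_psi (i : ℕ) (a : Tm) (j : ℕ) (b : Tm) :
    psi i a < psi j b ↔ i < j ∨ (i = j ∧ a < b) := by
  simp only [lt_iff_less, Less]

@[simp]
theorem psi_le_psi (i : ℕ) (a : Tm) (j : ℕ) (b : Tm) :
    psi i a ≤ psi j b ↔ i < j ∨ (i = j ∧ a ≤ b) := by
  simp only [le_iff_lt_or_eq, psi_lt_psi, psi.injEq]; tauto

/-! ### Heads, tails and principal terms -/

@[simp]
theorem hd_zero : hd zero = zero := rfl

@[simp]
theorem hd_one : hd one = one := rfl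

@[simp]
theorem hd_psi (i : ℕ) (a : Tm) : hd (psi i a) = psi i a := rfl

@[simp]
theorem hd_add (a b : Tm) : hd (add a b) = a := rfl

@[simp]
theorem not_isPrincipal_zero : ¬IsPrincipal zero := fun h => h

@[simp]
theorem isPrincipal_one : IsPrincipal one := trivial

@[simp]
theorem isPrincipal_psi (i : ℕ) (a : Tm) : IsPrincipal (psi i a) := trivial

@[simp]
theorem not_isPrincipal_add (a b : Tm) : ¬IsPrincipal (add a b) := fun h => h

theorem lt_of_hd_lt {a b : Tm} (h : hd a < hd b) : a < b := by
  cases a <;> cases b <;> grind [hd, zero_lt, not_lt_zero, add_lt_add, add_lt_one, add_lt_psi,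
    one_lt_add, psi_lt_add]

theorem hd_le_hd {a b : Tm} (h : a ≤ b) : hd a ≤ hd b :=
  not_lt.1 fun hlt => h.not_gt (lt_of_hd_lt hlt)

theorem lt_of_tlt {a b : Tm} (h : TLt a b) : a < b := by
  induction h with
  | zero_lt h => exact (zero_lt _).2 h
  | one_lt_psi0 => exact one_lt_psi _ _
  | psi_mono _ ih => exact (psi_lt_psi _ _ _ _).2 (Or.inr ⟨rfl, ih⟩)
  | psi_lt h => exact (psi_lt_psi _ _ _ _).2 (Or.inl h)
  | lex_hd _ _ ih => exact lt_of_hd_lt ih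
  | @lex_tl a b hadd hhd _ ih =>
    cases a <;> cases b <;> grind [hd, tl, isAdd, zero_lt, not_lt_zero, add_lt_add, one_lt_add,
      psi_lt_add]

theorem IsPrincipal.ne_zero {a : Tm} (h : IsPrincipal a) : a ≠ zero := by
  rintro rfl
  exact not_isPrincipal_zero h

theorem IsPrincipal.hd_eq {a : Tm} (h : IsPrincipal a) : hd a = a := by
  cases a <;> first | rfl | exact h.elim

theorem IsPrincipal.lt_add_iff {a b c : Tm} (h : IsPrincipal a) : a < add b c ↔ a ≤ b := by
  cases a <;> simp_all

theorem IsPrincipal.add_lt_iff {a b c : Tm} (h : IsPrincipal a) : add b c < a ↔ b < a := by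
  cases a <;> simp_all

theorem lt_psi_iff_hd_lt (t : Tm) (i : ℕ) (a : Tm) : t < psi i a ↔ hd t < psi i a := by
  cases t <;> simp only [hd_zero, hd_one, hd_psi, hd_add, add_lt_psi]

/-- Terms of `T` without `ψ₂`: all collapsing indices are `0` or `1`, and sums are weakly
decreasing sums of principal terms. -/
def Low : Tm → Prop
  | zero => True
  | one => True
  | psi i a => i ≤ 1 ∧ Low a
  | add a b => IsPrincipal a ∧ Low a ∧ Low b ∧ b ≠ zero ∧ hd b ≤ a

@[simp]
theorem low_zero : Low zero := trivial

@[simp]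
theorem low_one : Low one := trivial

@[simp]
theorem low_psi (i : ℕ) (a : Tm) : Low (psi i a) ↔ i ≤ 1 ∧ Low a := Iff.rfl

@[simp]
theorem low_add (a b : Tm) :
    Low (add a b) ↔ IsPrincipal a ∧ Low a ∧ Low b ∧ b ≠ zero ∧ hd b ≤ a := Iff.rfl

/-- The sum `a + t` with a principal term `a` prepended, where `t` may be the empty sum `0`. -/
def cons (a t : Tm) : Tm := if t = zero then a else add a t

@[simp]
theorem cons_zero (a : Tm) : cons a zero = a := if_pos rfl

theorem cons_of_ne_zero (a : Tm) {t : Tm} (h : t ≠ zero) : cons a t = add a t := if_neg h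

@[simp]
theorem hd_cons (a t : Tm) (h : IsPrincipal a) : hd (cons a t) = a := by
  unfold cons
  split
  · exact h.hd_eq
  · rfl

theorem low_cons {a t : Tm} (h : IsPrincipal a) :
    Low (cons a t) ↔ Low a ∧ Low t ∧ hd t ≤ a := by
  by_cases ht : t = zero
  · simp [ht]
  · simp [cons_of_ne_zero _ ht, h, ht]

theorem cons_ne_zero {a t : Tm} (h : IsPrincipal a) : cons a t ≠ zero := fun h0 =>
  h.ne_zero (by simpa [hd_cons a t h] using congrArg hd h0)

theorem cons_lt_cons {a t b s : Tm} (ha : IsPrincipal a) (hb : IsPrincipal b) :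
    cons a t < cons b s ↔ a < b ∨ (a = b ∧ t < s) := by
  by_cases ht : t = zero <;> by_cases hs : s = zero
  · simp [ht, hs]
  · simp [ht, cons_of_ne_zero _ hs, ha.lt_add_iff, le_iff_lt_or_eq, hs]
  · simp [hs, cons_of_ne_zero _ ht, hb.add_lt_iff]
  · simp [cons_of_ne_zero _ hs, cons_of_ne_zero _ ht]

theorem cons_inj {a t b s : Tm} (ha : IsPrincipal a) (hb : IsPrincipal b) :
    cons a t = cons b s ↔ a = b ∧ t = s := by
  refine ⟨fun h => ?_, fun h => by rw [h.1, h.2]⟩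
  obtain rfl : a = b := by simpa only [hd_cons _ _ ha, hd_cons _ _ hb] using congrArg hd h
  refine ⟨rfl, le_antisymm ?_ ?_⟩ <;> refine not_lt.1 fun hlt => ?_
  · exact ((cons_lt_cons ha ha).2 (Or.inr ⟨rfl, hlt⟩)).ne' h
  · exact ((cons_lt_cons ha ha).2 (Or.inr ⟨rfl, hlt⟩)).ne h

theorem cons_le_cons {a t b s : Tm} (ha : IsPrincipal a) (hb : IsPrincipal b) :
    cons a t ≤ cons b s ↔ a < b ∨ (a = b ∧ t ≤ s) := by
  rw [le_iff_lt_or_eq, cons_lt_cons ha hb, cons_inj ha hb, le_iff_lt_or_eq]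
  tauto

theorem Low.exists_cons {t : Tm} (h : Low t) (h0 : t ≠ zero) :
    ∃ a s, t = cons a s ∧ IsPrincipal a ∧ Low a ∧ Low s ∧ hd s ≤ a := by
  cases t with
  | zero => exact absurd rfl h0
  | one => exact ⟨one, zero, by simp⟩
  | psi i a => exact ⟨psi i a, zero, by simpa using h⟩
  | add a b =>
    obtain ⟨ha, hla, hlb, hb, hle⟩ := h
    exact ⟨a, b, (cons_of_ne_zero a hb).symm, ha, hla, hlb, hle⟩

theorem Low.add_eq_cons {a b : Tm} (h : Low (add a b)) : add a b = cons a b :=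
  (cons_of_ne_zero a h.2.2.2.1).symm

theorem Low.eq_zero_of_lt_one {t : Tm} (h : Low t) (hlt : t < one) : t = zero := by
  by_contra h0
  obtain ⟨a, s, rfl, ha, -⟩ := h.exists_cons h0
  rw [← cons_zero one, cons_lt_cons ha isPrincipal_one] at hlt
  cases a <;> simp_all

theorem Low.isPrincipal_hd {t : Tm} (h : Low t) (h0 : t ≠ zero) : IsPrincipal (hd t) := by
  obtain ⟨a, s, rfl, ha, -⟩ := h.exists_cons h0
  rwa [hd_cons _ _ ha]

theorem Low.hd_le {t : Tm} (h : Low t) : hd t ≤ t := by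
  by_cases h0 : t = zero
  · simp [h0]
  obtain ⟨a, s, rfl, ha, -⟩ := h.exists_cons h0
  conv_lhs => rw [hd_cons _ _ ha, ← cons_zero a]
  exact (cons_le_cons ha ha).2 (Or.inr ⟨rfl, zero_le s⟩)

theorem Low.tail_lt {a b : Tm} (h : Low (add a b)) : b < add a b := by
  induction b generalizing a with
  | zero => exact absurd rfl h.2.2.2.1
  | one => exact (one_lt_add _ _).2 h.2.2.2.2
  | psi i c => exact (psi_lt_add _ _ _ _).2 h.2.2.2.2
  | add c d _ ihd =>
    rcases h.2.2.2.2.lt_or_eq with hlt | rfl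
    · exact (add_lt_add _ _ _ _).2 (Or.inl hlt)
    · exact (add_lt_add _ _ _ _).2 (Or.inr ⟨rfl, ihd h.2.2.1⟩)

/-! ### Multiples of principal terms and numerals -/

/-- The multiple `a · n` of a principal term `a`. -/
def rep (a : Tm) : ℕ → Tm
  | 0 => zero
  | n + 1 => cons a (rep a n)

@[simp]
theorem rep_zero (a : Tm) : rep a 0 = zero := rfl

theorem rep_succ (a : Tm) (n : ℕ) : rep a (n + 1) = cons a (rep a n) := rfl

theorem hd_rep {a : Tm} (h : IsPrincipal a) (n : ℕ) :
    hd (rep a n) = if n = 0 then zero else a := by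
  cases n <;> simp [rep_succ, h]

theorem low_rep {a : Tm} (h : IsPrincipal a) (ha : Low a) (n : ℕ) : Low (rep a n) := by
  induction n with
  | zero => exact low_zero
  | succ n ih =>
    rw [rep_succ, low_cons h, hd_rep h]
    exact ⟨ha, ih, by split <;> simp⟩

theorem rep_strictMono {a : Tm} (h : IsPrincipal a) : StrictMono (rep a) := by
  refine strictMono_nat_of_lt_succ fun n => ?_
  induction n with
  | zero => exact (zero_lt _).2 (cons_ne_zero h)
  | succ n ih => exact (cons_lt_cons h h).2 (Or.inr ⟨rfl, ih⟩)

theorem rep_eq_zero {a : Tm} (h : IsPrincipal a) {n : ℕ} : rep a n = zero ↔ n = 0 :=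
  (rep_strictMono h).injective.eq_iff' (rep_zero a)

/-- The numeral `1 + ⋯ + 1` with `n` summands. -/
abbrev num (n : ℕ) : Tm := rep one n

theorem natToTm_eq_num (n : ℕ) : natToTm n = num n := by
  induction n using natToTm.induct with
  | case1 => rfl
  | case2 => rfl
  | case3 n ih =>
    rw [natToTm, ih]
    exact (cons_of_ne_zero _ ((rep_eq_zero isPrincipal_one).not.2 n.succ_ne_zero)).symm

@[simp]
theorem low_num (n : ℕ) : Low (num n) := low_rep isPrincipal_one low_one n

@[simp]
theorem num_lt_psi (n i : ℕ) (a : Tm) : num n < psi i a := by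
  rw [lt_psi_iff_hd_lt, hd_rep isPrincipal_one]
  split <;> simp

theorem normN_cons (a t : Tm) : normN (cons a t) = normN a + normN t := by
  unfold cons
  split <;> simp_all [normN]

theorem tmToNat_cons (a t : Tm) : tmToNat (cons a t) = tmToNat a + tmToNat t := by
  unfold cons
  split <;> simp_all [tmToNat]

@[simp]
theorem tmToNat_num (n : ℕ) : tmToNat (num n) = n := by
  induction n with
  | zero => rfl
  | succ n ih => rw [num, rep_succ, tmToNat_cons, ih, tmToNat, add_comm]

theorem normN_rep (a : Tm) (n : ℕ) : normN (rep a n) = n * normN a := by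
  induction n with
  | zero => rw [rep_zero, normN, Nat.zero_mul]
  | succ n ih => rw [rep_succ, normN_cons, ih, Nat.succ_mul, Nat.add_comm]

@[simp]
theorem normN_num (n : ℕ) : normN (num n) = n := by rw [normN_rep, normN, Nat.mul_one]

theorem Low.exists_eq_num {t : Tm} (h : Low t) (h1 : hd t ≤ one) : ∃ n, t = num n := by
  induction t with
  | zero => exact ⟨0, rfl⟩
  | one => exact ⟨1, rfl⟩
  | psi i a => exact absurd h1 (not_psi_le_one i a)
  | add a b _ ihb =>
    obtain rfl : a = one := by cases a <;> simp_all
    obtain ⟨n, rfl⟩ := ihb h.2.2.1 h.2.2.2.2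
    exact ⟨n + 1, h.add_eq_cons⟩

/-! ### Fundamental sequences -/

/-- A code for `tp t` when `t` has no `ψ₂`: the types `0`, `1`, `ω`, `Ω` are coded by
`0`, `1`, `2`, `3`. -/
def kind : Tm → ℕ
  | zero => 0
  | one => 1
  | add _ b => kind b
  | psi 0 _ => 2
  | psi (_ + 1) a => if kind a = 0 then 3 else if kind a = 1 then 2 else kind a

/-- The iteration `0, ψ₀ (g 0), ψ₀ (g (ψ₀ (g 0))), …` used at collapsing points. -/
def psiIter (g : Tm → Tm) : ℕ → Tm
  | 0 => zero
  | n + 1 => psi 0 (g (psiIter g n))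

/-- The fundamental sequence `t[x]` on terms without `ψ₂`, written with `cons` and `rep` in place
of `addT` and `mulNat`. -/
def fs : Tm → Tm → Tm
  | zero, _ => zero
  | one, _ => zero
  | add a b, x => cons a (fs b x)
  | psi i a, x =>
    if kind a = 0 then x
    else if kind a = 1 then rep (psi i (fs a zero)) (tmToNat x)
    else if i = 0 ∧ kind a = 3 then psiIter (fs a) (tmToNat x + 1)
    else psi i (fs a x)

@[simp]
theorem kind_zero : kind zero = 0 := rfl

@[simp]
theorem kind_one : kind one = 1 := rfl

@[simp]
theorem kind_add (a b : Tm) : kind (add a b) = kind b := rfl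

@[simp]
theorem kind_psi_zero (a : Tm) : kind (psi 0 a) = 2 := rfl

theorem kind_psi_one (a : Tm) :
    kind (psi 1 a) = if kind a = 0 then 3 else if kind a = 1 then 2 else kind a := rfl

theorem kind_psi_of_kind_one {i : ℕ} {a : Tm} (h : kind a = 1) : kind (psi i a) = 2 := by
  cases i <;> simp [kind, h]

theorem kind_psi_of_kind_two {i : ℕ} {a : Tm} (h : kind a = 2) : kind (psi i a) = 2 := by
  cases i <;> simp [kind, h]

theorem kind_psi_one_of_kind_three {a : Tm} (h : kind a = 3) : kind (psi 1 a) = 3 := by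
  simp [kind_psi_one, h]

theorem eq_zero_of_kind_psi_eq_two {i : ℕ} {a : Tm} (hi : i ≤ 1) (hk : kind (psi i a) = 2)
    (ha : kind a = 0 ∨ kind a = 3) : i = 0 := by
  interval_cases i
  · rfl
  · rcases ha with h | h <;> simp [kind_psi_one, h] at hk

theorem kind_cons (a t : Tm) : kind (cons a t) = if t = zero then kind a else kind t := by
  unfold cons
  split <;> rfl

theorem two_le_kind_psi (i : ℕ) (a : Tm) : 2 ≤ kind (psi i a) := by
  cases i with
  | zero => exact le_rfl
  | succ i => rw [kind]; split_ifs <;> omega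

theorem kind_le_three (t : Tm) : kind t ≤ 3 := by
  induction t with
  | zero | one => simp
  | add _ _ _ ihb => exact ihb
  | psi i a ih =>
    cases i with
    | zero => simp
    | succ i => rw [kind]; split_ifs <;> omega

theorem kind_cases (t : Tm) : kind t = 0 ∨ kind t = 1 ∨ kind t = 2 ∨ kind t = 3 := by
  have := kind_le_three t
  omega

theorem kind_eq_zero_iff {t : Tm} (h : Low t) : kind t = 0 ↔ t = zero := by
  induction t with
  | zero => simp
  | one => simp
  | psi i a => simpa using (two_le_kind_psi i a).trans_lt' two_pos |>.ne'
  | add a b _ ih => simpa using (ih h.2.2.1).not.2 h.2.2.2.1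

theorem ne_zero_of_kind_pos {t : Tm} (h : 0 < kind t) : t ≠ zero := by
  rintro rfl
  exact h.ne rfl

@[elab_as_elim]
theorem Low.kindRec {motive : ∀ t, Low t → Prop} (zero : motive zero low_zero)
    (one : motive one low_one)
    (add : ∀ a b, ∀ h : Low (add a b), motive b h.2.2.1 → motive (add a b) h)
    (psi_zero : ∀ i, ∀ hi : i ≤ 1, motive (psi i Tm.zero) ⟨hi, low_zero⟩)
    (psi_succ : ∀ i, ∀ hi : i ≤ 1, ∀ a, ∀ h : Low a, kind a = 1 → motive a h →
      motive (psi i a) ⟨hi, h⟩)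
    (psi_lim : ∀ i, ∀ hi : i ≤ 1, ∀ a, ∀ h : Low a, kind a = 2 → motive a h →
      motive (psi i a) ⟨hi, h⟩)
    (psi_collapse : ∀ a, ∀ h : Low a, kind a = 3 → motive a h → motive (psi 0 a) ⟨zero_le_one, h⟩)
    (psi_one : ∀ a, ∀ h : Low a, kind a = 3 → motive a h → motive (psi 1 a) ⟨le_rfl, h⟩)
    {t : Tm} (h : Low t) : motive t h := by
  induction t with
  | zero => exact zero
  | one => exact one
  | add a b _ ihb => exact add a b h (ihb h.2.2.1)
  | psi i a ih =>
    obtain ⟨hi, ha⟩ := h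
    obtain hk | hk | hk | hk := kind_cases a
    · obtain rfl := (kind_eq_zero_iff ha).1 hk
      exact psi_zero i hi
    · exact psi_succ i hi a ha hk (ih ha)
    · exact psi_lim i hi a ha hk (ih ha)
    · interval_cases i
      · exact psi_collapse a ha hk (ih ha)
      · exact psi_one a ha hk (ih ha)

@[simp]
theorem psiIter_zero (g : Tm → Tm) : psiIter g 0 = zero := rfl

theorem psiIter_succ (g : Tm → Tm) (n : ℕ) : psiIter g (n + 1) = psi 0 (g (psiIter g n)) := rfl

theorem psiIter_lt_Omega (g : Tm → Tm) (n : ℕ) : psiIter g n < psi 1 zero := by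
  cases n <;> simp [psiIter_succ]

@[simp]
theorem fs_zero (x : Tm) : fs zero x = zero := rfl

@[simp]
theorem fs_one (x : Tm) : fs one x = zero := rfl

@[simp]
theorem fs_add (a b x : Tm) : fs (add a b) x = cons a (fs b x) := rfl

@[simp]
theorem fs_psi_zero (i : ℕ) (x : Tm) : fs (psi i zero) x = x := rfl

theorem fs_psi_of_kind_one {i : ℕ} {a x : Tm} (h : kind a = 1) :
    fs (psi i a) x = rep (psi i (fs a zero)) (tmToNat x) := by simp [fs, h]

theorem fs_psi_of_kind_two {i : ℕ} {a x : Tm} (h : kind a = 2) :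
    fs (psi i a) x = psi i (fs a x) := by simp [fs, h]

theorem fs_psi_zero_of_kind_three {a x : Tm} (h : kind a = 3) :
    fs (psi 0 a) x = psiIter (fs a) (tmToNat x + 1) := by simp [fs, h]

theorem fs_psi_one_of_kind_three {a x : Tm} (h : kind a = 3) :
    fs (psi 1 a) x = psi 1 (fs a x) := by simp [fs, h]

/-- `x` is a legitimate index of the fundamental sequence of `t`: a numeral if `tp t = ω`, a
countable term without `ψ₂` if `tp t = Ω`. -/
def Admissible (t x : Tm) : Prop :=
  (kind t = 2 → ∃ n, x = num n) ∧ (kind t = 3 → Low x ∧ x < psi 1 zero)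

theorem admissible_of_kind_one {t : Tm} (x : Tm) (h : kind t = 1) : Admissible t x :=
  ⟨by omega, by omega⟩

theorem admissible_of_kind_three {t x : Tm} (h : kind t = 3) (hx : Low x) (hlt : x < psi 1 zero) :
    Admissible t x :=
  ⟨by omega, fun _ => ⟨hx, hlt⟩⟩

theorem admissible_num (t : Tm) (n : ℕ) : Admissible t (num n) :=
  ⟨fun _ => ⟨n, rfl⟩, fun _ => ⟨low_num n, num_lt_psi n 1 zero⟩⟩

theorem Admissible.congr_kind {s t x : Tm} (h : Admissible t x) (hk : kind s = kind t) :
    Admissible s x := by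
  rwa [Admissible, hk]

theorem psi_zero_gt_of_admissible {i : ℕ} {x : Tm} (hi : i ≤ 1) (hx : Admissible (psi i zero) x) :
    Low x ∧ x < psi i zero := by
  interval_cases i
  · obtain ⟨n, rfl⟩ := hx.1 rfl
    exact ⟨low_num n, num_lt_psi n 0 zero⟩
  · exact hx.2 rfl

theorem rep_psi_lt_psi {i : ℕ} {a b : Tm} (h : a < b) (n : ℕ) : rep (psi i a) n < psi i b := by
  rw [lt_psi_iff_hd_lt, hd_rep (isPrincipal_psi i a)]
  split
  · simp
  · exact (psi_lt_psi ..).2 (Or.inr ⟨rfl, h⟩)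

theorem low_psiIter_of_fs {a : Tm} (hk : kind a = 3)
    (h : ∀ x, Admissible a x → Low (fs a x)) (n : ℕ) : Low (psiIter (fs a) n) := by
  induction n with
  | zero => exact low_zero
  | succ n ih => exact ⟨Nat.zero_le 1, h _ (admissible_of_kind_three hk ih (psiIter_lt_Omega _ _))⟩

theorem Low.fs_and_fs_lt {t : Tm} (h : Low t) :
    ∀ x, Admissible t x → Low (fs t x) ∧ (t ≠ zero → fs t x < t) := by
  induction h using Low.kindRec with
  | zero => exact fun x _ => ⟨low_zero, fun h => absurd rfl h⟩
  | one => exact fun x _ => ⟨low_zero, fun h => (zero_lt _).2 h⟩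
  | add a b h ih =>
    intro x hx
    obtain ⟨ha, hla, _, hb, hle⟩ := id h
    obtain ⟨hlow, hlt⟩ := ih x hx
    refine ⟨(low_cons ha).2 ⟨hla, hlow, (hd_le_hd (hlt hb).le).trans hle⟩, fun _ => ?_⟩
    rw [fs_add, h.add_eq_cons, cons_lt_cons ha ha]
    exact Or.inr ⟨rfl, hlt hb⟩
  | psi_zero i hi =>
    exact fun x hx => (psi_zero_gt_of_admissible hi hx).imp_right fun hlt _ => hlt
  | psi_succ i hi a _ hk ih =>
    intro x _
    obtain ⟨hlow, hlt⟩ := ih zero (admissible_of_kind_one _ hk)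
    rw [fs_psi_of_kind_one hk]
    exact ⟨low_rep (isPrincipal_psi _ _) ⟨hi, hlow⟩ _,
      fun _ => rep_psi_lt_psi (hlt (ne_zero_of_kind_pos (by omega))) _⟩
  | psi_lim i hi a _ hk ih =>
    intro x hx
    obtain ⟨hlow, hlt⟩ := ih x (hx.congr_kind (by rw [hk, kind_psi_of_kind_two hk]))
    rw [fs_psi_of_kind_two hk]
    exact ⟨⟨hi, hlow⟩, fun _ => by simpa using hlt (ne_zero_of_kind_pos (by omega))⟩
  | psi_collapse a _ hk ih =>
    intro x _
    have hiter := low_psiIter_of_fs hk (fun y hy => (ih y hy).1) (tmToNat x)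
    obtain ⟨hlow, hlt⟩ := ih _ (admissible_of_kind_three hk hiter (psiIter_lt_Omega _ _))
    rw [fs_psi_zero_of_kind_three hk, psiIter_succ]
    exact ⟨⟨Nat.zero_le 1, hlow⟩, fun _ => by simpa using hlt (ne_zero_of_kind_pos (by omega))⟩
  | psi_one a _ hk ih =>
    intro x hx
    obtain ⟨hlow, hlt⟩ := ih x (hx.congr_kind (by rw [hk, kind_psi_one_of_kind_three hk]))
    rw [fs_psi_one_of_kind_three hk]
    exact ⟨⟨le_rfl, hlow⟩, fun _ => by simpa using hlt (ne_zero_of_kind_pos (by omega))⟩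

theorem low_fs {t x : Tm} (h : Low t) (hx : Admissible t x) : Low (fs t x) :=
  (h.fs_and_fs_lt x hx).1

theorem fs_lt {t x : Tm} (h : Low t) (hx : Admissible t x) (h0 : t ≠ zero) : fs t x < t :=
  (h.fs_and_fs_lt x hx).2 h0

theorem hd_fs_le {t x : Tm} (h : Low t) (hx : Admissible t x) : hd (fs t x) ≤ hd t := by
  by_cases h0 : t = zero
  · simp [h0]
  · exact hd_le_hd (fs_lt h hx h0).le

theorem low_psiIter {a : Tm} (h : Low a) (hk : kind a = 3) (n : ℕ) :
    Low (psiIter (fs a) n) :=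
  low_psiIter_of_fs hk (fun _ hx => low_fs h hx) n

theorem admissible_psiIter {a : Tm} (h : Low a) (hk : kind a = 3) (n : ℕ) :
    Admissible a (psiIter (fs a) n) :=
  admissible_of_kind_three hk (low_psiIter h hk n) (psiIter_lt_Omega _ _)

theorem psiIter_strictMono_of_fs {a : Tm} (h : Low a) (hk : kind a = 3)
    (hmono : ∀ x y, Admissible a x → Admissible a y → x < y → fs a x < fs a y) :
    StrictMono (psiIter (fs a)) := by
  refine strictMono_nat_of_lt_succ fun n => ?_
  induction n with
  | zero => simp [psiIter_succ]
  | succ n ih =>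
    rw [psiIter_succ, psiIter_succ]
    simpa using hmono _ _ (admissible_psiIter h hk _) (admissible_psiIter h hk _) ih

theorem fs_lt_fs {t : Tm} (h : Low t) (hk : 2 ≤ kind t) :
    ∀ x y, Admissible t x → Admissible t y → x < y → fs t x < fs t y := by
  induction h using Low.kindRec with
  | zero | one => simp at hk
  | add a b h ih =>
    exact fun x y hx hy hxy => (cons_lt_cons h.1 h.1).2 (Or.inr ⟨rfl, ih hk x y hx hy hxy⟩)
  | psi_zero i => exact fun x y _ _ hxy => hxy
  | psi_succ i _ a _ hka =>
    intro x y hx hy hxy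
    obtain ⟨n, rfl⟩ := hx.1 (kind_psi_of_kind_one hka)
    obtain ⟨m, rfl⟩ := hy.1 (kind_psi_of_kind_one hka)
    rw [fs_psi_of_kind_one hka, fs_psi_of_kind_one hka, tmToNat_num, tmToNat_num]
    exact rep_strictMono (isPrincipal_psi _ _) ((rep_strictMono isPrincipal_one).lt_iff_lt.1 hxy)
  | psi_lim i _ a _ hka ih =>
    intro x y hx hy hxy
    have heq : kind a = kind (psi i a) := by rw [hka, kind_psi_of_kind_two hka]
    rw [fs_psi_of_kind_two hka, fs_psi_of_kind_two hka]
    simpa using ih hka.ge x y (hx.congr_kind heq) (hy.congr_kind heq) hxy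
  | psi_collapse a ha hka ih =>
    intro x y hx hy hxy
    obtain ⟨n, rfl⟩ := hx.1 rfl
    obtain ⟨m, rfl⟩ := hy.1 rfl
    rw [fs_psi_zero_of_kind_three hka, fs_psi_zero_of_kind_three hka, tmToNat_num, tmToNat_num]
    have hnm : n < m := (rep_strictMono isPrincipal_one).lt_iff_lt.1 hxy
    exact psiIter_strictMono_of_fs ha hka (ih (by omega)) (by omega)
  | psi_one a _ hka ih =>
    intro x y hx hy hxy
    have heq : kind a = kind (psi 1 a) := by rw [hka, kind_psi_one_of_kind_three hka]
    rw [fs_psi_one_of_kind_three hka, fs_psi_one_of_kind_three hka]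
    simpa using ih (by omega) x y (hx.congr_kind heq) (hy.congr_kind heq) hxy

theorem psiIter_strictMono {a : Tm} (h : Low a) (hk : kind a = 3) :
    StrictMono (psiIter (fs a)) :=
  psiIter_strictMono_of_fs h hk (fs_lt_fs h (by omega))

theorem le_fs_of_lt {t e : Tm} (h : Low t) (he : Low e) (hk : kind t = 1) (hlt : e < t) :
    e ≤ fs t zero := by
  induction t generalizing e with
  | zero => exact absurd hlt (not_lt_zero e)
  | one => exact (he.eq_zero_of_lt_one hlt).le
  | psi i a => exact absurd hk (Nat.lt_of_lt_of_le one_lt_two (two_le_kind_psi i a)).ne'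
  | add a b _ ih =>
    by_cases h0 : e = zero
    · rw [h0]; exact zero_le _
    obtain ⟨p, s, rfl, hp, -, hs, -⟩ := he.exists_cons h0
    rw [fs_add, cons_le_cons hp h.1]
    rw [h.add_eq_cons, cons_lt_cons hp h.1] at hlt
    exact hlt.imp_right fun ⟨heq, hsb⟩ => ⟨heq, ih h.2.2.1 hs hk hsb⟩

/-! ### Norms of fundamental sequences -/

theorem normN_fs_of_kind_one {t : Tm} (hk : kind t = 1) :
    normN t = normN (fs t zero) + 1 := by
  induction t with
  | zero => simp at hk
  | one => simp [normN]
  | psi i a => exact absurd hk (Nat.lt_of_lt_of_le one_lt_two (two_le_kind_psi i a)).ne'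
  | add a b _ ih => rw [fs_add, normN_cons, normN, ih hk, Nat.add_assoc]

theorem normN_fs_add_one {t : Tm} (x : Tm) (h : Low t) (hk : kind t = 3) :
    normN (fs t x) + 1 = normN t + normN x := by
  induction h using Low.kindRec with
  | zero | one | psi_collapse => simp at hk
  | add a b _ ih =>
    have := ih hk
    rw [fs_add, normN_cons, normN]
    omega
  | psi_zero i => simp only [fs_psi_zero, normN]; omega
  | psi_succ i _ a _ hka => simp [kind_psi_of_kind_one hka] at hk
  | psi_lim i _ a _ hka => simp [kind_psi_of_kind_two hka] at hk
  | psi_one a _ hka ih =>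
    have := ih hka
    rw [fs_psi_one_of_kind_three hka, normN, normN]
    omega

theorem normN_psiIter {a : Tm} (h : Low a) (hk : kind a = 3) (n : ℕ) :
    normN (psiIter (fs a) n) = n * normN a := by
  induction n with
  | zero => rw [psiIter_zero, normN, Nat.zero_mul]
  | succ n ih => rw [psiIter_succ, normN, Nat.add_comm, normN_fs_add_one _ h hk, ih]; ring

theorem normN_pos {t : Tm} (h0 : t ≠ zero) (h : Low t) : 0 < normN t := by
  induction t with
  | zero => exact absurd rfl h0
  | one => exact Nat.one_pos
  | psi i a => rw [normN]; omega
  | add a b _ ih =>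
    have := ih h.2.2.2.1 h.2.2.1
    rw [normN]; omega

theorem normN_le_normN_fs {t : Tm} {n : ℕ} (h : Low t) (hk : kind t = 2) (hn : 2 ≤ n) :
    normN t ≤ normN (fs t (num n)) := by
  induction h using Low.kindRec with
  | zero | one => simp at hk
  | add a b _ ih =>
    rw [fs_add, normN_cons, normN]
    exact Nat.add_le_add_left (ih hk) _
  | psi_zero i => rw [fs_psi_zero, normN_num, normN, normN]; omega
  | psi_succ i _ a _ hka =>
    rw [fs_psi_of_kind_one hka, tmToNat_num, normN_rep, normN, normN, normN_fs_of_kind_one hka]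
    nlinarith
  | psi_lim i _ a _ hka ih =>
    rw [fs_psi_of_kind_two hka, normN, normN]
    exact Nat.add_le_add_left (ih hka) _
  | psi_collapse a ha hka =>
    have := normN_pos (ne_zero_of_kind_pos (by omega : 0 < kind a)) ha
    rw [fs_psi_zero_of_kind_three hka, normN_psiIter ha hka, tmToNat_num, normN]
    nlinarith
  | psi_one a _ hka => simp [kind_psi_one_of_kind_three hka] at hk

/-! ### Agreement with `addT`, `mulNat`, `tp` and `fund` -/

theorem addT_eq_cons {a t : Tm} (ha : IsPrincipal a) (h : hd t ≤ a) : addT a t = cons a t := by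
  have hn : ¬TLt a (hd t) := fun hlt => h.not_gt (lt_of_tlt hlt)
  cases a <;> cases t <;> simp_all [addT, cons]

theorem add_addT_self {a t : Tm} (ha : IsPrincipal a) : addT (add a t) a = add a (addT t a) := by
  have hn : ¬TLt a a := fun hlt => (lt_irrefl a) (lt_of_tlt hlt)
  cases a <;> simp_all [addT]

theorem rep_addT_self {a : Tm} (ha : IsPrincipal a) (n : ℕ) :
    addT (rep a n) a = rep a (n + 1) := by
  induction n with
  | zero => simp [addT, rep_succ]
  | succ n ih =>
    have hne : rep a (n + 1) ≠ zero := (rep_eq_zero ha).not.2 n.succ_ne_zero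
    rw [rep_succ a (n + 1), cons_of_ne_zero _ hne]
    by_cases h0 : rep a n = zero
    · rw [rep_succ, h0, cons_zero, addT_eq_cons ha ha.hd_eq.le, cons_of_ne_zero _ ha.ne_zero]
    · conv_rhs => rw [← ih]
      rw [rep_succ a n, cons_of_ne_zero _ h0, add_addT_self ha]

theorem mulNat_eq_rep {a : Tm} (ha : IsPrincipal a) (n : ℕ) : mulNat a n = rep a n := by
  induction n with
  | zero => rfl
  | succ n ih => rw [mulNat, ih, rep_addT_self ha]

/-- The type coded by a `kind`. -/
def typeOfKind : ℕ → Tm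
  | 0 => zero
  | 1 => one
  | 2 => omegaT
  | _ => OmegaT

theorem tp_eq_typeOfKind {t : Tm} (h : Low t) : tp t = typeOfKind (kind t) := by
  induction h using Low.kindRec with
  | zero | one => rfl
  | add _ _ _ ih => exact ih
  | psi_zero i hi => interval_cases i <;> rfl
  | psi_succ i _ a _ hk ih =>
    simp [tp, ih, hk, kind_psi_of_kind_one hk, typeOfKind]
  | psi_lim i _ a _ hk ih =>
    simp [tp, ih, hk, kind_psi_of_kind_two hk, typeOfKind, omegaT, OmegaT, Omega2T]
  | psi_collapse a _ hk ih => simp [tp, ih, hk, typeOfKind, OmegaT]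
  | psi_one a _ hk ih =>
    simp [tp, ih, hk, kind_psi_one_of_kind_three hk, typeOfKind, OmegaT, Omega2T]

theorem natRec_psi_fund_eq_psiIter {a : Tm} (h : Low a) (hk : kind a = 3)
    (hfund : ∀ x, Admissible a x → fund a x = fs a x) (n : ℕ) :
    (Nat.rec (motive := fun _ => Tm) zero (fun _ ih => psi 0 (fund a ih)) n) =
      psiIter (fs a) n := by
  induction n with
  | zero => rfl
  | succ n ih => simp only [ih, psiIter_succ, hfund _ (admissible_psiIter h hk n)]

theorem fund_eq_fs {t : Tm} (h : Low t) : ∀ x, Admissible t x → fund t x = fs t x := by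
  induction h using Low.kindRec with
  | zero | one => intro x _; rw [fund]; rfl
  | add a b h ih =>
    intro x hx
    rw [fund, ih x hx, addT_eq_cons h.1 ((hd_fs_le h.2.2.1 hx).trans h.2.2.2.2), fs_add]
  | psi_zero i => intro x _; rw [fund]; simp [tp]
  | psi_succ i _ a ha hk ih =>
    intro x _
    rw [fund, tp_eq_typeOfKind ha, fs_psi_of_kind_one hk, ih zero (admissible_of_kind_one _ hk),
      mulNat_eq_rep (isPrincipal_psi _ _)]
    simp [hk, typeOfKind]
  | psi_lim i _ a ha hk ih =>
    intro x hx
    rw [fund, tp_eq_typeOfKind ha, fs_psi_of_kind_two hk,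
      ← ih x (hx.congr_kind (by rw [hk, kind_psi_of_kind_two hk]))]
    simp [hk, typeOfKind, omegaT, OmegaT, Omega2T]
  | psi_collapse a ha hk ih =>
    intro x _
    rw [fund, tp_eq_typeOfKind ha, fs_psi_zero_of_kind_three hk, psiIter_succ,
      natRec_psi_fund_eq_psiIter ha hk ih, ih _ (admissible_psiIter ha hk _)]
    simp [hk, typeOfKind, OmegaT]
  | psi_one a ha hk ih =>
    intro x hx
    rw [fund, tp_eq_typeOfKind ha, fs_psi_one_of_kind_three hk,
      ← ih x (hx.congr_kind (by rw [hk, kind_psi_one_of_kind_three hk]))]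
    simp [hk, typeOfKind, OmegaT, Omega2T]

/-! ### Homeomorphic embedding of terms -/

/-- Homeomorphic embedding of terms: the tree `a` is obtained from `b` by deleting summands and
replacing subterms by `0`. Both norms and Hardy functions are monotone along it. -/
inductive Embeds : Tm → Tm → Prop
  | zero (d : Tm) : Embeds zero d
  | one : Embeds one one
  | psi (i : ℕ) {c d : Tm} : Embeds c d → Embeds (psi i c) (psi i d)
  | add {a b c d : Tm} : Embeds a b → Embeds c d → Embeds (add a c) (add b d)
  | left {a b : Tm} (d : Tm) : Embeds a b → Embeds a (add b d)
  | right {c d : Tm} (b : Tm) : Embeds c d → Embeds c (add b d)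

theorem Embeds.refl (a : Tm) : Embeds a a := by
  induction a with
  | zero => exact .zero _
  | one => exact .one
  | psi i a ih => exact .psi i ih
  | add a b iha ihb => exact .add iha ihb

theorem Embeds.normN_le {a b : Tm} (h : Embeds a b) : normN a ≤ normN b := by
  induction h <;> simp_all only [normN] <;> omega

theorem Embeds.eq_zero {a : Tm} (h : Embeds a Tm.zero) : a = Tm.zero := by
  cases h
  rfl

theorem Embeds.eq_of_normN_eq {a b : Tm} (h : Embeds a b) (hb : Low b)
    (hn : normN a = normN b) : a = b := by
  induction h with
  | zero d =>
    by_contra h0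
    exact (normN_pos (Ne.symm h0) hb).ne hn
  | one => rfl
  | psi i _ ih => rw [ih hb.2 (by simpa [normN] using hn)]
  | add h₁ h₂ ih₁ ih₂ =>
    have := h₁.normN_le
    have := h₂.normN_le
    rw [normN, normN] at hn
    rw [ih₁ hb.2.1 (by omega), ih₂ hb.2.2.1 (by omega)]
  | left d h =>
    have := h.normN_le
    have := normN_pos hb.2.2.2.1 hb.2.2.1
    rw [normN] at hn
    omega
  | right b h =>
    have := h.normN_le
    have := normN_pos hb.1.ne_zero hb.2.1
    rw [normN] at hn
    omega

theorem Embeds.cons_of_left {a b : Tm} (d : Tm) (h : Embeds a b) : Embeds a (cons b d) := by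
  unfold cons
  split
  · exact h
  · exact .left _ h

theorem Embeds.cons_of_right {c d : Tm} (b : Tm) (h : Embeds c d) : Embeds c (cons b d) := by
  unfold cons
  split
  · subst_vars
    rw [h.eq_zero]
    exact .zero _
  · exact .right _ h

theorem Embeds.cons_cons {a b c d : Tm} (h₁ : Embeds a b) (h₂ : Embeds c d) :
    Embeds (cons a c) (cons b d) := by
  by_cases hc : c = Tm.zero
  · rw [hc, cons_zero]
    exact h₁.cons_of_left _
  · have hd : d ≠ Tm.zero := by
      rintro rfl
      exact hc h₂.eq_zero
    rw [cons_of_ne_zero _ hc, cons_of_ne_zero _ hd]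
    exact .add h₁ h₂

theorem Embeds.rep_rep {a b : Tm} (h : Embeds a b) {n m : ℕ} (hn : n ≤ m) :
    Embeds (rep a n) (rep b m) := by
  induction n generalizing m with
  | zero => exact .zero _
  | succ n ih =>
    obtain ⟨m, rfl⟩ := Nat.exists_eq_add_of_le' (n.succ_pos.trans_le hn)
    exact h.cons_cons (ih (by omega))

theorem embeds_num_num {n m : ℕ} : Embeds (num n) (num m) ↔ n ≤ m :=
  ⟨fun h => by simpa using h.normN_le, Embeds.rep_rep .one⟩

theorem fs_eq_of_kind_le_one {t : Tm} (x y : Tm) (h : kind t ≤ 1) : fs t x = fs t y := by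
  induction t with
  | zero | one => rfl
  | psi i a => exact absurd (h.trans_lt one_lt_two) (two_le_kind_psi i a).not_gt
  | add a b _ ih => rw [fs_add, fs_add, ih h]

theorem kind_psi_congr {a b : Tm} (i : ℕ) (h : kind a = kind b) :
    kind (psi i a) = kind (psi i b) := by
  cases i <;> simp [kind, h]

/-- `a` embeds into every member of the fundamental sequence of `b` from index `1` on. -/
def EmbedsInFs (a b : Tm) : Prop := ∀ w, Admissible b w → w ≠ zero → Embeds a (fs b w)

/-- The fundamental sequences of `a` and `b` have the same type and the first embeds pointwise into
the second, with a strict norm gap whenever there is one between `a` and `b`. -/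
structure ParallelFs (a b : Tm) : Prop where
  kind_eq : kind a = kind b
  embeds : ∀ w w', Admissible b w → Admissible b w' → Embeds w w' → Embeds (fs a w) (fs b w')
  normN_lt : normN a < normN b → ∀ w, Admissible b w → w ≠ zero → normN (fs a w) < normN (fs b w)

theorem embedsInFs_psi {i : ℕ} {c d : Tm} (hi : i ≤ 1) (hd : Low d) (hd0 : d ≠ zero)
    (h : EmbedsInFs c d) : EmbedsInFs (psi i c) (psi i d) := by
  intro w hw hw0
  obtain hk | hk | hk | hk := kind_cases d
  · exact absurd ((kind_eq_zero_iff hd).1 hk) hd0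
  · obtain ⟨n, rfl⟩ := hw.1 (kind_psi_of_kind_one hk)
    have hn : n ≠ 0 := fun h0 => hw0 (by rw [h0]; rfl)
    obtain ⟨n, rfl⟩ := Nat.exists_eq_succ_of_ne_zero hn
    rw [fs_psi_of_kind_one hk, tmToNat_num, rep_succ, fs_eq_of_kind_le_one zero one hk.le]
    exact .cons_of_left _
      (.psi _ (h one (admissible_of_kind_one _ hk) isPrincipal_one.ne_zero))
  · rw [fs_psi_of_kind_two hk]
    exact .psi _ (h w (hw.congr_kind (by rw [hk, kind_psi_of_kind_two hk])) hw0)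
  · interval_cases i
    · obtain ⟨n, rfl⟩ := hw.1 rfl
      have hn : n ≠ 0 := fun h0 => hw0 (by rw [h0]; rfl)
      obtain ⟨n, rfl⟩ := Nat.exists_eq_succ_of_ne_zero hn
      rw [fs_psi_zero_of_kind_three hk, tmToNat_num, psiIter_succ]
      exact .psi _ (h _ (admissible_psiIter hd hk _) (isPrincipal_psi _ _).ne_zero)
    · rw [fs_psi_one_of_kind_three hk]
      exact .psi _ (h w (hw.congr_kind (by rw [hk, kind_psi_one_of_kind_three hk])) hw0)

theorem parallelFs_psi_of_kind_one {i : ℕ} {c d : Tm} (hk : kind d = 1) (h : ParallelFs c d) :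
    ParallelFs (psi i c) (psi i d) := by
  have hkc : kind c = 1 := h.kind_eq.trans hk
  have hadm (x : Tm) : Admissible d x := admissible_of_kind_one x hk
  refine ⟨kind_psi_congr i h.kind_eq, fun w w' hw hw' hww => ?_, fun hn w hw hw0 => ?_⟩
  · obtain ⟨n, rfl⟩ := hw.1 (kind_psi_of_kind_one hk)
    obtain ⟨m, rfl⟩ := hw'.1 (kind_psi_of_kind_one hk)
    rw [fs_psi_of_kind_one hk, fs_psi_of_kind_one hkc, tmToNat_num, tmToNat_num]
    exact (Embeds.psi _ (h.embeds _ _ (hadm _) (hadm _) (.zero _))).rep_rep (embeds_num_num.1 hww)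
  · obtain ⟨n, rfl⟩ := hw.1 (kind_psi_of_kind_one hk)
    have hn0 : n ≠ 0 := fun h0 => hw0 (by rw [h0]; rfl)
    have hd1 := normN_fs_of_kind_one hk
    have hc1 := normN_fs_of_kind_one hkc
    simp only [normN] at hn
    rw [fs_psi_of_kind_one hk, fs_psi_of_kind_one hkc, tmToNat_num, normN_rep, normN_rep, normN,
      normN]
    exact Nat.mul_lt_mul_of_pos_left (by omega) (by omega)

theorem embeds_psiIter {c d : Tm} (hc : Low c) (hd : Low d) (hk : kind d = 3)
    (h : ParallelFs c d) {n m : ℕ} (hnm : n ≤ m) :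
    Embeds (psiIter (fs c) n) (psiIter (fs d) m) := by
  induction n generalizing m with
  | zero => exact .zero _
  | succ n ih =>
    obtain ⟨m, rfl⟩ := Nat.exists_eq_add_of_le' (n.succ_pos.trans_le hnm)
    exact .psi _ (h.embeds _ _ (admissible_of_kind_three hk
      (low_psiIter hc (h.kind_eq.trans hk) _) (psiIter_lt_Omega _ _)) (admissible_psiIter hd hk _)
      (ih (by omega)))

theorem parallelFs_psi_of_fs_psi {i : ℕ} {c d : Tm} (hk : kind (psi i d) = kind d)
    (hfc : ∀ x, fs (psi i c) x = psi i (fs c x)) (hfd : ∀ x, fs (psi i d) x = psi i (fs d x))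
    (h : ParallelFs c d) : ParallelFs (psi i c) (psi i d) := by
  refine ⟨kind_psi_congr i h.kind_eq, fun w w' hw hw' hww => ?_, fun hn w hw hw0 => ?_⟩
  · rw [hfc, hfd]
    exact .psi _ (h.embeds _ _ (hw.congr_kind hk.symm) (hw'.congr_kind hk.symm) hww)
  · simp only [normN] at hn
    have := h.normN_lt (by omega) w (hw.congr_kind hk.symm) hw0
    rw [hfc, hfd, normN, normN]
    omega

theorem parallelFs_psi {i : ℕ} {c d : Tm} (hi : i ≤ 1) (hc : Low c) (hd : Low d) (hd0 : d ≠ zero)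
    (h : ParallelFs c d) : ParallelFs (psi i c) (psi i d) := by
  obtain hk | hk | hk | hk := kind_cases d
  · exact absurd ((kind_eq_zero_iff hd).1 hk) hd0
  · exact parallelFs_psi_of_kind_one hk h
  · exact parallelFs_psi_of_fs_psi (by rw [hk, kind_psi_of_kind_two hk])
      (fun _ => fs_psi_of_kind_two (h.kind_eq.trans hk)) (fun _ => fs_psi_of_kind_two hk) h
  · have hkc : kind c = 3 := h.kind_eq.trans hk
    interval_cases i
    · refine ⟨rfl, fun w w' hw hw' hww => ?_, fun hn w _ _ => ?_⟩
      · obtain ⟨n, rfl⟩ := hw.1 rfl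
        obtain ⟨m, rfl⟩ := hw'.1 rfl
        rw [fs_psi_zero_of_kind_three hk, fs_psi_zero_of_kind_three hkc, tmToNat_num, tmToNat_num]
        exact embeds_psiIter hc hd hk h (Nat.succ_le_succ (embeds_num_num.1 hww))
      · rw [fs_psi_zero_of_kind_three hk, fs_psi_zero_of_kind_three hkc, normN_psiIter hc hkc,
          normN_psiIter hd hk]
        simp only [normN] at hn
        exact Nat.mul_lt_mul_of_pos_left (by omega) (by omega)
    · exact parallelFs_psi_of_fs_psi (by rw [hk, kind_psi_one_of_kind_three hk])
        (fun _ => fs_psi_one_of_kind_three hkc) (fun _ => fs_psi_one_of_kind_three hk) h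

theorem parallelFs_add {a b c d : Tm} (hab : Embeds a b) (hcd : Embeds c d) (hd : Low d)
    (h : ParallelFs c d) : ParallelFs (add a c) (add b d) := by
  refine ⟨h.kind_eq, fun w w' hw hw' hww => hab.cons_cons (h.embeds w w' hw hw' hww),
    fun hn w hw hw0 => ?_⟩
  have := hab.normN_le
  have := hcd.normN_le
  rw [fs_add, fs_add, normN_cons, normN_cons]
  simp only [normN] at hn
  by_cases hcd' : normN c = normN d
  · rw [hcd.eq_of_normN_eq hd hcd']
    omega
  · have := h.normN_lt (by omega) w hw hw0
    omega

theorem parallelFs_add_right {b c d : Tm} (hb : 0 < normN b) (h : ParallelFs c d) :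
    ParallelFs c (add b d) := by
  refine ⟨h.kind_eq, fun w w' hw hw' hww => (h.embeds w w' hw hw' hww).cons_of_right _,
    fun _ w hw _ => ?_⟩
  have := (h.embeds w w hw hw (Embeds.refl _)).normN_le
  rw [fs_add, normN_cons]
  omega

theorem Embeds.embedsInFs_or_parallelFs {a b : Tm} (h : Embeds a b) (ha : Low a) (hb : Low b)
    (h0 : b ≠ Tm.zero) : EmbedsInFs a b ∨ ParallelFs a b := by
  induction h with
  | zero d => exact Or.inl fun _ _ _ => .zero _
  | one => exact Or.inr ⟨rfl, fun _ _ _ _ _ => .zero _, fun h => absurd h (lt_irrefl _)⟩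
  | @psi i c d h ih =>
    by_cases hd0 : d = Tm.zero
    · subst hd0
      obtain rfl := h.eq_zero
      exact Or.inr ⟨rfl, fun _ _ _ _ hw => hw, fun h => absurd h (lt_irrefl _)⟩
    · exact (ih ha.2 hb.2 hd0).imp (embedsInFs_psi hb.1 hb.2 hd0)
        (parallelFs_psi hb.1 ha.2 hb.2 hd0)
  | @add a b c d hab hcd _ ih =>
    refine (ih ha.2.2.1 hb.2.2.1 hb.2.2.2.1).imp (fun hI w hw hw0 => ?_)
      (parallelFs_add hab hcd hb.2.2.1)
    rw [fs_add, ← cons_of_ne_zero _ ha.2.2.2.1]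
    exact hab.cons_cons (hI w hw hw0)
  | left d h => exact Or.inl fun _ _ _ => h.cons_of_left _
  | right b _ ih =>
    exact (ih ha hb.2.2.1 hb.2.2.2.1).imp (fun hI w hw hw0 => (hI w hw hw0).cons_of_right _)
      (parallelFs_add_right (normN_pos hb.1.ne_zero hb.2.1))

/-! ### Ordinal terms -/

@[simp]
theorem G0_zero : G0 zero = ∅ := by simp [G0]

@[simp]
theorem G0_one : G0 one = ∅ := by simp [G0]

@[simp]
theorem G0_psi_zero (b : Tm) : G0 (psi 0 b) = insert b (G0 b) := by simp [G0]

@[simp]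
theorem G0_psi_one (b : Tm) : G0 (psi 1 b) = G0 b := by simp [G0]

@[simp]
theorem G0_add (a b : Tm) : G0 (add a b) = G0 a ∪ G0 b := by simp [G0]

@[simp]
theorem G0_cons (a b : Tm) : G0 (cons a b) = G0 a ∪ G0 b := by
  unfold cons
  split <;> simp_all

theorem G0_rep_subset (a : Tm) (n : ℕ) : G0 (rep a n) ⊆ G0 a := by
  induction n with
  | zero => simp
  | succ n ih => rw [rep_succ, G0_cons]; exact Finset.union_subset le_rfl ih

theorem low_of_mem_G0 {a γ : Tm} (h : Low a) (hγ : γ ∈ G0 a) : Low γ := by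
  induction a with
  | zero | one => simp at hγ
  | psi i a ih =>
    obtain ⟨hi, ha⟩ := h
    interval_cases i
    · rcases Finset.mem_insert.1 (by simpa using hγ) with rfl | hγ
      exacts [ha, ih ha hγ]
    · exact ih ha (by simpa using hγ)
  | add a b iha ihb =>
    exact (Finset.mem_union.1 (by simpa using hγ)).elim (iha h.2.1) (ihb h.2.2.1)

theorem G0_subset_of_mem_G0 {a γ : Tm} (h : Low a) (hγ : γ ∈ G0 a) : G0 γ ⊆ G0 a := by
  induction a with
  | zero | one => simp at hγ
  | psi i a ih =>
    obtain ⟨hi, ha⟩ := h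
    interval_cases i
    · rw [G0_psi_zero] at hγ ⊢
      refine Finset.Subset.trans ?_ (Finset.subset_insert _ _)
      rcases Finset.mem_insert.1 hγ with rfl | hγ
      exacts [le_rfl, ih ha hγ]
    · rw [G0_psi_one] at hγ ⊢
      exact ih ha hγ
  | add a b iha ihb =>
    rw [G0_add] at hγ ⊢
    exact (Finset.mem_union.1 hγ).elim
      (fun hγ => (iha h.2.1 hγ).trans Finset.subset_union_left)
      (fun hγ => (ihb h.2.2.1 hγ).trans Finset.subset_union_right)

/-- The terms without `ψ₂` satisfying the condition `G₀β < β` at every subterm `ψ₀β`; on these the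
condition `G₁β < β` turns out to be automatic. -/
def IsOT (a : Tm) : Prop := Low a ∧ ∀ γ ∈ G0 a, ∀ δ ∈ G0 γ, δ < γ

theorem IsOT.low {a : Tm} (h : IsOT a) : Low a := h.1

theorem isOT_zero : IsOT zero := ⟨low_zero, by simp⟩

theorem isOT_one : IsOT one := ⟨low_one, by simp⟩

theorem G0_num (n : ℕ) : G0 (num n) = ∅ :=
  Finset.subset_empty.1 (by simpa using G0_rep_subset one n)

theorem isOT_num (n : ℕ) : IsOT (num n) := ⟨low_num n, by simp [G0_num]⟩

theorem isOT_psi_zero {a : Tm} : IsOT (psi 0 a) ↔ IsOT a ∧ ∀ γ ∈ G0 a, γ < a := by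
  simp only [IsOT, low_psi, G0_psi_zero, Finset.mem_insert, forall_eq_or_imp]
  tauto

theorem isOT_psi_one {a : Tm} : IsOT (psi 1 a) ↔ IsOT a := by simp [IsOT]

theorem IsOT.of_psi {i : ℕ} {a : Tm} (h : IsOT (psi i a)) : IsOT a := by
  have hi : i ≤ 1 := h.low.1
  interval_cases i
  · exact (isOT_psi_zero.1 h).1
  · exact isOT_psi_one.1 h

theorem isOT_cons {a t : Tm} (ha : IsPrincipal a) :
    IsOT (cons a t) ↔ IsOT a ∧ IsOT t ∧ hd t ≤ a := by
  simp only [IsOT, low_cons ha, G0_cons, Finset.mem_union, or_imp, forall_and]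
  tauto

theorem isOT_add {a b : Tm} :
    IsOT (add a b) ↔ IsPrincipal a ∧ IsOT a ∧ IsOT b ∧ b ≠ zero ∧ hd b ≤ a := by
  simp only [IsOT, low_add, G0_add, Finset.mem_union, or_imp, forall_and]
  tauto

theorem IsOT.of_mem_G0 {a γ : Tm} (h : IsOT a) (hγ : γ ∈ G0 a) : IsOT γ :=
  ⟨low_of_mem_G0 h.1 hγ, fun δ hδ => h.2 δ (G0_subset_of_mem_G0 h.1 hγ hδ)⟩

/-! ### The Bachmann property -/

theorem exists_cons_psi_of_le_of_lt {i : ℕ} {c a γ : Tm} (hγ : Low γ) (h₁ : psi i c ≤ γ)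
    (h₂ : γ < psi i a) : ∃ d s, γ = cons (psi i d) s ∧ c ≤ d ∧ d < a := by
  have h0 : γ ≠ zero := by
    rintro rfl
    exact h₁.not_gt ((zero_lt _).2 (isPrincipal_psi i c).ne_zero)
  obtain ⟨p, s, rfl, hp, -⟩ := hγ.exists_cons h0
  have hp₂ : p < psi i a := by rwa [lt_psi_iff_hd_lt, hd_cons _ _ hp] at h₂
  have hp₁ : psi i c ≤ p := by simpa [hd_cons _ _ hp] using hd_le_hd h₁
  cases p with
  | zero | add => simp at hp
  | one => simp at hp₁
  | psi j d =>
    rw [psi_le_psi] at hp₁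
    rw [psi_lt_psi] at hp₂
    obtain rfl : j = i := by omega
    exact ⟨d, s, rfl, by simpa using hp₁, by simpa using hp₂⟩

theorem exists_cons_of_le_of_lt_add {a b t γ : Tm} (hlow : Low (add a b)) (hγ : Low γ)
    (h₁ : cons a t ≤ γ) (h₂ : γ < add a b) : ∃ s, γ = cons a s ∧ t ≤ s ∧ s < b ∧ Low s := by
  have ha : IsPrincipal a := hlow.1
  have h0 : γ ≠ zero := by
    rintro rfl
    exact cons_ne_zero ha ((le_zero _).1 h₁)
  obtain ⟨p, s, rfl, hp, -, hs, -⟩ := hγ.exists_cons h0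
  rw [hlow.add_eq_cons, cons_lt_cons hp ha] at h₂
  rw [cons_le_cons ha hp] at h₁
  rcases h₁ with h₁ | ⟨rfl, h₁⟩ <;> rcases h₂ with h₂ | ⟨h₃, h₂⟩
  · exact absurd (h₁.trans h₂) (lt_irrefl _)
  · exact absurd h₁ h₃.not_gt
  · exact absurd h₂ (lt_irrefl _)
  · exact ⟨s, rfl, h₁, h₂, hs⟩

theorem exists_countable_embeds_of_fs_le {μ : Tm} (hμ : Low μ) (hk : kind μ = 3) :
    ∀ γ z, Low γ → fs μ z ≤ γ → γ < μ →
      ∃ β, Low β ∧ β < psi 1 zero ∧ z ≤ β ∧ G0 β ⊆ G0 γ ∧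
        ∀ z₀, Embeds z₀ β → Embeds (fs μ z₀) γ := by
  induction hμ using Low.kindRec with
  | zero | one | psi_collapse => simp at hk
  | psi_zero i hi =>
    interval_cases i
    · simp at hk
    · exact fun γ z hγ h₁ h₂ => ⟨γ, hγ, h₂, h₁, le_rfl, fun _ h => h⟩
  | psi_succ i _ a _ hka => simp [kind_psi_of_kind_one hka] at hk
  | psi_lim i _ a _ hka => simp [kind_psi_of_kind_two hka] at hk
  | psi_one a _ hka ih =>
    intro γ z hγ h₁ h₂
    rw [fs_psi_one_of_kind_three hka] at h₁
    obtain ⟨d, s, rfl, hd₁, hd₂⟩ := exists_cons_psi_of_le_of_lt hγ h₁ h₂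
    obtain ⟨β, hβ, hβΩ, hzβ, hG, hemb⟩ :=
      ih hka d z ((low_cons (isPrincipal_psi _ _)).1 hγ).1.2 hd₁ hd₂
    refine ⟨β, hβ, hβΩ, hzβ, ?_, fun z₀ hz₀ => ?_⟩
    · rw [G0_cons, G0_psi_one]
      exact hG.trans Finset.subset_union_left
    · rw [fs_psi_one_of_kind_three hka]
      exact (Embeds.psi _ (hemb z₀ hz₀)).cons_of_left _
  | add a b h ih =>
    intro γ z hγ h₁ h₂
    obtain ⟨s, rfl, hs₁, hs₂, hs⟩ := exists_cons_of_le_of_lt_add h hγ h₁ h₂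
    obtain ⟨β, hβ, hβΩ, hzβ, hG, hemb⟩ := ih hk s z hs hs₁ hs₂
    refine ⟨β, hβ, hβΩ, hzβ, ?_, fun z₀ hz₀ => (Embeds.refl _).cons_cons (hemb z₀ hz₀)⟩
    rw [G0_cons]
    exact hG.trans Finset.subset_union_right

theorem embeds_of_rep_le {p : Tm} (hp : IsPrincipal p) {n : ℕ} {s : Tm} (hs : Low s)
    (h₁ : hd s ≤ p) (h₂ : rep p n ≤ s) : Embeds (rep p n) s := by
  induction n generalizing s with
  | zero => exact .zero _
  | succ n ih =>
    have h0 : s ≠ zero := by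
      rintro rfl
      exact cons_ne_zero hp ((le_zero _).1 h₂)
    obtain ⟨q, t, rfl, hq, -, ht, htq⟩ := hs.exists_cons h0
    rw [hd_cons _ _ hq] at h₁
    rw [rep_succ, cons_le_cons hp hq] at h₂
    rcases h₂ with h₂ | ⟨rfl, h₂⟩
    · exact absurd h₂ h₁.not_gt
    · exact (Embeds.refl _).cons_cons (ih ht htq h₂)

/-- The collapsing case: the countable term `β` of `exists_countable_embeds_of_fs_le` dominates
`ψ₀(a[zₙ])`, so its head `ψ₀ d` has `d ∈ G₀ c`, which is smaller than `c`, and the argument repeats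
one level down. -/
theorem embeds_fs_psiIter_of_le {a : Tm} (ha : Low a) (hk : kind a = 3) (n : ℕ) {c : Tm}
    (hc : IsOT c) (hg : ∀ γ ∈ G0 c, γ < c) (h₁ : fs a (psiIter (fs a) n) ≤ c) (h₂ : c < a) :
    Embeds (fs a (psiIter (fs a) n)) c := by
  induction n generalizing c with
  | zero =>
    obtain ⟨β, -, -, -, -, hemb⟩ := exists_countable_embeds_of_fs_le ha hk c _ hc.1 h₁ h₂
    exact hemb _ (.zero _)
  | succ n ih =>
    obtain ⟨β, hβ, hβΩ, hle, hG, hemb⟩ := exists_countable_embeds_of_fs_le ha hk c _ hc.1 h₁ h₂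
    apply hemb
    rw [psiIter_succ] at hle ⊢
    have hb0 : β ≠ zero := by
      rintro rfl
      exact (isPrincipal_psi 0 _).ne_zero ((le_zero _).1 hle)
    obtain ⟨p, s, rfl, hp, -⟩ := hβ.exists_cons hb0
    rw [lt_psi_iff_hd_lt, hd_cons _ _ hp] at hβΩ
    have hle' : psi 0 (fs a (psiIter (fs a) n)) ≤ p := by
      simpa [hd_cons _ _ hp] using hd_le_hd hle
    cases p with
    | zero | add => simp at hp
    | one => simp at hle'
    | psi j d =>
      obtain rfl : j = 0 := by simpa using hβΩ
      have hd : d ∈ G0 c := hG (by simp)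
      exact (Embeds.psi _ (ih (hc.of_mem_G0 hd) (hc.2 d hd) (by simpa using hle')
        ((hg d hd).trans h₂))).cons_of_left _

theorem embeds_fs_psi_of_kind_one {i : ℕ} {a α : Tm} (ha : Low a) (hk : kind a = 1) (hα : Low α)
    (n : ℕ) (h₁ : rep (psi i (fs a zero)) n ≤ α) (h₂ : α < psi i a) :
    Embeds (rep (psi i (fs a zero)) n) α := by
  have hp := isPrincipal_psi i (fs a zero)
  cases n with
  | zero => exact .zero _
  | succ n =>
    have hle : psi i (fs a zero) ≤ α :=
      le_trans ((rep_strictMono hp).monotone (Nat.succ_le_succ n.zero_le)) h₁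
    obtain ⟨d, s, rfl, hd₁, hd₂⟩ := exists_cons_psi_of_le_of_lt hα hle h₂
    have hd : Low d := ((low_cons (isPrincipal_psi _ _)).1 hα).1.2
    obtain rfl : d = fs a zero := le_antisymm (le_fs_of_lt ha hd hk hd₂) hd₁
    exact embeds_of_rep_le hp hα (hd_cons _ _ hp).le h₁

theorem embeds_fs_num_of_le {δ : Tm} (hδ : Low δ) (hk : kind δ = 2) :
    ∀ α n, IsOT α → fs δ (num n) ≤ α → α < δ → Embeds (fs δ (num n)) α := by
  induction hδ using Low.kindRec with
  | zero | one => simp at hk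
  | add a b h ih =>
    intro α n hα h₁ h₂
    obtain ⟨s, rfl, hs₁, hs₂, _⟩ := exists_cons_of_le_of_lt_add h hα.1 h₁ h₂
    exact (Embeds.refl _).cons_cons (ih hk s n ((isOT_cons h.1).1 hα).2.1 hs₁ hs₂)
  | psi_zero i hi =>
    interval_cases i
    · intro α n hα h₁ h₂
      obtain ⟨m, rfl⟩ : ∃ m, α = num m := by
        refine hα.1.exists_eq_num ?_
        rw [lt_psi_iff_hd_lt] at h₂
        by_cases hz : α = zero
        · simp [hz]
        · have := hα.1.isPrincipal_hd hz
          revert this h₂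
          cases hd α <;> simp
      exact embeds_num_num.2 ((rep_strictMono isPrincipal_one).le_iff_le.1 h₁)
    · simp [kind_psi_one] at hk
  | psi_succ i _ a ha hka =>
    intro α n hα h₁ h₂
    rw [fs_psi_of_kind_one hka, tmToNat_num] at h₁ ⊢
    exact embeds_fs_psi_of_kind_one ha hka hα.1 n h₁ h₂
  | psi_lim i _ a _ hka ih =>
    intro α n hα h₁ h₂
    rw [fs_psi_of_kind_two hka] at h₁ ⊢
    obtain ⟨d, s, rfl, hd₁, hd₂⟩ := exists_cons_psi_of_le_of_lt hα.1 h₁ h₂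
    have hd : IsOT d := ((isOT_cons (isPrincipal_psi _ _)).1 hα).1.of_psi
    exact (Embeds.psi _ (ih hka d n hd hd₁ hd₂)).cons_of_left _
  | psi_collapse a ha hka =>
    intro α n hα h₁ h₂
    rw [fs_psi_zero_of_kind_three hka, psiIter_succ] at h₁ ⊢
    obtain ⟨d, s, rfl, hd₁, hd₂⟩ := exists_cons_psi_of_le_of_lt hα.1 h₁ h₂
    obtain ⟨hd, hG⟩ := isOT_psi_zero.1 ((isOT_cons (isPrincipal_psi _ _)).1 hα).1
    exact (Embeds.psi _ (embeds_fs_psiIter_of_le ha hka _ hd hG hd₁ hd₂)).cons_of_left _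
  | psi_one a _ hka => simp [kind_psi_one_of_kind_three hka] at hk

/-! ### Ordinal terms are closed under fundamental sequences -/

theorem mem_G0_psi {i : ℕ} {a ζ : Tm} (hi : i ≤ 1) :
    ζ ∈ G0 (psi i a) ↔ (i = 0 ∧ ζ = a) ∨ ζ ∈ G0 a := by
  interval_cases i <;> simp

theorem isOT_psi {i : ℕ} {a : Tm} :
    IsOT (psi i a) ↔ i ≤ 1 ∧ IsOT a ∧ (i = 0 → ∀ γ ∈ G0 a, γ < a) := by
  constructor
  · intro h
    have hi := h.low.1
    refine ⟨hi, h.of_psi, ?_⟩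
    rintro rfl
    exact (isOT_psi_zero.1 h).2
  · rintro ⟨hi, ha, hG⟩
    interval_cases i
    · exact isOT_psi_zero.2 ⟨ha, hG rfl⟩
    · exact isOT_psi_one.2 ha

theorem exists_ge_mem_G0_psi {i : ℕ} {a e : Tm} {P : Tm → Prop} (hi : i ≤ 1) (he : e ≤ a)
    (h : ∀ ζ ∈ G0 e, (∃ ξ ∈ G0 a, ζ ≤ ξ) ∨ P ζ) :
    ∀ ζ ∈ G0 (psi i e), (∃ ξ ∈ G0 (psi i a), ζ ≤ ξ) ∨ P ζ := by
  intro ζ hζ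
  rcases (mem_G0_psi hi).1 hζ with ⟨rfl, rfl⟩ | hζ
  · exact Or.inl ⟨a, by simp, he⟩
  · exact (h ζ hζ).imp_left fun ⟨ξ, hξ, hle⟩ => ⟨ξ, (mem_G0_psi hi).2 (Or.inr hξ), hle⟩

theorem exists_ge_mem_G0_psi_of_mem_G0_psiIter {a : Tm} (ha : Low a) (hk : kind a = 3)
    (h : ∀ x, Admissible a x → ∀ ζ ∈ G0 (fs a x), (∃ ξ ∈ G0 a, ζ ≤ ξ) ∨ ζ ∈ G0 x) (n : ℕ) :
    ∀ ζ ∈ G0 (psiIter (fs a) n), ∃ ξ ∈ G0 (psi 0 a), ζ ≤ ξ := by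
  induction n with
  | zero => simp
  | succ n ih =>
    intro ζ hζ
    have hadm := admissible_psiIter ha hk n
    have hle := (fs_lt ha hadm (ne_zero_of_kind_pos (by omega))).le
    exact (exists_ge_mem_G0_psi zero_le_one hle (h _ hadm) ζ hζ).elim id (ih ζ)

theorem exists_ge_or_mem_of_mem_G0_fs {δ : Tm} (hδ : Low δ) :
    ∀ x, Admissible δ x → ∀ ζ ∈ G0 (fs δ x),
      (∃ ξ ∈ G0 δ, ζ ≤ ξ) ∨ (kind δ = 3 ∧ ζ ∈ G0 x) := by
  induction hδ using Low.kindRec with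
  | zero | one => simp
  | add a b _ ih =>
    intro x hx ζ hζ
    rw [fs_add, G0_cons, Finset.mem_union] at hζ
    simp only [G0_add, Finset.mem_union, kind_add]
    rcases hζ with hζ | hζ
    · exact Or.inl ⟨ζ, Or.inl hζ, le_rfl⟩
    · exact (ih x hx ζ hζ).imp_left fun ⟨ξ, hξ, hle⟩ => ⟨ξ, Or.inr hξ, hle⟩
  | psi_zero i hi =>
    intro x hx ζ hζ
    interval_cases i
    · obtain ⟨n, rfl⟩ := hx.1 rfl
      simp [G0_num] at hζ
    · exact Or.inr ⟨rfl, hζ⟩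
  | psi_succ i hi a ha hk ih =>
    intro x _ ζ hζ
    rw [fs_psi_of_kind_one hk] at hζ
    have hadm := admissible_of_kind_one zero hk
    have hle := (fs_lt ha hadm (ne_zero_of_kind_pos (by omega))).le
    have hdom := exists_ge_mem_G0_psi hi hle (ih zero hadm) ζ (G0_rep_subset _ _ hζ)
    exact hdom.imp_right (by omega)
  | psi_lim i hi a ha hk ih =>
    intro x hx ζ hζ
    rw [fs_psi_of_kind_two hk] at hζ
    have hadm := hx.congr_kind (by rw [hk, kind_psi_of_kind_two hk])
    have hle := (fs_lt ha hadm (ne_zero_of_kind_pos (by omega))).le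
    exact (exists_ge_mem_G0_psi hi hle (ih x hadm) ζ hζ).imp_right (by omega)
  | psi_collapse a ha hk ih =>
    intro x _ ζ hζ
    rw [fs_psi_zero_of_kind_three hk] at hζ
    exact Or.inl (exists_ge_mem_G0_psi_of_mem_G0_psiIter ha hk
      (fun x hx ζ hζ => (ih x hx ζ hζ).imp_right And.right) _ ζ hζ)
  | psi_one a ha hk ih =>
    intro x hx ζ hζ
    rw [fs_psi_one_of_kind_three hk] at hζ
    have hadm := hx.congr_kind (by rw [hk, kind_psi_one_of_kind_three hk])
    have hle := (fs_lt ha hadm (ne_zero_of_kind_pos (by omega))).le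
    exact (exists_ge_mem_G0_psi le_rfl hle (ih x hadm) ζ hζ).imp_right
      fun hmem => ⟨kind_psi_one_of_kind_three hk, hmem.2⟩

theorem normN_lt_of_mem_G0 {a γ : Tm} (h : Low a) (hγ : γ ∈ G0 a) : normN γ < normN a := by
  induction a with
  | zero | one => simp at hγ
  | psi i a ih =>
    rw [normN]
    rcases (mem_G0_psi h.1).1 hγ with ⟨-, rfl⟩ | hγ
    · omega
    · have := ih h.2 hγ
      omega
  | add a b iha ihb =>
    rw [normN]
    rcases Finset.mem_union.1 (by simpa using hγ) with hγ | hγ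
    · have := iha h.2.1 hγ
      omega
    · have := ihb h.2.2.1 hγ
      omega

theorem lt_fs_of_mem_G0_of_kind_one {a : Tm} (ha : Low a) (hk : kind a = 1)
    (hG : ∀ γ ∈ G0 a, γ < a) (hfs : Low (fs a zero)) :
    ∀ ζ ∈ G0 (fs a zero), ζ < fs a zero := by
  intro ζ hζ
  have hnorm := normN_lt_of_mem_G0 hfs hζ
  rcases exists_ge_or_mem_of_mem_G0_fs ha zero (admissible_of_kind_one _ hk) ζ hζ with
    ⟨ξ, hξ, hle⟩ | hmem
  · refine (le_fs_of_lt ha (low_of_mem_G0 hfs hζ) hk (hle.trans_lt (hG ξ hξ))).lt_of_ne ?_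
    rintro rfl
    exact hnorm.false
  · omega

theorem lt_fs_num_of_mem_G0 {a : Tm} {n : ℕ} (ha : Low a) (hk : kind a = 2)
    (hG : ∀ γ ∈ G0 a, γ < a) (hfs : IsOT (fs a (num n))) :
    ∀ ζ ∈ G0 (fs a (num n)), ζ < fs a (num n) := by
  intro ζ hζ
  by_contra! hle
  rcases exists_ge_or_mem_of_mem_G0_fs ha _ (admissible_num a n) ζ hζ with ⟨ξ, hξ, hζξ⟩ | hmem
  · exact (normN_lt_of_mem_G0 hfs.1 hζ).not_ge
      (embeds_fs_num_of_le ha hk ζ n (hfs.of_mem_G0 hζ) hle (hζξ.trans_lt (hG ξ hξ))).normN_le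
  · omega

theorem lt_fs_psiIter_of_mem_G0 {a : Tm} {n : ℕ} (ha : Low a) (hk : kind a = 3)
    (hG : ∀ γ ∈ G0 a, γ < a) (hiter : IsOT (psiIter (fs a) n))
    (hfs : IsOT (fs a (psiIter (fs a) n))) :
    ∀ ζ ∈ G0 (fs a (psiIter (fs a) n)), ζ < fs a (psiIter (fs a) n) := by
  intro ζ hζ
  by_contra! hle
  rcases exists_ge_or_mem_of_mem_G0_fs ha _ (admissible_psiIter ha hk n) ζ hζ with
    ⟨ξ, hξ, hζξ⟩ | ⟨-, hmem⟩
  · exact (normN_lt_of_mem_G0 hfs.1 hζ).not_ge (embeds_fs_psiIter_of_le ha hk n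
      (hfs.of_mem_G0 hζ) (hfs.2 ζ hζ) hle (hζξ.trans_lt (hG ξ hξ))).normN_le
  · cases n with
    | zero => simp at hmem
    | succ n =>
      have hlt : fs a (psiIter (fs a) n) < fs a (psiIter (fs a) (n + 1)) :=
        fs_lt_fs ha (by omega) _ _ (admissible_psiIter ha hk n) (admissible_psiIter ha hk (n + 1))
          (psiIter_strictMono ha hk n.lt_succ_self)
      rw [psiIter_succ] at hiter hmem
      rcases (mem_G0_psi zero_le_one).1 hmem with ⟨-, rfl⟩ | hmem
      · exact hle.not_gt hlt
      · exact hle.not_gt (((isOT_psi_zero.1 hiter).2 _ hmem).trans hlt)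

theorem isOT_rep {p : Tm} (hp : IsPrincipal p) (h : IsOT p) (n : ℕ) : IsOT (rep p n) := by
  induction n with
  | zero => exact isOT_zero
  | succ n ih =>
    refine (isOT_cons hp).2 ⟨h, ih, ?_⟩
    rw [hd_rep hp]
    split <;> simp

theorem isOT_fs {t : Tm} (h : IsOT t) :
    ∀ x, Admissible t x → IsOT x → IsOT (fs t x) := by
  obtain ⟨hlow, -⟩ := id h
  induction hlow using Low.kindRec with
  | zero | one => exact fun _ _ _ => isOT_zero
  | add a b hab ih =>
    intro x hx hox
    obtain ⟨ha, hoa, hob, -, hle⟩ := isOT_add.1 h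
    exact (isOT_cons ha).2 ⟨hoa, ih hob x hx hox, (hd_fs_le hab.2.2.1 hx).trans hle⟩
  | psi_zero => exact fun _ _ hox => hox
  | psi_succ i hi a ha hk ih =>
    intro x _ _
    obtain ⟨-, hoa, hG⟩ := isOT_psi.1 h
    have hfs := ih hoa zero (admissible_of_kind_one _ hk) isOT_zero
    rw [fs_psi_of_kind_one hk]
    exact isOT_rep (isPrincipal_psi _ _) (isOT_psi.2 ⟨hi, hfs,
      fun h0 => lt_fs_of_mem_G0_of_kind_one ha hk (hG h0) hfs.1⟩) _
  | psi_lim i hi a ha hk ih =>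
    intro x hx hox
    obtain ⟨-, hoa, hG⟩ := isOT_psi.1 h
    obtain ⟨n, rfl⟩ := hx.1 (kind_psi_of_kind_two hk)
    have hfs := ih hoa _ (admissible_num a n) hox
    rw [fs_psi_of_kind_two hk]
    exact isOT_psi.2 ⟨hi, hfs, fun h0 => lt_fs_num_of_mem_G0 ha hk (hG h0) hfs⟩
  | psi_collapse a ha hk ih =>
    intro x _ _
    obtain ⟨-, hoa, hG⟩ := isOT_psi.1 h
    have hiter (n : ℕ) : IsOT (psiIter (fs a) n) := by
      induction n with
      | zero => exact isOT_zero
      | succ n ihn =>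
        have hfs := ih hoa _ (admissible_psiIter ha hk n) ihn
        exact isOT_psi_zero.2 ⟨hfs, lt_fs_psiIter_of_mem_G0 ha hk (hG rfl) ihn hfs⟩
    rw [fs_psi_zero_of_kind_three hk]
    exact hiter _
  | psi_one a _ hk ih =>
    intro x hx hox
    rw [fs_psi_one_of_kind_three hk, isOT_psi_one]
    exact ih h.of_psi x (hx.congr_kind (by rw [hk, kind_psi_one_of_kind_three hk])) hox

theorem isOT_fs_num {t : Tm} (h : IsOT t) (n : ℕ) : IsOT (fs t (num n)) :=
  isOT_fs h _ (admissible_num t n) (isOT_num n)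

theorem isOT_fs_zero {t : Tm} (h : IsOT t) : IsOT (fs t zero) := isOT_fs_num h 0

/-! ### Well-foundedness of the countable ordinal terms -/

/-- A countable ordinal term, that is, one below `Ω`. -/
def CountableOT (a : Tm) : Prop := IsOT a ∧ a < psi 1 zero

theorem CountableOT.low {a : Tm} (h : CountableOT a) : Low a := h.1.1

/-- `a` lies in the well-founded part of `<` restricted to the predecessors in `S`. -/
abbrev AccIn (S : Tm → Prop) (a : Tm) : Prop := Acc (fun x y => S x ∧ x < y) a

/-- `S` consists of sums without `ψ₂` and is closed under passing to a summand or a tail. -/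
structure SummandClosed (S : Tm → Prop) : Prop where
  low : ∀ a, S a → Low a
  of_cons : ∀ a t, IsPrincipal a → S (cons a t) → S a ∧ S t

theorem accIn_zero (S : Tm → Prop) : AccIn S zero :=
  ⟨_, fun y h => absurd h.2 (not_lt_zero y)⟩

theorem SummandClosed.accIn_one {S : Tm → Prop} (hS : SummandClosed S) : AccIn S one :=
  ⟨_, fun y h => by rw [(hS.low y h.1).eq_zero_of_lt_one h.2]; exact accIn_zero S⟩

theorem SummandClosed.accIn_of_hd_lt {S : Tm → Prop} (hS : SummandClosed S) {u : Tm}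
    (h : ∀ p s, IsPrincipal p → S (cons p s) → p < u → AccIn S s →
      (∀ e, S e → hd e < u → normN e < normN p → AccIn S e) → AccIn S (cons p s)) :
    ∀ e, S e → hd e < u → AccIn S e := by
  suffices ∀ n e, normN e ≤ n → S e → hd e < u → AccIn S e from fun e => this _ e le_rfl
  intro n
  induction n using Nat.strong_induction_on with
  | _ n ih =>
    intro e hn he hlt
    by_cases h0 : e = zero
    · rw [h0]
      exact accIn_zero S
    obtain ⟨p, s, rfl, hp, hpl, hsl, hs⟩ := (hS.low e he).exists_cons h0
    rw [hd_cons _ _ hp] at hlt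
    rw [normN_cons] at hn
    have := normN_pos hp.ne_zero hpl
    refine h p s hp he hlt ?_ fun e' he' hlt' hn' => ih (normN e') (by omega) e' le_rfl he' hlt'
    exact ih (normN s) (by omega) s le_rfl (hS.of_cons _ _ hp he).2 (hs.trans_lt hlt)

theorem SummandClosed.accIn_cons {S : Tm → Prop} (hS : SummandClosed S) {a t : Tm}
    (hp : IsPrincipal a) (ha : AccIn S a) (ht : AccIn S t) : AccIn S (cons a t) := by
  induction ha generalizing t with
  | intro a _ iha =>
    have hsmall := hS.accIn_of_hd_lt (u := a) fun p s hp' he hlt hs _ =>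
      iha p ⟨(hS.of_cons _ _ hp' he).1, hlt⟩ hp' hs
    induction ht with
    | intro t _ iht =>
      refine ⟨_, fun e ⟨he, hlt⟩ => ?_⟩
      by_cases h0 : e = zero
      · rw [h0]
        exact accIn_zero S
      obtain ⟨b, s, rfl, hb, -⟩ := (hS.low e he).exists_cons h0
      rw [cons_lt_cons hb hp] at hlt
      rcases hlt with hlt | ⟨rfl, hlt⟩
      · exact hsmall _ he (by rwa [hd_cons _ _ hb])
      · exact iht s ⟨(hS.of_cons _ _ hp he).2, hlt⟩

theorem countableOT_cons {a t : Tm} (ha : IsPrincipal a) :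
    CountableOT (cons a t) ↔ CountableOT a ∧ CountableOT t ∧ hd t ≤ a := by
  simp only [CountableOT, isOT_cons ha]
  rw [lt_psi_iff_hd_lt, hd_cons _ _ ha, lt_psi_iff_hd_lt (t := t)]
  exact ⟨fun ⟨⟨h₁, h₂, h₃⟩, h₄⟩ => ⟨⟨h₁, h₄⟩, ⟨h₂, h₃.trans_lt h₄⟩, h₃⟩, by tauto⟩

theorem summandClosed_countableOT : SummandClosed CountableOT :=
  ⟨fun _ h => h.low, fun _ _ ha h =>
    ⟨((countableOT_cons ha).1 h).1, ((countableOT_cons ha).1 h).2.1⟩⟩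

/-- Every outermost subterm `ψ₀b` is accessible among the countable ordinal terms. -/
def CountablePartsAcc : Tm → Prop
  | zero => True
  | one => True
  | psi 0 b => AccIn CountableOT (psi 0 b)
  | psi (_ + 1) b => CountablePartsAcc b
  | add a b => CountablePartsAcc a ∧ CountablePartsAcc b

theorem countablePartsAcc_cons {a t : Tm} :
    CountablePartsAcc (cons a t) ↔ CountablePartsAcc a ∧ CountablePartsAcc t := by
  unfold cons
  split
  · subst_vars
    simp [CountablePartsAcc]
  · rfl

/-- The ordinal terms built by `ψ₁` and sums over the accessible countable ones. -/
def OTOverAcc (a : Tm) : Prop := IsOT a ∧ CountablePartsAcc a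

theorem summandClosed_oTOverAcc : SummandClosed OTOverAcc where
  low _ h := h.1.1
  of_cons _ _ ha h := by
    obtain ⟨hot, hacc⟩ := h
    obtain ⟨hoa, hot, -⟩ := (isOT_cons ha).1 hot
    exact ⟨⟨hoa, (countablePartsAcc_cons.1 hacc).1⟩, hot, (countablePartsAcc_cons.1 hacc).2⟩

theorem IsPrincipal.eq_one_or_exists_psi_zero {p : Tm} (hp : IsPrincipal p)
    (h : p < psi 1 Tm.zero) :
    p = Tm.one ∨ ∃ b, p = psi 0 b := by
  cases p <;> simp_all

theorem CountableOT.accIn_of_countablePartsAcc {a : Tm} (h : CountableOT a)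
    (hacc : CountablePartsAcc a) : AccIn CountableOT a := by
  induction a with
  | zero => exact accIn_zero _
  | one => exact summandClosed_countableOT.accIn_one
  | psi i b =>
    obtain rfl : i = 0 := by simpa using h.2
    exact hacc
  | add a b iha ihb =>
    have hlow := h.low
    have ha := hlow.1
    rw [hlow.add_eq_cons, countableOT_cons ha] at h
    rw [hlow.add_eq_cons]
    exact summandClosed_countableOT.accIn_cons ha (iha h.1 hacc.1) (ihb h.2.1 hacc.2)

theorem CountableOT.accIn_oTOverAcc {a : Tm} (hacc : AccIn CountableOT a) (h : CountableOT a) :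
    AccIn OTOverAcc a := by
  induction hacc with
  | intro a _ ih =>
    refine ⟨_, fun e he => ?_⟩
    have hce : CountableOT e := ⟨he.1.1, he.2.trans h.2⟩
    exact ih e ⟨hce, he.2⟩ hce

theorem accIn_psi_one {b : Tm} (h : AccIn OTOverAcc b) : AccIn OTOverAcc (psi 1 b) := by
  induction h with
  | intro b _ ih =>
    refine ⟨_, fun e he => ?_⟩
    refine summandClosed_oTOverAcc.accIn_of_hd_lt (fun p s hp hps hlt hs _ => ?_) e he.1
      ((lt_psi_iff_hd_lt _ _ _).1 he.2)
    refine summandClosed_oTOverAcc.accIn_cons hp ?_ hs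
    have hop := (summandClosed_oTOverAcc.of_cons _ _ hp hps).1
    cases p with
    | zero | add => simp at hp
    | one => exact summandClosed_oTOverAcc.accIn_one
    | psi i d =>
      have hi := hop.1.low.1
      interval_cases i
      · exact CountableOT.accIn_oTOverAcc hop.2 ⟨hop.1, by simp⟩
      · exact ih d ⟨⟨hop.1.of_psi, hop.2⟩, by simpa using hlt⟩

theorem countablePartsAcc_of_G0 {c : Tm} (h : Low c)
    (hG : ∀ d ∈ G0 c, AccIn CountableOT (psi 0 d)) : CountablePartsAcc c := by
  induction c with
  | zero | one => trivial
  | psi i a ih =>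
    obtain ⟨hi, ha⟩ := h
    interval_cases i
    · exact hG a (by simp)
    · exact ih ha (by simpa using hG)
  | add a b iha ihb =>
    exact ⟨iha h.2.1 fun d hd => hG d (by simp [hd]), ihb h.2.2.1 fun d hd => hG d (by simp [hd])⟩

theorem accIn_psi_zero {b : Tm} (h : AccIn OTOverAcc b) : AccIn CountableOT (psi 0 b) := by
  induction h with
  | intro b _ ih =>
    refine ⟨_, fun e he => ?_⟩
    refine summandClosed_countableOT.accIn_of_hd_lt (fun p s hp hps hlt hs hsmall => ?_) e he.1
      ((lt_psi_iff_hd_lt _ _ _).1 he.2)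
    refine summandClosed_countableOT.accIn_cons hp ?_ hs
    have hcp := (summandClosed_countableOT.of_cons _ _ hp hps).1
    rcases hp.eq_one_or_exists_psi_zero hcp.2 with rfl | ⟨c, rfl⟩
    · exact summandClosed_countableOT.accIn_one
    · have hcb : c < b := by simpa using hlt
      obtain ⟨hc, hG⟩ := isOT_psi_zero.1 hcp.1
      refine ih c ⟨⟨hc, countablePartsAcc_of_G0 hc.low fun d hd => ?_⟩, hcb⟩
      refine hsmall _ ⟨isOT_psi_zero.2 ⟨hc.of_mem_G0 hd, hc.2 d hd⟩, by simp⟩ ?_ ?_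
      · simpa using (hG d hd).trans hcb
      · simpa [normN] using normN_lt_of_mem_G0 hc.low hd

theorem IsOT.countablePartsAcc_and_accIn {a : Tm} (h : IsOT a) :
    CountablePartsAcc a ∧ AccIn OTOverAcc a := by
  induction a with
  | zero => exact ⟨trivial, accIn_zero _⟩
  | one => exact ⟨trivial, summandClosed_oTOverAcc.accIn_one⟩
  | psi i a ih =>
    have hi := h.low.1
    obtain ⟨hparts, hacc⟩ := ih h.of_psi
    interval_cases i
    · exact ⟨accIn_psi_zero hacc, CountableOT.accIn_oTOverAcc (accIn_psi_zero hacc) ⟨h, by simp⟩⟩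
    · exact ⟨hparts, accIn_psi_one hacc⟩
  | add a b iha ihb =>
    obtain ⟨ha, hoa, hob, h0, -⟩ := isOT_add.1 h
    refine ⟨⟨(iha hoa).1, (ihb hob).1⟩, ?_⟩
    rw [← cons_of_ne_zero _ h0]
    exact summandClosed_oTOverAcc.accIn_cons ha (iha hoa).2 (ihb hob).2

theorem CountableOT.induction {P : Tm → Prop}
    (h : ∀ a, CountableOT a → (∀ b, CountableOT b → b < a → P b) → P a) {a : Tm}
    (ha : CountableOT a) : P a := by
  have hacc : AccIn CountableOT a :=
    ha.accIn_of_countablePartsAcc ha.1.countablePartsAcc_and_accIn.1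
  induction hacc with
  | intro a _ ih => exact h a ha fun b hb hlt => ih b ⟨hb, hlt⟩ hb

/-! ### The Hardy hierarchy on countable terms -/

theorem CountableOT.zero_or_kind {a : Tm} (h : CountableOT a) :
    a = Tm.zero ∨ kind a = 1 ∨ kind a = 2 := by
  obtain ⟨⟨hlow, -⟩, hlt⟩ := h
  induction a with
  | zero | one => simp
  | psi i a =>
    obtain rfl : i = 0 := by simpa using hlt
    simp
  | add a b _ ih =>
    rw [lt_psi_iff_hd_lt] at hlt
    have := ih ((lt_psi_iff_hd_lt _ _ _).2 (hlow.2.2.2.2.trans_lt hlt)) hlow.2.2.1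
    simpa [hlow.2.2.2.1] using this

theorem countableOT_zero : CountableOT zero := ⟨isOT_zero, by simp⟩

theorem CountableOT.fs_num {a : Tm} (h : CountableOT a) (n : ℕ) : CountableOT (fs a (num n)) := by
  refine ⟨isOT_fs_num h.1 n, ?_⟩
  by_cases h0 : a = Tm.zero
  · simp [h0]
  · exact (fs_lt h.low (admissible_num a n) h0).trans h.2

theorem CountableOT.fs_zero {a : Tm} (h : CountableOT a) : CountableOT (fs a Tm.zero) := h.fs_num 0

theorem fs_num_strictMono {a : Tm} (h : Low a) (hk : kind a = 2) :
    StrictMono fun n => fs a (num n) := fun _ _ hnm =>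
  fs_lt_fs h hk.ge _ _ (admissible_num _ _) (admissible_num _ _)
    (rep_strictMono isPrincipal_one hnm)

theorem embeds_fs_num {a : Tm} (h : IsOT a) (hk : kind a = 2) {n m : ℕ} (hnm : n ≤ m) :
    Embeds (fs a (num n)) (fs a (num m)) :=
  embeds_fs_num_of_le h.low hk _ n (isOT_fs_num h m) ((fs_num_strictMono h.low hk).monotone hnm)
    (fs_lt h.low (admissible_num _ _) (ne_zero_of_kind_pos (by omega)))

/-- The iteration `α{b}` entering the limit clause of the Hardy hierarchy at base `k`. -/
noncomputable def hardyIter (a : Tm) (k : ℕ) : ℕ → Tm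
  | 0 => fs a zero
  | b + 1 => fs a (num (H (hardyIter a k b) k))

theorem hardyIter_zero (a : Tm) (k : ℕ) : hardyIter a k 0 = fs a zero := rfl

theorem hardyIter_succ (a : Tm) (k b : ℕ) :
    hardyIter a k (b + 1) = fs a (num (H (hardyIter a k b) k)) := rfl

theorem exists_hardyIter_eq (a : Tm) (k b : ℕ) : ∃ n, hardyIter a k b = fs a (num n) := by
  cases b with
  | zero => exact ⟨0, rfl⟩
  | succ b => exact ⟨_, rfl⟩

theorem CountableOT.hardyIter {a : Tm} (h : CountableOT a) (k b : ℕ) :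
    CountableOT (hardyIter a k b) := by
  obtain ⟨n, hn⟩ := exists_hardyIter_eq a k b
  exact hn ▸ h.fs_num n

theorem hardyIter_lt {a : Tm} (h : Low a) (h0 : a ≠ zero) (k b : ℕ) : hardyIter a k b < a := by
  obtain ⟨n, hn⟩ := exists_hardyIter_eq a k b
  exact hn ▸ fs_lt h (admissible_num _ _) h0

theorem CountableOT.hardy_induction {P : ∀ a, CountableOT a → Prop} (k : ℕ)
    (zero : P Tm.zero countableOT_zero)
    (succ : ∀ a, ∀ ha : CountableOT a, kind a = 1 → P (fs a Tm.zero) ha.fs_zero → P a ha)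
    (lim : ∀ a, ∀ ha : CountableOT a, kind a = 2 →
      (∀ b, P (Tm.hardyIter a k b) (ha.hardyIter k b)) → P a ha)
    {a : Tm} (ha : CountableOT a) : P a ha := by
  refine CountableOT.induction (P := fun a => ∀ ha, P a ha) (fun a _ ih ha => ?_) ha ha
  rcases ha.zero_or_kind with rfl | hk | hk
  · exact zero
  · exact succ a ha hk (ih _ ha.fs_zero
      (fs_lt ha.low (admissible_num _ 0) (ne_zero_of_kind_pos (by omega))) _)
  · exact lim a ha hk fun b => ih _ (ha.hardyIter k b)
      (hardyIter_lt ha.low (ne_zero_of_kind_pos (by omega)) k b) _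

theorem fund_natToTm {a : Tm} (h : Low a) (n : ℕ) : fund a (natToTm n) = fs a (num n) := by
  rw [natToTm_eq_num, fund_eq_fs h _ (admissible_num _ _)]

theorem fund_zero_right {a : Tm} (h : Low a) : fund a zero = fs a zero :=
  fund_eq_fs h _ (admissible_num _ 0)

theorem hRel_zero_iff {k n : ℕ} : HRel zero k n ↔ n = k := by
  constructor
  · intro h
    cases h with
    | zero => rfl
    | succ h => simp [tp] at h
    | lim h => simp [tp, omegaT] at h
  · rintro rfl
    exact .zero

theorem hRel_iff_of_kind_one {a : Tm} {k n : ℕ} (h : Low a) (hk : kind a = 1) :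
    HRel a k n ↔ ∃ n', HRel (fs a zero) k n' ∧ n = n' * k := by
  have htp : tp a = one := by rw [tp_eq_typeOfKind h, hk, typeOfKind]
  constructor
  · intro hr
    cases hr with
    | zero => simp at hk
    | succ _ hr => exact ⟨_, fund_zero_right h ▸ hr, rfl⟩
    | lim htp' => simp [htp, omegaT] at htp'
  · rintro ⟨n', hr, rfl⟩
    exact .succ htp (fund_zero_right h ▸ hr)

theorem hRel_iff_of_kind_two {a : Tm} {k n : ℕ} (h : Low a) (hk : kind a = 2) :
    HRel a k n ↔ ∃ b, HIter a k k b ∧ HRel b k n := by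
  have htp : tp a = omegaT := by rw [tp_eq_typeOfKind h, hk, typeOfKind]
  constructor
  · intro hr
    cases hr with
    | zero => simp at hk
    | succ htp' => simp [htp, omegaT] at htp'
    | lim _ hit hr => exact ⟨_, hit, hr⟩
  · rintro ⟨b, hit, hr⟩
    exact .lim htp hit hr

theorem hIter_iff {a c : Tm} {k b : ℕ} (h : Low a)
    (hH : ∀ b n, HRel (hardyIter a k b) k n ↔ n = H (hardyIter a k b) k) :
    HIter a k b c ↔ c = hardyIter a k b := by
  induction b generalizing c with
  | zero =>
    rw [hardyIter_zero, ← fund_zero_right h]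
    constructor
    · rintro ⟨⟩
      rfl
    · rintro rfl
      exact .zero
  | succ b ih =>
    rw [hardyIter_succ, ← fund_natToTm h]
    constructor
    · intro hr
      cases hr with
      | succ hit hr =>
        obtain rfl := ih.1 hit
        rw [(hH _ _).1 hr]
    · rintro rfl
      exact .succ (ih.2 rfl) ((hH _ _).2 rfl)

theorem H_eq_of_forall_hRel_iff {a : Tm} {k x : ℕ} (h : ∀ n, HRel a k n ↔ n = x) : H a k = x := by
  simp [H, h]

theorem CountableOT.hRel_iff {a : Tm} (ha : CountableOT a) (k n : ℕ) :
    HRel a k n ↔ n = H a k := by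
  suffices ∃ x, ∀ n, HRel a k n ↔ n = x by
    obtain ⟨x, hx⟩ := this
    rw [H_eq_of_forall_hRel_iff hx, hx]
  induction ha using CountableOT.hardy_induction k with
  | zero => exact ⟨k, fun _ => hRel_zero_iff⟩
  | succ a ha hk ih =>
    obtain ⟨x, hx⟩ := ih
    exact ⟨x * k, fun n => by simp [hRel_iff_of_kind_one ha.low hk, hx]⟩
  | lim a ha hk ih =>
    have hH b n : HRel (Tm.hardyIter a k b) k n ↔ n = H (Tm.hardyIter a k b) k := by
      obtain ⟨x, hx⟩ := ih b
      rw [H_eq_of_forall_hRel_iff hx, hx]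
    exact ⟨H (Tm.hardyIter a k k) k, fun n => by
      simp [hRel_iff_of_kind_two ha.low hk, hIter_iff ha.low hH, hH]⟩

theorem H_zero (k : ℕ) : H zero k = k := H_eq_of_forall_hRel_iff fun _ => hRel_zero_iff

theorem H_of_kind_one {a : Tm} (ha : CountableOT a) (hk : kind a = 1) (k : ℕ) :
    H a k = H (fs a zero) k * k :=
  H_eq_of_forall_hRel_iff fun n => by simp [hRel_iff_of_kind_one ha.low hk, ha.fs_zero.hRel_iff]

theorem H_of_kind_two {a : Tm} (ha : CountableOT a) (hk : kind a = 2) (k : ℕ) :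
    H a k = H (hardyIter a k k) k :=
  H_eq_of_forall_hRel_iff fun n => by
    simp [hRel_iff_of_kind_two ha.low hk, (ha.hardyIter k _).hRel_iff,
      hIter_iff ha.low fun b => (ha.hardyIter k b).hRel_iff k]

theorem exists_H_eq_pow {a : Tm} (ha : CountableOT a) (k : ℕ) : ∃ e, 1 ≤ e ∧ H a k = k ^ e := by
  induction ha using CountableOT.hardy_induction k with
  | zero => exact ⟨1, le_rfl, by simp [H_zero]⟩
  | succ a ha hk ih =>
    obtain ⟨e, -, he⟩ := ih
    exact ⟨e + 1, by omega, by rw [H_of_kind_one ha hk, he, pow_succ]⟩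
  | lim a ha hk ih => exact H_of_kind_two ha hk k ▸ ih k

theorem le_H {k : ℕ} {a : Tm} (ha : CountableOT a) : k ≤ H a k := by
  obtain ⟨e, he, h⟩ := exists_H_eq_pow ha k
  exact h ▸ Nat.le_self_pow (by omega) k

theorem normN_lt_H {k : ℕ} (hk : 2 ≤ k) {a : Tm} (ha : CountableOT a) : normN a < H a k := by
  induction ha using CountableOT.hardy_induction k with
  | zero =>
    rw [H_zero, normN]
    omega
  | succ a ha hka ih =>
    rw [H_of_kind_one ha hka, normN_fs_of_kind_one hka]
    nlinarith
  | lim a ha hka ih =>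
    obtain ⟨j, rfl⟩ : ∃ j, k = j + 1 := ⟨k - 1, by omega⟩
    rw [H_of_kind_two ha hka]
    refine lt_of_le_of_lt ?_ (ih (j + 1))
    exact normN_le_normN_fs ha.low hka (hk.trans (le_H (ha.hardyIter _ j)))

theorem num_ne_zero {n : ℕ} (h : n ≠ 0) : num n ≠ zero := by
  rwa [Ne, rep_eq_zero isPrincipal_one]

theorem embeds_hardyIter {a b : Tm} {k k' : ℕ}
    (hfs : ∀ w w', w ≤ w' → Embeds (fs a (num w)) (fs b (num w')))
    (hH : ∀ n n', Embeds (hardyIter a k n) (hardyIter b k' n') →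
      H (hardyIter a k n) k ≤ H (hardyIter b k' n') k')
    {n n' : ℕ} (hn : n ≤ n') : Embeds (hardyIter a k n) (hardyIter b k' n') := by
  induction n' generalizing n with
  | zero =>
    obtain rfl : n = 0 := by omega
    exact hfs 0 0 le_rfl
  | succ n' ih =>
    cases n with
    | zero => exact hfs 0 _ (Nat.zero_le _)
    | succ n => exact hfs _ _ (hH _ _ (ih (by omega)))

theorem ParallelFs.embeds_fs_num {a b : Tm} (h : ParallelFs a b) {w w' : ℕ} (hw : w ≤ w') :
    Embeds (fs a (num w)) (fs b (num w')) :=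
  h.embeds _ _ (admissible_num _ _) (admissible_num _ _) (embeds_num_num.2 hw)

theorem EmbedsInFs.embeds_fs_num {a b : Tm} (h : EmbedsInFs a b) {n : ℕ} (hn : n ≠ 0) :
    Embeds a (fs b (num n)) :=
  h _ (admissible_num _ _) (num_ne_zero hn)

theorem EmbedsInFs.embeds_fs_zero {a b : Tm} (h : EmbedsInFs a b) (hk : kind b = 1) :
    Embeds a (fs b Tm.zero) :=
  fs_eq_of_kind_le_one (num 1) Tm.zero hk.le ▸ h.embeds_fs_num one_ne_zero

theorem exists_H_eq_pow_of_embeds {a b : Tm} (ha : CountableOT a) (hb : CountableOT b)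
    (hab : Embeds a b) {k k' : ℕ} (hk : 1 ≤ k) (hkk : k ≤ k') :
    ∃ e e', e ≤ e' ∧ H a k = k ^ e ∧ H b k' = k' ^ e' := by
  induction hb using CountableOT.hardy_induction k' generalizing a with
  | zero =>
    obtain rfl := hab.eq_zero
    exact ⟨1, 1, le_rfl, by simp [H_zero], by simp [H_zero]⟩
  | succ b hb hkb ih =>
    rw [H_of_kind_one hb hkb]
    rcases hab.embedsInFs_or_parallelFs ha.low hb.low (ne_zero_of_kind_pos (by omega)) with hI | hP
    · obtain ⟨e, e', hle, hae, hbe⟩ := ih ha (hI.embeds_fs_zero hkb)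
      exact ⟨e, e' + 1, by omega, hae, by rw [hbe, pow_succ]⟩
    · obtain ⟨e, e', hle, hae, hbe⟩ := ih ha.fs_zero (hP.embeds_fs_num (le_refl 0))
      rw [H_of_kind_one ha (hP.kind_eq.trans hkb)]
      exact ⟨e + 1, e' + 1, by omega, by rw [hae, pow_succ], by rw [hbe, pow_succ]⟩
  | lim b hb hkb ih =>
    rw [H_of_kind_two hb hkb]
    rcases hab.embedsInFs_or_parallelFs ha.low hb.low (ne_zero_of_kind_pos (by omega)) with hI | hP
    · obtain ⟨j, rfl⟩ : ∃ j, k' = j + 1 := ⟨k' - 1, by omega⟩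
      have := le_H (k := j + 1) (hb.hardyIter (j + 1) j)
      exact ih (j + 1) ha (hI.embeds_fs_num (by omega))
    · rw [H_of_kind_two ha (hP.kind_eq.trans hkb)]
      refine ih k' (ha.hardyIter k k) (embeds_hardyIter (fun _ _ => hP.embeds_fs_num)
        (fun n n' hemb => ?_) hkk)
      obtain ⟨e, e', hle, hae, hbe⟩ := ih n' (ha.hardyIter k n) hemb
      rw [hae, hbe]
      exact (Nat.pow_le_pow_left hkk e).trans (Nat.pow_le_pow_right (by omega) hle)

theorem H_mono {a b : Tm} (ha : CountableOT a) (hb : CountableOT b) (hab : Embeds a b)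
    {k k' : ℕ} (hk : 1 ≤ k) (hkk : k ≤ k') : H a k ≤ H b k' := by
  obtain ⟨e, e', hle, hae, hbe⟩ := exists_H_eq_pow_of_embeds ha hb hab hk hkk
  rw [hae, hbe]
  exact (Nat.pow_le_pow_left hkk e).trans (Nat.pow_le_pow_right (by omega) hle)

theorem ParallelFs.fs_num_ne {a b : Tm} (h : ParallelFs a b) (hb : IsOT b) (hkb : kind b = 2)
    (hn : normN a < normN b) {w w' : ℕ} (hw : w ≤ w') (hw0 : w ≠ 0) :
    fs a (num w) ≠ fs b (num w') := fun heq => by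
  have h₁ := h.normN_lt hn (num w) (admissible_num _ _) (num_ne_zero hw0)
  have h₂ := (Tm.embeds_fs_num hb hkb hw).normN_le
  rw [heq] at h₁
  omega

theorem EmbedsInFs.ne_fs_num {a b : Tm} (h : EmbedsInFs a b) (hb : IsOT b) (hkb : kind b = 2)
    {n : ℕ} (hn : 2 ≤ n) : a ≠ fs b (num n) := by
  rintro rfl
  have h₁ := h.embeds_fs_num one_ne_zero
  have h₂ := Tm.embeds_fs_num hb hkb (show 1 ≤ n by omega)
  have heq := h₂.eq_of_normN_eq (isOT_fs_num hb n).low (h₂.normN_le.antisymm h₁.normN_le)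
  have := (fs_num_strictMono hb.low hkb).injective heq
  omega

theorem H_lt_H {a b : Tm} (ha : CountableOT a) (hb : CountableOT b) (hab : Embeds a b)
    (hne : a ≠ b) {k : ℕ} (hk : 2 ≤ k) : H a k < H b k := by
  induction hb using CountableOT.hardy_induction k generalizing a with
  | zero => exact absurd hab.eq_zero hne
  | succ b hb hkb ih =>
    rw [H_of_kind_one hb hkb]
    rcases hab.embedsInFs_or_parallelFs ha.low hb.low (ne_zero_of_kind_pos (by omega)) with hI | hP
    · have := H_mono ha hb.fs_zero (hI.embeds_fs_zero hkb) (one_le_two.trans hk) le_rfl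
      have := le_H (k := k) ha
      nlinarith
    · have hka := hP.kind_eq.trans hkb
      have hnorm : normN a < normN b :=
        hab.normN_le.lt_of_ne fun h => hne (hab.eq_of_normN_eq hb.low h)
      rw [H_of_kind_one ha hka]
      refine Nat.mul_lt_mul_of_pos_right
        (ih ha.fs_zero (hP.embeds_fs_num (le_refl 0)) fun heq => ?_) (by omega)
      rw [normN_fs_of_kind_one hka, normN_fs_of_kind_one hkb, heq] at hnorm
      omega
  | lim b hb hkb ih =>
    obtain ⟨j, rfl⟩ : ∃ j, k = j + 1 := ⟨k - 1, by omega⟩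
    have hmono n : Embeds (hardyIter a (j + 1) n) (hardyIter b (j + 1) n) →
        H (hardyIter a (j + 1) n) (j + 1) ≤ H (hardyIter b (j + 1) n) (j + 1) :=
      fun h => H_mono (ha.hardyIter _ n) (hb.hardyIter _ n) h (by omega) le_rfl
    have hle := le_H (k := j + 1) (hb.hardyIter (j + 1) j)
    rw [H_of_kind_two hb hkb]
    rcases hab.embedsInFs_or_parallelFs ha.low hb.low (ne_zero_of_kind_pos (by omega)) with hI | hP
    · exact ih (j + 1) ha (hI.embeds_fs_num (by omega)) (hI.ne_fs_num hb.1 hkb (by omega))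
    · have hnorm : normN a < normN b :=
        hab.normN_le.lt_of_ne fun h => hne (hab.eq_of_normN_eq hb.low h)
      have hemb {n n' : ℕ} : n ≤ n' → Embeds (hardyIter a (j + 1) n) (hardyIter b (j + 1) n') :=
        embeds_hardyIter (fun _ _ => hP.embeds_fs_num) fun n n' h =>
          H_mono (ha.hardyIter _ n) (hb.hardyIter _ n') h (by omega) le_rfl
      have hle' := le_H (k := j + 1) (ha.hardyIter (j + 1) j)
      rw [H_of_kind_two ha (hP.kind_eq.trans hkb)]
      exact ih (j + 1) (ha.hardyIter _ _) (hemb le_rfl)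
        (hP.fs_num_ne hb.1 hkb hnorm (hmono j (hemb le_rfl)) (by omega))

theorem H_fs_num_strictMono {a : Tm} (ha : CountableOT a) (hka : kind a = 2) {k : ℕ} (hk : 2 ≤ k) :
    StrictMono fun n => H (fs a (num n)) k := fun _ _ hnm =>
  H_lt_H (ha.fs_num _) (ha.fs_num _) (embeds_fs_num ha.1 hka hnm.le)
    (fs_num_strictMono ha.low hka hnm).ne hk

theorem hardyIter_lt_succ {a : Tm} (ha : CountableOT a) (hka : kind a = 2) {k : ℕ} (hk : 2 ≤ k)
    (b : ℕ) : hardyIter a k b < hardyIter a k (b + 1) ∧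
      H (hardyIter a k b) k < H (hardyIter a k (b + 1)) k := by
  have hstep {n m : ℕ} (h : n < m) :
      fs a (num n) < fs a (num m) ∧ H (fs a (num n)) k < H (fs a (num m)) k :=
    ⟨fs_num_strictMono ha.low hka h, H_fs_num_strictMono ha hka hk h⟩
  induction b with
  | zero => exact hstep (n := 0) (lt_of_lt_of_le (by omega) (le_H (ha.hardyIter k 0)))
  | succ b ih => exact hstep ih.2

theorem hardyIter_strictMono {a : Tm} (ha : CountableOT a) (hka : kind a = 2) {k : ℕ}
    (hk : 2 ≤ k) : StrictMono (hardyIter a k) :=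
  strictMono_nat_of_lt_succ fun b => (hardyIter_lt_succ ha hka hk b).1

/-! ### Rewriting the numerals of a term -/

theorem Low.eq_num_or_cons {t : Tm} (h : Low t) :
    (∃ n, t = num n) ∨
      ∃ i a s, t = cons (psi i a) s ∧ i ≤ 1 ∧ Low a ∧ Low s ∧ hd s ≤ psi i a := by
  by_cases h0 : t = Tm.zero
  · exact Or.inl ⟨0, h0⟩
  obtain ⟨p, s, rfl, hp, hlp, hs, hle⟩ := h.exists_cons h0
  cases p with
  | zero | add => simp at hp
  | one => exact Or.inl (Low.exists_eq_num h (by simp))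
  | psi i a => exact Or.inr ⟨i, a, s, rfl, hlp.1, hlp.2, hs, hle⟩

@[elab_as_elim]
theorem Low.consRec {motive : ∀ t, Low t → Prop} (num : ∀ n, motive (num n) (low_num n))
    (cons : ∀ i a s, ∀ hi : i ≤ 1, ∀ ha : Low a, ∀ hs : Low s, ∀ hle : hd s ≤ psi i a,
      motive a ha → motive s hs →
      motive (cons (psi i a) s) ((low_cons (isPrincipal_psi i a)).2 ⟨⟨hi, ha⟩, hs, hle⟩))
    {t : Tm} (h : Low t) : motive t h := by
  obtain ⟨N, hN⟩ : ∃ N, normN t < N := ⟨_, Nat.lt_succ_self _⟩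
  induction N generalizing t with
  | zero => omega
  | succ N ih =>
    rcases h.eq_num_or_cons with ⟨n, rfl⟩ | ⟨i, a, s, rfl, hi, ha, hs, hle⟩
    · exact num n
    · simp only [normN_cons, normN] at hN
      exact cons i a s hi ha hs hle (ih ha (by omega)) (ih hs (by omega))

/-- Apply `f` to every numeral tail of a term; base change has this form. -/
def mapNum (f : ℕ → ℕ) : Tm → Tm
  | zero => zero
  | one => one
  | psi i a => psi i (mapNum f a)
  | add a b => if a = one then num (f (tmToNat (add a b))) else add (mapNum f a) (mapNum f b)

/-- The functions on numerals for which `mapNum` is a well-behaved embedding of terms. -/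
structure IsNumMap (f : ℕ → ℕ) : Prop where
  strictMono : StrictMono f
  map_zero : f 0 = 0
  map_one : f 1 = 1

theorem IsNumMap.eq_zero_iff {f : ℕ → ℕ} (hf : IsNumMap f) {n : ℕ} : f n = 0 ↔ n = 0 :=
  hf.strictMono.injective.eq_iff' hf.map_zero

theorem mapNum_num {f : ℕ → ℕ} (hf : IsNumMap f) (n : ℕ) : mapNum f (num n) = num (f n) := by
  match n with
  | 0 => simp [num, hf.map_zero, mapNum]
  | 1 => simp [num, rep_succ, hf.map_one, mapNum]
  | n + 2 =>
    have hadd : num (n + 2) = add one (num (n + 1)) := by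
      rw [num, rep_succ, cons_of_ne_zero _ (num_ne_zero n.succ_ne_zero)]
    rw [hadd, mapNum, if_pos rfl, ← hadd, tmToNat_num]

theorem mapNum_ne_zero {f : ℕ → ℕ} (hf : IsNumMap f) {t : Tm} (h0 : t ≠ zero) :
    mapNum f t ≠ zero := by
  cases t with
  | zero => exact absurd rfl h0
  | one | psi i a => simp [mapNum]
  | add a b =>
    rw [mapNum]
    split
    · subst_vars
      refine num_ne_zero fun h => ?_
      have := hf.eq_zero_iff.1 h
      simp only [tmToNat] at this
      omega
    · simp

theorem mapNum_cons_psi {f : ℕ → ℕ} (hf : IsNumMap f) (i : ℕ) (a s : Tm) :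
    mapNum f (cons (psi i a) s) = cons (psi i (mapNum f a)) (mapNum f s) := by
  by_cases h0 : s = zero
  · simp [h0, mapNum]
  · rw [cons_of_ne_zero _ h0, cons_of_ne_zero _ (mapNum_ne_zero hf h0), mapNum, if_neg (by simp),
      mapNum]

theorem num_lt_cons_psi (n i : ℕ) (a s : Tm) : num n < cons (psi i a) s := by
  apply lt_of_hd_lt
  rw [hd_cons _ _ (isPrincipal_psi i a), ← lt_psi_iff_hd_lt]
  exact num_lt_psi n i a

theorem mapNum_lt_mapNum_of_lt {f : ℕ → ℕ} (hf : IsNumMap f) {a b : Tm} (ha : Low a) (hb : Low b)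
    (h : a < b) : mapNum f a < mapNum f b := by
  induction ha using Low.consRec generalizing b with
  | num n =>
    rcases hb.eq_num_or_cons with ⟨m, rfl⟩ | ⟨j, b, t, rfl, -⟩
    · rw [mapNum_num hf, mapNum_num hf]
      exact rep_strictMono isPrincipal_one
        (hf.strictMono ((rep_strictMono isPrincipal_one).lt_iff_lt.1 h))
    · rw [mapNum_num hf, mapNum_cons_psi hf]
      exact num_lt_cons_psi _ _ _ _
  | cons i a s _ _ _ _ iha ihs =>
    rcases hb.eq_num_or_cons with ⟨m, rfl⟩ | ⟨j, b, t, rfl, -, hb', ht, -⟩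
    · exact absurd h (num_lt_cons_psi m i a s).not_gt
    · rw [mapNum_cons_psi hf, mapNum_cons_psi hf]
      rw [cons_lt_cons (by simp) (by simp)] at h ⊢
      simp only [psi_lt_psi] at h ⊢
      rcases h with (h | ⟨rfl, h⟩) | ⟨heq, h⟩
      · exact Or.inl (Or.inl h)
      · exact Or.inl (Or.inr ⟨rfl, iha hb' h⟩)
      · obtain ⟨rfl, rfl⟩ := psi.inj heq
        exact Or.inr ⟨rfl, ihs ht h⟩

theorem mapNum_lt_mapNum {f : ℕ → ℕ} (hf : IsNumMap f) {a b : Tm} (ha : Low a) (hb : Low b) :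
    mapNum f a < mapNum f b ↔ a < b := by
  refine ⟨fun h => ?_, mapNum_lt_mapNum_of_lt hf ha hb⟩
  by_contra! hle
  rcases hle.lt_or_eq with hlt | rfl
  · exact lt_asymm h (mapNum_lt_mapNum_of_lt hf hb ha hlt)
  · exact lt_irrefl _ h

theorem mapNum_le_mapNum {f : ℕ → ℕ} (hf : IsNumMap f) {a b : Tm} (ha : Low a) (hb : Low b) :
    mapNum f a ≤ mapNum f b ↔ a ≤ b := by
  rw [← not_lt, mapNum_lt_mapNum hf hb ha, not_lt]

theorem mapNum_injOn {f : ℕ → ℕ} (hf : IsNumMap f) {a b : Tm} (ha : Low a) (hb : Low b)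
    (h : mapNum f a = mapNum f b) : a = b :=
  le_antisymm ((mapNum_le_mapNum hf ha hb).1 h.le) ((mapNum_le_mapNum hf hb ha).1 h.ge)

theorem low_mapNum {f : ℕ → ℕ} (hf : IsNumMap f) {a : Tm} (ha : Low a) : Low (mapNum f a) := by
  induction ha using Low.consRec with
  | num n => exact mapNum_num hf n ▸ low_num _
  | cons i a s hi ha hs hle iha ihs =>
    rw [mapNum_cons_psi hf, low_cons (by simp)]
    refine ⟨⟨hi, iha⟩, ihs, ?_⟩
    rcases hs.eq_num_or_cons with ⟨m, rfl⟩ | ⟨j, b, t, rfl, hj, hb, -⟩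
    · rw [mapNum_num hf]
      exact ((lt_psi_iff_hd_lt _ _ _).1 (num_lt_psi _ _ _)).le
    · rw [mapNum_cons_psi hf, hd_cons _ _ (by simp)]
      rw [hd_cons _ _ (by simp)] at hle
      exact (mapNum_le_mapNum hf (a := psi j b) (b := psi i a) ⟨hj, hb⟩ ⟨hi, ha⟩).2 hle

theorem embeds_mapNum {f : ℕ → ℕ} (hf : IsNumMap f) {a : Tm} (ha : Low a) :
    Embeds a (mapNum f a) := by
  induction ha using Low.consRec with
  | num n => exact mapNum_num hf n ▸ embeds_num_num.2 hf.strictMono.le_apply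
  | cons i a s _ _ _ _ iha ihs =>
    exact mapNum_cons_psi hf i a s ▸ Embeds.cons_cons (.psi i iha) ihs

theorem kind_num (n : ℕ) : kind (num n) = if n = 0 then 0 else 1 := by
  induction n with
  | zero => rfl
  | succ n ih =>
    rw [num, rep_succ, kind_cons]
    by_cases h : n = 0 <;> simp_all [rep_eq_zero]

theorem kind_mapNum {f : ℕ → ℕ} (hf : IsNumMap f) {a : Tm} (ha : Low a) :
    kind (mapNum f a) = kind a := by
  induction ha using Low.consRec with
  | num n => simp only [mapNum_num hf, kind_num, hf.eq_zero_iff]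
  | cons i a s hi ha hs hle iha ihs =>
    rw [mapNum_cons_psi hf, kind_cons, kind_cons]
    by_cases h : s = zero
    · simpa [h, mapNum] using kind_psi_congr i iha
    · rw [if_neg (mapNum_ne_zero hf h), if_neg h, ihs]

theorem mapNum_rep_psi {f : ℕ → ℕ} (hf : IsNumMap f) (i : ℕ) (a : Tm) (n : ℕ) :
    mapNum f (rep (psi i a) n) = rep (psi i (mapNum f a)) n := by
  induction n with
  | zero => rfl
  | succ n ih => rw [rep_succ, rep_succ, mapNum_cons_psi hf, ih]

theorem G0_mapNum {f : ℕ → ℕ} (hf : IsNumMap f) {a : Tm} (ha : Low a) :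
    G0 (mapNum f a) = (G0 a).image (mapNum f) := by
  induction ha using Low.consRec with
  | num n => simp [mapNum_num hf, G0_num]
  | cons i a s hi ha hs hle iha ihs =>
    rw [mapNum_cons_psi hf, G0_cons, G0_cons, Finset.image_union, ihs]
    interval_cases i
    · rw [G0_psi_zero, G0_psi_zero, Finset.image_insert, iha]
    · rw [G0_psi_one, G0_psi_one, iha]

theorem isOT_mapNum {f : ℕ → ℕ} (hf : IsNumMap f) {a : Tm} (ha : Low a) :
    IsOT (mapNum f a) ↔ IsOT a := by
  have hG : (∀ γ ∈ G0 (mapNum f a), ∀ δ ∈ G0 γ, δ < γ) ↔ ∀ γ ∈ G0 a, ∀ δ ∈ G0 γ, δ < γ := by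
    rw [G0_mapNum hf ha, Finset.forall_mem_image]
    refine forall₂_congr fun γ hγ => ?_
    have hγlow := low_of_mem_G0 ha hγ
    rw [G0_mapNum hf hγlow, Finset.forall_mem_image]
    exact forall₂_congr fun δ hδ => mapNum_lt_mapNum hf (low_of_mem_G0 hγlow hδ) hγlow
  exact and_congr (iff_of_true (low_mapNum hf ha) ha) hG

theorem mapNum_lt_Omega {f : ℕ → ℕ} (hf : IsNumMap f) {a : Tm} (ha : Low a) :
    mapNum f a < psi 1 zero ↔ a < psi 1 zero :=
  mapNum_lt_mapNum hf (b := psi 1 zero) ha ⟨le_rfl, low_zero⟩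

theorem mapNum_fs_of_kind_three {f : ℕ → ℕ} (hf : IsNumMap f) {a : Tm} (ha : Low a)
    (hk : kind a = 3) (z : Tm) : mapNum f (fs a z) = fs (mapNum f a) (mapNum f z) := by
  induction ha using Low.consRec with
  | num n =>
    rw [kind_num] at hk
    split at hk <;> omega
  | cons i a s hi ha _ hle iha ihs =>
    rw [mapNum_cons_psi hf]
    by_cases h0 : s = zero
    · simp only [h0, cons_zero, mapNum] at hk ⊢
      interval_cases i
      · simp at hk
      · have hkm := kind_mapNum hf ha
        rw [kind_psi_one] at hk
        split_ifs at hk with h₀ h₁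
        · rw [(kind_eq_zero_iff ha).1 h₀, mapNum, fs_psi_zero, fs_psi_zero]
        · omega
        · rw [fs_psi_one_of_kind_three hk, fs_psi_one_of_kind_three (hkm.trans hk), mapNum, iha hk]
    · rw [cons_of_ne_zero _ h0, cons_of_ne_zero _ (mapNum_ne_zero hf h0), fs_add, fs_add]
      rw [cons_of_ne_zero _ h0, kind_add] at hk
      rw [mapNum_cons_psi hf, ihs hk]

theorem mapNum_psiIter {f : ℕ → ℕ} (hf : IsNumMap f) {a : Tm} (ha : Low a) (hk : kind a = 3)
    (n : ℕ) : mapNum f (psiIter (fs a) n) = psiIter (fs (mapNum f a)) n := by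
  induction n with
  | zero => rfl
  | succ n ih => rw [psiIter_succ, psiIter_succ, mapNum, mapNum_fs_of_kind_three hf ha hk, ih]

/-! ### Legal positions of numerals -/

/-- Whether a principal term lies below `Ω`. -/
def isBelowOmega : Tm → Bool
  | psi (_ + 1) _ => false
  | _ => true

/-- Whether a principal term is `ψ₁d` with a countable `d`. -/
def isPsiOneBelowOmega : Tm → Bool
  | psi (_ + 1) d => isBelowOmega (hd d)
  | _ => false

/-- A position in a term, recording whether it is outside the scope of the `ψ₁`s inside the
innermost `ψ₀`, whether the subterm there may start with `1`, and whether it may start with some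
`ψ₁(1 + ⋯)`. -/
structure Slot where
  outer : Bool
  one : Bool
  psiOneOne : Bool

/-- The position of the argument of `ψ₀`, and of a whole term. -/
def Slot.top : Slot := ⟨true, false, false⟩

/-- The position of `b` in `ψᵢb`. -/
def Slot.arg (π : Slot) : ℕ → Slot
  | 0 => top
  | _ + 1 => ⟨false, π.psiOneOne, false⟩

/-- The position of `t` in `c + t`. -/
def Slot.tail (π : Slot) (c : Tm) : Slot :=
  ⟨π.outer, isBelowOmega c, π.outer && isPsiOneBelowOmega c⟩

/-- Only those summands start at a position that the position admits. The relation `TLt` decides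
`1 < ψ₀b` but leaves `1` and `ψ₁b` incomparable, and this is the resulting restriction on the
terms of `OT₀`. -/
def Legal : Slot → Tm → Prop
  | _, zero => True
  | π, one => π.one = true
  | π, psi i b => Legal (π.arg i) b
  | π, add c t => Legal π c ∧ Legal (π.tail c) t

@[simp]
theorem legal_zero (π : Slot) : Legal π zero := trivial

@[simp]
theorem legal_one (π : Slot) : Legal π one ↔ π.one = true := Iff.rfl

@[simp]
theorem legal_psi (π : Slot) (i : ℕ) (b : Tm) : Legal π (psi i b) ↔ Legal (π.arg i) b := Iff.rfl

theorem legal_cons {π : Slot} {c t : Tm} :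
    Legal π (cons c t) ↔ Legal π c ∧ Legal (π.tail c) t := by
  unfold cons
  split
  · subst_vars
    simp [Legal]
  · rfl

theorem legal_num {π : Slot} {n : ℕ} : Legal π (num n) ↔ n = 0 ∨ π.one = true := by
  induction n generalizing π with
  | zero => simp
  | succ n ih =>
    rw [num, rep_succ, legal_cons, ih]
    simp [Slot.tail, isBelowOmega]

theorem isBelowOmega_hd_num (n : ℕ) : isBelowOmega (hd (num n)) = true := by
  rw [hd_rep isPrincipal_one]
  split <;> rfl

theorem isBelowOmega_hd_mapNum {f : ℕ → ℕ} (hf : IsNumMap f) {a : Tm} (ha : Low a) :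
    isBelowOmega (hd (mapNum f a)) = isBelowOmega (hd a) := by
  rcases ha.eq_num_or_cons with ⟨m, rfl⟩ | ⟨j, b, t, rfl, -⟩
  · rw [mapNum_num hf, isBelowOmega_hd_num, isBelowOmega_hd_num]
  · rw [mapNum_cons_psi hf, hd_cons _ _ (by simp), hd_cons _ _ (by simp)]
    cases j <;> rfl

theorem tail_psi_mapNum {f : ℕ → ℕ} (hf : IsNumMap f) (π : Slot) (i : ℕ) {a : Tm} (ha : Low a) :
    π.tail (psi i (mapNum f a)) = π.tail (psi i a) := by
  cases i with
  | zero => rfl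
  | succ =>
    simp only [Slot.tail, isPsiOneBelowOmega, isBelowOmega_hd_mapNum hf ha]
    rfl

theorem legal_mapNum {f : ℕ → ℕ} (hf : IsNumMap f) {a : Tm} (ha : Low a) (π : Slot) :
    Legal π (mapNum f a) ↔ Legal π a := by
  induction ha using Low.consRec generalizing π with
  | num n => rw [mapNum_num hf, legal_num, legal_num, hf.eq_zero_iff]
  | cons i a s _ ha _ _ iha ihs =>
    rw [mapNum_cons_psi hf, legal_cons, legal_cons, tail_psi_mapNum hf π i ha, Legal, Legal, iha,
      ihs]

theorem Legal.of_hd_ne_one {π π' : Slot} {t : Tm} (h : Legal π t) (ht : Low t)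
    (h1 : hd t ≠ Tm.one) (hout : π.outer = π'.outer) (hpsi : π.psiOneOne = π'.psiOneOne) :
    Legal π' t := by
  have hpsi_congr i b : Legal π (psi i b) → Legal π' (psi i b) := by
    cases i <;> simp [Legal, Slot.arg, hpsi]
  cases t with
  | zero => trivial
  | one => simp at h1
  | psi i b => exact hpsi_congr i b h
  | add c t =>
    refine ⟨?_, by simpa [Slot.tail, hout] using h.2⟩
    have hc := ht.1
    cases c with
    | zero | add => simp at hc
    | one => simp at h1
    | psi i b => exact hpsi_congr i b h.1

/-! ### Hardy indices -/

@[simp]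
theorem G1_zero : G1 zero = ∅ := by simp only [G1]

@[simp]
theorem G1_one : G1 one = ∅ := by simp only [G1]

@[simp]
theorem G1_psi_zero (b : Tm) : G1 (psi 0 b) = ∅ := by simp only [G1]

@[simp]
theorem G1_psi_one (b : Tm) : G1 (psi 1 b) = insert b (G1 b) := by simp only [G1]

@[simp]
theorem G1_add (a b : Tm) : G1 (add a b) = G1 a ∪ G1 b := by simp only [G1]

theorem Low.mem_G1_induction {P : Tm → Prop} {γ b : Tm} (hb : Low b) (hγ : γ ∈ G1 b)
    (arg : ∀ c, Low c → γ = c ∨ P c → P (psi 1 c))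
    (left : ∀ c t, Low (Tm.add c t) → P c → P (Tm.add c t))
    (right : ∀ c t, Low (Tm.add c t) → P t → P (Tm.add c t)) : P b := by
  induction b with
  | zero => simp at hγ
  | one => simp at hγ
  | psi i b ih =>
    obtain ⟨hi, hb⟩ := hb
    interval_cases i
    · simp at hγ
    · rw [G1_psi_one, Finset.mem_insert] at hγ
      exact arg b hb (hγ.imp_right (ih hb))
  | add c t ihc iht =>
    rw [G1_add, Finset.mem_union] at hγ
    rcases hγ with hγ | hγ
    · exact left c t hb (ihc hb.2.1 hγ)
    · exact right c t hb (iht hb.2.2.1 hγ)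

theorem low_of_mem_G1 {γ b : Tm} (hb : Low b) (hγ : γ ∈ G1 b) : Low γ := by
  refine hb.mem_G1_induction (P := fun _ => Low γ) hγ ?_ (fun _ _ _ => id) (fun _ _ _ => id)
  rintro c hc (rfl | h)
  exacts [hc, h]

theorem lt_psi_one_self {t : Tm} (ht : Low t) : t < psi 1 t := by
  induction ht using Low.consRec with
  | num n => exact num_lt_psi n 1 _
  | cons i a s hi ha hs hle iha =>
    rw [lt_psi_iff_hd_lt, hd_cons _ _ (isPrincipal_psi i a), psi_lt_psi]
    rcases hi.lt_or_eq with hi | rfl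
    · exact Or.inl hi
    · refine Or.inr ⟨rfl, iha.trans_le ?_⟩
      have hle_cons := ((low_cons (isPrincipal_psi 1 a)).2 ⟨⟨hi, ha⟩, hs, hle⟩).hd_le
      rwa [hd_cons _ _ (isPrincipal_psi 1 a)] at hle_cons

theorem lt_of_mem_G1 {γ b : Tm} (hb : Low b) (hγ : γ ∈ G1 b) : γ < b := by
  refine hb.mem_G1_induction (P := (γ < ·)) hγ ?_ ?_ ?_
  · rintro c hc (rfl | h)
    exacts [lt_psi_one_self hc, h.trans (lt_psi_one_self hc)]
  · exact fun c t h hlt => hlt.trans ((IsPrincipal.lt_add_iff h.1).2 le_rfl)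
  · exact fun c t h hlt => hlt.trans h.tail_lt

theorem isBelowOmega_hd_iff_lt {t : Tm} (ht : Low t) :
    isBelowOmega (hd t) = true ↔ t < psi 1 zero := by
  rcases ht.eq_num_or_cons with ⟨n, rfl⟩ | ⟨i, a, s, rfl, hi, -⟩
  · exact iff_of_true (isBelowOmega_hd_num n) (num_lt_psi n 1 zero)
  · rw [lt_psi_iff_hd_lt, hd_cons _ _ (isPrincipal_psi i a)]
    interval_cases i <;> simp [isBelowOmega]

theorem isBelowOmega_hd_of_le {s t : Tm} (hs : Low s) (ht : Low t) (hle : s ≤ t)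
    (h : isBelowOmega (hd t) = true) : isBelowOmega (hd s) = true :=
  (isBelowOmega_hd_iff_lt hs).2 (hle.trans_lt ((isBelowOmega_hd_iff_lt ht).1 h))

theorem isBelowOmega_hd_of_hd_le {s p : Tm} (hs : Low s) (hp : Low p) (hle : hd s ≤ p)
    (h : isBelowOmega (hd p) = true) : isBelowOmega (hd s) = true := by
  rw [isBelowOmega_hd_iff_lt hp] at h
  rw [isBelowOmega_hd_iff_lt hs, lt_psi_iff_hd_lt]
  exact hle.trans_lt h

theorem isBelowOmega_hd_of_mem_G1 {γ b : Tm} (hb : Low b) (hγ : γ ∈ G1 b) :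
    isBelowOmega (hd b) = false := by
  refine hb.mem_G1_induction (P := fun b => isBelowOmega (hd b) = false) hγ (fun _ _ _ => rfl)
    (fun c t h hc => by rwa [hd_add, ← h.1.hd_eq]) fun c t h ht => ?_
  by_contra hc
  rw [Bool.not_eq_false, hd_add, ← h.1.hd_eq] at hc
  exact Bool.false_ne_true (ht.symm.trans
    (isBelowOmega_hd_of_hd_le h.2.2.1 h.2.1 h.2.2.2.2 hc))

theorem mem_G1_of_hd_eq_psi_one {b c : Tm} (h : hd b = psi 1 c) : c ∈ G1 b := by
  cases b with
  | zero | one => simp at h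
  | psi i d =>
    obtain ⟨rfl, rfl⟩ : i = 1 ∧ d = c := by simpa using h
    simp
  | add d e =>
    obtain rfl : d = psi 1 c := h
    simp

theorem low_hd {t : Tm} (ht : Low t) : Low (hd t) := by
  cases t with
  | add c t => exact ht.2.1
  | _ => exact ht

theorem Legal.head {π : Slot} {t : Tm} (h : Legal π t) : Legal π (hd t) := by
  cases t with
  | add c t => exact h.1
  | _ => exact h

theorem Legal.one_of_hd_eq {π : Slot} {t : Tm} (h : Legal π t) (h1 : hd t = Tm.one) :
    π.one = true := by
  have h' := h.head
  rwa [h1] at h'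

theorem Legal.psiOneOne_of_hd_eq {π : Slot} {t c : Tm} (h : Legal π t) (ht : hd t = psi 1 c)
    (hc : hd c = one) : π.psiOneOne = true := by
  have h' := h.head
  rw [ht] at h'
  exact Legal.one_of_hd_eq (π := π.arg 1) h' hc

theorem legal_of_mem_G1 {γ b : Tm} (hb : Low b) (hγ : γ ∈ G1 b) {u : Bool}
    (h : Legal ⟨false, u, false⟩ b) : Legal ⟨false, false, false⟩ γ := by
  refine hb.mem_G1_induction
    (P := fun b => ∀ u, Legal ⟨false, u, false⟩ b → Legal ⟨false, false, false⟩ γ) hγ ?_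
    (fun c t _ ih u h => ih u h.1) (fun c t _ ih u h => ih _ h.2) u h
  rintro c - (rfl | ih) u h
  exacts [h, ih _ h]

theorem legal_of_mem_G0 {π : Slot} {γ b : Tm} (hb : Low b) (h : Legal π b) (hγ : γ ∈ G0 b) :
    Legal .top γ := by
  induction b generalizing π with
  | zero | one => simp at hγ
  | psi i b ih =>
    obtain ⟨hi, hb⟩ := hb
    interval_cases i
    · rw [G0_psi_zero, Finset.mem_insert] at hγ
      rcases hγ with rfl | hγ
      exacts [h, ih hb h hγ]
    · rw [G0_psi_one] at hγ
      exact ih hb h hγ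
  | add c t ihc iht =>
    rw [G0_add, Finset.mem_union] at hγ
    rcases hγ with hγ | hγ
    exacts [ihc hb.2.1 h.1 hγ, iht hb.2.2.1 h.2 hγ]

theorem tlt_cons {a b s t : Tm} (ha : IsPrincipal a) (hb : IsPrincipal b)
    (h : TLt a b ∨ (a = b ∧ TLt s t)) : TLt (cons a s) (cons b t) := by
  have hd_cons_a := hd_cons a s ha
  have hd_cons_b := hd_cons b t hb
  have isAdd_cons : ∀ {c r : Tm}, r ≠ zero → isAdd (cons c r) := fun {c r} h0 => by
    rw [cons_of_ne_zero c h0]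
    trivial
  rcases h with h | ⟨rfl, h⟩
  · by_cases hs : s = zero
    · by_cases ht : t = zero
      · rwa [hs, ht, cons_zero, cons_zero]
      · exact .lex_hd (Or.inr (isAdd_cons ht)) (by rwa [hd_cons_a, hd_cons_b])
    · exact .lex_hd (Or.inl (isAdd_cons hs)) (by rwa [hd_cons_a, hd_cons_b])
  · have tl_cons : ∀ r, tl (cons a r) = r := fun r => by
      unfold cons
      split_ifs with hr
      · cases a <;> simp_all [tl]
      · rfl
    have ht : t ≠ zero := by
      rintro rfl
      exact not_lt_zero _ (lt_of_tlt h)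
    exact .lex_tl (Or.inr (isAdd_cons ht)) (hd_cons_a.trans hd_cons_b.symm)
      (by rwa [tl_cons, tl_cons])

theorem tlt_num {n m : ℕ} (h : n < m) : TLt (num n) (num m) := by
  induction n generalizing m with
  | zero => exact .zero_lt (num_ne_zero (by omega))
  | succ n ih =>
    obtain ⟨m, rfl⟩ := Nat.exists_eq_succ_of_ne_zero (Nat.ne_of_gt (Nat.zero_lt_of_lt h))
    exact tlt_cons isPrincipal_one isPrincipal_one (Or.inr ⟨rfl, ih (by omega)⟩)

/-- The condition on the first summands of `a` and `b` under which `a < b` in the total order can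
only hold if `TLt a b` does: a leading `1` of `a` is not compared to a `ψ₁`, neither directly nor
inside a `ψ₁`. -/
def LeadComparable (a b : Tm) : Prop :=
  (hd a = one → isBelowOmega (hd b) = true) ∧
    ∀ c d, hd a = psi 1 c → hd c = one → hd b = psi 1 d → isBelowOmega (hd d) = true

theorem Legal.leadComparable {w : Bool} {a : Tm} (h : Legal ⟨w, false, false⟩ a) (b : Tm) :
    LeadComparable a b :=
  ⟨fun h1 => absurd (h.one_of_hd_eq h1) Bool.false_ne_true,
    fun _ _ h1 h2 => absurd (h.psiOneOne_of_hd_eq h1 h2) Bool.false_ne_true⟩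

theorem Legal.leadComparable_of_tail {π : Slot} {p s t : Tm} (h : Legal (π.tail p) s)
    (hp : IsPrincipal p) (hlp : Low p) (ht : Low t) (hle : hd t ≤ p) : LeadComparable s t := by
  refine ⟨fun h1 => ?_, fun c d hs hc hd_t => ?_⟩
  · refine isBelowOmega_hd_of_hd_le ht hlp hle ?_
    rw [hp.hd_eq]
    exact h.one_of_hd_eq h1
  · have hp1 : isPsiOneBelowOmega p = true :=
      (Bool.and_eq_true_iff.1 (h.psiOneOne_of_hd_eq hs hc)).2
    have hld := low_hd ht
    rw [hd_t] at hle hld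
    cases p with
    | zero | add => simp at hp
    | one => simp [isPsiOneBelowOmega] at hp1
    | psi i e =>
      obtain ⟨hi, he⟩ := hlp
      interval_cases i
      · simp [isPsiOneBelowOmega] at hp1
      · exact isBelowOmega_hd_of_le hld.2 he (by simpa using hle) hp1

theorem tlt_of_lt {π : Slot} {a b : Tm} (ha : Low a) (hb : Low b) (h : Legal π a) (hab : a < b)
    (hlead : LeadComparable a b) : TLt a b := by
  induction ha using Low.consRec generalizing b π with
  | num n =>
    rcases n.eq_zero_or_pos with rfl | hn
    · exact .zero_lt ((zero_lt b).1 hab)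
    rcases hb.eq_num_or_cons with ⟨m, rfl⟩ | ⟨j, b, t, rfl, hj, -⟩
    · exact tlt_num ((rep_strictMono isPrincipal_one).lt_iff_lt.1 hab)
    · have hbelow := hlead.1 (by rw [hd_rep isPrincipal_one, if_neg hn.ne'])
      rw [hd_cons _ _ (isPrincipal_psi j b)] at hbelow
      obtain ⟨n, rfl⟩ := Nat.exists_eq_succ_of_ne_zero hn.ne'
      interval_cases j
      · exact tlt_cons isPrincipal_one (isPrincipal_psi 0 b) (Or.inl .one_lt_psi0)
      · exact absurd hbelow Bool.false_ne_true
  | cons i a s hi ha _ hle iha ihs =>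
    rcases hb.eq_num_or_cons with ⟨m, rfl⟩ | ⟨j, b, t, rfl, -, hb', ht, hle'⟩
    · exact absurd hab (num_lt_cons_psi m i a s).asymm
    have hpa := isPrincipal_psi i a
    have hpb := isPrincipal_psi j b
    rw [LeadComparable, hd_cons _ _ hpa, hd_cons _ _ hpb] at hlead
    rw [cons_lt_cons hpa hpb, psi_lt_psi] at hab
    rw [legal_cons] at h
    refine tlt_cons hpa hpb ?_
    rcases hab with (hij | ⟨rfl, hab⟩) | ⟨heq, hst⟩
    · exact Or.inl (.psi_lt hij)
    · refine Or.inl (.psi_mono (iha hb' h.1 hab ?_))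
      interval_cases i
      · exact Legal.leadComparable h.1 b
      · exact ⟨fun h1 => hlead.2 a b rfl h1 rfl, fun c d hc hc1 =>
          absurd (Legal.psiOneOne_of_hd_eq (π := π.arg 1) h.1 hc hc1) Bool.false_ne_true⟩
    · obtain ⟨rfl, rfl⟩ : i = j ∧ a = b := by simpa using heq
      exact Or.inr ⟨rfl, ihs ht h.2 hst (h.2.leadComparable_of_tail hpa ⟨hi, ha⟩ ht hle')⟩

theorem Legal.tlt_Omega2 {w : Bool} {a : Tm} (ha : Low a) (h : Legal ⟨w, false, false⟩ a) :
    TLt a (psi 1 Omega2T) ∧ TLt a Omega2T := by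
  rcases ha.eq_num_or_cons with ⟨n, rfl⟩ | ⟨i, a, s, rfl, hi, hla, -⟩
  · obtain rfl : n = 0 := (legal_num.1 h).resolve_right Bool.false_ne_true
    exact ⟨.zero_lt (by simp), .zero_lt (by simp [Omega2T])⟩
  have tlt_of_head : ∀ {p : Tm}, IsPrincipal p → TLt (psi i a) p → TLt (cons (psi i a) s) p :=
    fun {p} hp hlt => cons_zero p ▸ tlt_cons (isPrincipal_psi i a) hp (Or.inl hlt)
  have hpsi (b : Tm) : IsPrincipal (psi 1 b) := isPrincipal_psi 1 b
  have hpO : IsPrincipal Omega2T := isPrincipal_psi 2 zero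
  refine ⟨tlt_of_head (hpsi _) ?_, tlt_of_head hpO (.psi_lt (by omega))⟩
  interval_cases i
  · exact .psi_lt zero_lt_one
  refine .psi_mono ?_
  rcases hla.eq_num_or_cons with ⟨n, rfl⟩ | ⟨j, b, t, rfl, hj, -⟩
  · obtain rfl : n = 0 := (legal_num.1 (legal_cons.1 h).1).resolve_right Bool.false_ne_true
    exact .zero_lt (by simp [Omega2T])
  · exact cons_zero Omega2T ▸ tlt_cons (isPrincipal_psi j b) hpO (Or.inl (.psi_lt (by omega)))

theorem inT_num (n : ℕ) : InT (num n) ∧ InOT (num n) := by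
  induction n with
  | zero => exact ⟨.zero, .zero⟩
  | succ n ih =>
    rw [num, rep_succ]
    rcases n.eq_zero_or_pos with rfl | hn
    · exact ⟨.one, .one⟩
    · have h0 : num n ≠ zero := num_ne_zero hn.ne'
      have hT : InT (add one (num n)) := .add trivial .one ih.1 h0 <|
        Or.inr (by rw [hd_rep isPrincipal_one, if_neg hn.ne'])
      rw [cons_of_ne_zero _ h0]
      exact ⟨hT, .add hT .one ih.2⟩

theorem inOT_psi {π : Slot} {i : ℕ} {a : Tm} (ha : IsOT (psi i a)) (h : Legal π (psi i a))
    (hOT : InT a ∧ InOT a) : InT (psi i a) ∧ InOT (psi i a) := by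
  have hi : i ≤ 1 := ha.low.1
  have hla : Low a := ha.low.2
  refine ⟨.psi (by omega) hOT.1, ?_⟩
  interval_cases i
  · refine .psi0 hOT.2 (fun γ hγ => ?_) (Legal.tlt_Omega2 hla h).2
    have hγ_legal := legal_of_mem_G0 hla h hγ
    exact tlt_of_lt (low_of_mem_G0 hla hγ) hla hγ_legal ((isOT_psi_zero.1 ha).2 γ hγ)
      (hγ_legal.leadComparable a)
  · refine .psi1 hOT.2 fun γ hγ => ?_
    have hγ_legal := legal_of_mem_G1 hla hγ h
    exact tlt_of_lt (low_of_mem_G1 hla hγ) hla hγ_legal (lt_of_mem_G1 hla hγ)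
      (hγ_legal.leadComparable a)

theorem Legal.tle_hd {π : Slot} {p s : Tm} (hp : IsPrincipal p) (hlp : Low p) (hs : Low s)
    (hle : hd s ≤ p) (h : Legal (π.tail p) s) : TLe (hd s) p := by
  rcases hle.lt_or_eq with hlt | heq
  · exact Or.inl (tlt_of_lt (low_hd hs) hlp h.head hlt
      (h.head.leadComparable_of_tail hp hlp hlp hp.hd_eq.le))
  · exact Or.inr heq

theorem IsOT.inOT {π : Slot} {a : Tm} (ha : IsOT a) (h : Legal π a) : InT a ∧ InOT a := by
  have hla := ha.low
  induction hla using Low.consRec generalizing π with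
  | num n => exact inT_num n
  | cons i a s hi hla hs hle iha ihs =>
    obtain ⟨hpsi, hsO, -⟩ := (isOT_cons (isPrincipal_psi i a)).1 ha
    rw [legal_cons] at h
    have hp := inOT_psi hpsi h.1 (iha hpsi.of_psi h.1)
    have ht := ihs hsO h.2
    by_cases h0 : s = Tm.zero
    · rwa [h0, cons_zero]
    · have hT : InT (Tm.add (psi i a) s) := .add trivial hp.1 ht.1 h0
        (h.2.tle_hd (isPrincipal_psi i a) ⟨hi, hla⟩ hs hle)
      rw [cons_of_ne_zero _ h0]
      exact ⟨hT, .add hT hp.2 ht.2⟩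

/-- The indices of the Hardy hierarchy: countable ordinal terms with all numerals in admitted
positions. By `hardyIndex_iff` these are the elements of `OT₀` below `Ω`. -/
def HardyIndex (a : Tm) : Prop := CountableOT a ∧ Legal .top a

theorem HardyIndex.low {a : Tm} (h : HardyIndex a) : Low a := h.1.low

theorem HardyIndex.tlt {a b : Tm} (ha : HardyIndex a) (hb : Low b) (hab : a < b) : TLt a b :=
  tlt_of_lt ha.low hb ha.2 hab (Legal.leadComparable ha.2 b)

theorem HardyIndex.tlt_iff {a b : Tm} (ha : HardyIndex a) (hb : HardyIndex b) :
    TLt a b ↔ a < b :=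
  ⟨lt_of_tlt, ha.tlt hb.low⟩

theorem HardyIndex.inOT0 {a : Tm} (h : HardyIndex a) : InOT0 a :=
  ⟨(h.1.1.inOT h.2).2, (Legal.tlt_Omega2 h.low h.2).1, fun _ hγ =>
    (Legal.tlt_Omega2 (low_of_mem_G0 h.low hγ) (legal_of_mem_G0 h.low h.2 hγ)).1⟩

theorem isPrincipal_of_inT_add {c t : Tm} (h : InT (add c t)) :
    IsPrincipal c ∧ t ≠ zero ∧ TLe (hd t) c := by
  cases h with
  | add hc _ _ h0 hle => exact ⟨hc, h0, hle⟩

theorem le_of_tle {a b : Tm} (h : TLe a b) : a ≤ b := h.elim (fun h => (lt_of_tlt h).le) Eq.le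

theorem lt_Omega2_of_mem_G1 {b γ : Tm} (h : InOT b) (hb : b < psi 1 Omega2T) (hγ : γ ∈ G1 b) :
    γ < Omega2T := by
  induction h with
  | zero | one | psi0 => simp at hγ
  | psi2 => simp at hb
  | @psi1 b _ hG =>
    have hb : b < Omega2T := by simpa using hb
    rw [G1_psi_one, Finset.mem_insert] at hγ
    rcases hγ with rfl | hγ
    exacts [hb, (lt_of_tlt (hG γ hγ)).trans hb]
  | @add c t hT _ _ ihc iht =>
    have hc : c < psi 1 Omega2T := by rwa [lt_psi_iff_hd_lt] at hb
    rw [G1_add, Finset.mem_union] at hγ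
    rcases hγ with hγ | hγ
    · exact ihc hc hγ
    · refine iht ?_ hγ
      rw [lt_psi_iff_hd_lt]
      exact (le_of_tle (isPrincipal_of_inT_add hT).2.2).trans_lt hc

theorem isOT_of_inOT {a : Tm} (h : InOT a) (ha : a < Omega2T) (hG1 : ∀ γ ∈ G1 a, γ < Omega2T)
    (hG0 : ∀ γ ∈ G0 a, γ < psi 1 Omega2T) : IsOT a := by
  induction h with
  | zero => exact isOT_zero
  | one => exact isOT_one
  | psi2 => simp [Omega2T] at ha
  | @psi0 b hb hG _ ih =>
    simp only [G0_psi_zero, Finset.mem_insert, forall_eq_or_imp] at hG0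
    exact isOT_psi_zero.2 ⟨ih (hG0.1.trans (by simp [Omega2T]))
      (fun γ => lt_Omega2_of_mem_G1 hb hG0.1) hG0.2, fun γ hγ => lt_of_tlt (hG γ hγ)⟩
  | @psi1 b _ _ ih =>
    simp only [G1_psi_one, Finset.mem_insert, forall_eq_or_imp] at hG1
    rw [G0_psi_one] at hG0
    exact isOT_psi_one.2 (ih hG1.1 hG1.2 hG0)
  | @add c t hT _ _ ihc iht =>
    obtain ⟨hp, h0, hle⟩ := isPrincipal_of_inT_add hT
    have hle := le_of_tle hle
    have hc : c < Omega2T := by rwa [Omega2T, lt_psi_iff_hd_lt] at ha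
    have ht : t < Omega2T := by
      rw [Omega2T, lt_psi_iff_hd_lt]
      exact hle.trans_lt hc
    simp only [G1_add, G0_add, Finset.mem_union, or_imp, forall_and] at hG1 hG0
    exact isOT_add.2 ⟨hp, ihc hc hG1.1 hG0.1, iht ht hG1.2 hG0.2, h0, hle⟩

theorem tle_hd_of_tlt {a b : Tm} (h : TLt a b) (ha : a ≠ zero) : TLe (hd a) (hd b) := by
  cases h with
  | zero_lt => exact absurd rfl ha
  | one_lt_psi0 => exact Or.inl .one_lt_psi0
  | psi_mono h => exact Or.inl (.psi_mono h)
  | psi_lt h => exact Or.inl (.psi_lt h)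
  | lex_hd _ h => exact Or.inl h
  | lex_tl _ h => exact Or.inr h

theorem isBelowOmega_of_one_tle {p : Tm} (h : TLe one p) : isBelowOmega p = true := by
  rcases h with h | rfl
  · cases p with
    | psi i b =>
      cases h with
      | one_lt_psi0 => rfl
      | lex_hd h | lex_tl h => simp [isAdd] at h
    | _ => rfl
  · rfl

theorem isBelowOmega_hd_of_tlt {a b : Tm} (h : TLt a b) (ha : hd a = one) :
    isBelowOmega (hd b) = true := by
  refine isBelowOmega_of_one_tle (ha ▸ tle_hd_of_tlt h ?_)
  rintro rfl
  simp at ha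

theorem isBelowOmega_hd_of_psi_one_tle {c d : Tm} (h : TLe (psi 1 c) (psi 1 d))
    (hc : hd c = one) : isBelowOmega (hd d) = true := by
  rcases h with h | h
  · cases h with
    | psi_mono h => exact isBelowOmega_hd_of_tlt h hc
    | psi_lt h => exact absurd h (lt_irrefl 1)
    | lex_hd h | lex_tl h => simp [isAdd] at h
  · obtain rfl : c = d := by simpa using h
    rw [hc]
    rfl

theorem isPsiOneBelowOmega_of_psi_one_tle {c p : Tm} (hp : IsPrincipal p) (hlp : Low p)
    (h : TLe (psi 1 c) p) (hc : hd c = one) : isPsiOneBelowOmega p = true := by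
  have hle := le_of_tle h
  cases p with
  | zero | add => simp at hp
  | one => simp at hle
  | psi i e =>
    have hi : i ≤ 1 := hlp.1
    interval_cases i
    · simp at hle
    · exact isBelowOmega_hd_of_psi_one_tle h hc

theorem hd_ne_one_of_tlt_psi_one_Omega2 {b : Tm} (h : TLt b (psi 1 Omega2T)) :
    hd b ≠ one ∧ ∀ c, hd b = psi 1 c → hd c ≠ one := by
  refine ⟨fun h1 => Bool.false_ne_true (isBelowOmega_hd_of_tlt h h1), fun c hb hc => ?_⟩
  have h0 : b ≠ zero := by
    rintro rfl
    simp at hb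
  have hle : TLe (psi 1 c) (psi 1 Omega2T) := hb ▸ tle_hd_of_tlt h h0
  exact Bool.false_ne_true (isBelowOmega_hd_of_psi_one_tle hle hc)

theorem legal_of_inOT {π : Slot} {a : Tm} (h : InOT a) (ha : Low a)
    (hG0 : ∀ γ ∈ G0 a, TLt γ (psi 1 Omega2T)) (hone : hd a = one → π.one = true)
    (hpsi : ∀ c, hd a = psi 1 c → hd c = one → π.psiOneOne = true)
    (hG1 : π.outer = false → ∀ γ ∈ G1 a, hd γ ≠ one) : Legal π a := by
  induction h generalizing π with
  | zero => trivial
  | one => exact hone rfl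
  | psi2 => simp at ha
  | @psi0 b _ _ _ ih =>
    simp only [G0_psi_zero, Finset.mem_insert, forall_eq_or_imp] at hG0
    obtain ⟨hb1, hb2⟩ := hd_ne_one_of_tlt_psi_one_Omega2 hG0.1
    exact ih (π := .top) ha.2 hG0.2 (fun h => absurd h hb1) (fun c h h' => absurd h' (hb2 c h))
      (fun h => absurd h.symm Bool.false_ne_true)
  | @psi1 b _ hG ih =>
    rw [G0_psi_one] at hG0
    have hG1b : ∀ γ ∈ G1 b, hd γ ≠ one := fun γ hγ h1 => Bool.false_ne_true <|
      (isBelowOmega_hd_of_mem_G1 ha.2 hγ).symm.trans (isBelowOmega_hd_of_tlt (hG γ hγ) h1)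
    exact ih (π := π.arg 1) ha.2 hG0 (hpsi b rfl)
      (fun c h h' => absurd h' (hG1b c (mem_G1_of_hd_eq_psi_one h))) fun _ => hG1b
  | @add c t hT _ _ ihc iht =>
    simp only [G1_add, G0_add, Finset.mem_union, or_imp, forall_and] at hG1 hG0
    have hcc : hd c = c := ha.1.hd_eq
    have hle : TLe (hd t) c := (isPrincipal_of_inT_add hT).2.2
    refine ⟨ihc ha.2.1 hG0.1 (by rwa [hcc]) (by rwa [hcc]) hG1.1,
      iht ha.2.2.1 hG0.2 (fun h => isBelowOmega_of_one_tle (h ▸ hle)) (fun d hd_t hd1 => ?_)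
        hG1.2⟩
    have hout : π.outer = true := by
      by_contra hout
      exact hG1.2 (Bool.not_eq_true _ ▸ hout) d (mem_G1_of_hd_eq_psi_one hd_t) hd1
    exact Bool.and_eq_true_iff.2
      ⟨hout, isPsiOneBelowOmega_of_psi_one_tle ha.1 ha.2.1 (hd_t ▸ hle) hd1⟩

theorem hardyIndex_iff {a : Tm} : HardyIndex a ↔ InOT0 a ∧ TLt a OmegaT := by
  refine ⟨fun h => ⟨h.inOT0, h.tlt ⟨le_rfl, trivial⟩ h.1.2⟩, ?_⟩
  rintro ⟨⟨hOT, hlt, hG0⟩, hΩ⟩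
  have hltΩ : a < psi 1 zero := lt_of_tlt hΩ
  have ha : IsOT a := isOT_of_inOT hOT (hltΩ.trans (by simp [Omega2T]))
    (fun γ => lt_Omega2_of_mem_G1 hOT (lt_of_tlt hlt)) fun γ hγ => lt_of_tlt (hG0 γ hγ)
  obtain ⟨hone, hpsi⟩ := hd_ne_one_of_tlt_psi_one_Omega2 hlt
  exact ⟨⟨ha, hltΩ⟩, legal_of_inOT hOT ha.low hG0 (fun h => absurd h hone)
    (fun c h h' => absurd h' (hpsi c h)) (fun h => absurd h.symm Bool.false_ne_true)⟩

/-! ### Limits of multiples -/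

/-- The limit terms whose innermost fundamental sequence consists of the multiples
`ψᵢ(ν[0])·n` for a successor `ν`. -/
inductive MultLimit : Tm → Prop
  | base (i : ℕ) (ν : Tm) : kind ν = 1 → MultLimit (psi i ν)
  | add (c t : Tm) : MultLimit t → MultLimit (add c t)
  | psi (i : ℕ) (e : Tm) : MultLimit e → MultLimit (psi i e)

theorem MultLimit.kind_eq_two {l : Tm} (h : MultLimit l) : kind l = 2 := by
  induction h with
  | base i ν h => exact kind_psi_of_kind_one h
  | add _ _ _ ih => exact ih
  | psi i e _ ih => exact kind_psi_of_kind_two ih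

theorem MultLimit.ne_zero {l : Tm} (h : MultLimit l) : l ≠ Tm.zero :=
  ne_zero_of_kind_pos (by rw [h.kind_eq_two]; exact two_pos)

theorem fs_psi_num_one {i : ℕ} {ν : Tm} (h : kind ν = 1) :
    fs (psi i ν) (num 1) = psi i (fs ν zero) := by
  rw [fs_psi_of_kind_one h, tmToNat_num, rep_succ, rep_zero, cons_zero]

theorem lt_rep_of_normN_lt {p a : Tm} {n : ℕ} (hp : IsPrincipal p) (ha : Low a) (hle : hd a ≤ p)
    (hn : normN a < n) : a < rep p n := by
  induction n generalizing a with
  | zero => omega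
  | succ n ih =>
    rw [rep_succ]
    by_cases h0 : a = zero
    · simp [h0, cons_ne_zero hp]
    obtain ⟨b, t, rfl, hb, hlb, hlt, htb⟩ := ha.exists_cons h0
    rw [hd_cons _ _ hb] at hle
    rw [normN_cons] at hn
    have hpos := normN_pos hb.ne_zero hlb
    rw [cons_lt_cons hb hp]
    exact (lt_or_eq_of_le hle).imp_right fun hbp => ⟨hbp, ih hlt (hbp ▸ htb) (by omega)⟩

theorem hd_le_psi_fs {i : ℕ} {ν a : Tm} (hν : Low ν) (hk : kind ν = 1) (ha : Low a)
    (hlt : a < psi i ν) : hd a ≤ psi i (fs ν zero) := by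
  by_cases h0 : a = zero
  · simp [h0]
  rw [lt_psi_iff_hd_lt] at hlt
  have hp := ha.isPrincipal_hd h0
  have hlow := low_hd ha
  generalize hd a = b at hlt hp hlow ⊢
  cases b with
  | zero | add => exact absurd hp id
  | one => exact one_le_psi _ _
  | psi j d =>
    rw [psi_lt_psi] at hlt
    rw [psi_le_psi]
    exact hlt.imp_right fun h => ⟨h.1, le_fs_of_lt hν hlow.2 hk h.2⟩

theorem MultLimit.lt_fs_num {l a : Tm} {n : ℕ} (h : MultLimit l) (hl : Low l) (ha : Low a)
    (hlt : a < l) (hn : normN a < n) : a < fs l (num n) := by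
  induction h generalizing a with
  | base i ν hk =>
    rw [fs_psi_of_kind_one hk, tmToNat_num]
    exact lt_rep_of_normN_lt (isPrincipal_psi _ _) ha (hd_le_psi_fs hl.2 hk ha hlt) hn
  | add c t _ ih =>
    have hc := hl.1
    rw [fs_add]
    by_cases h0 : a = Tm.zero
    · simp [h0, cons_ne_zero hc]
    obtain ⟨b, s, rfl, hb, hlb, hls, -⟩ := ha.exists_cons h0
    rw [hl.add_eq_cons, cons_lt_cons hb hc] at hlt
    rw [normN_cons] at hn
    rw [cons_lt_cons hb hc]
    exact hlt.imp_right fun ⟨hbc, hst⟩ => ⟨hbc, ih hl.2.2.1 hls hst (by omega)⟩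
  | psi i e h ih =>
    rw [fs_psi_of_kind_two h.kind_eq_two]
    by_contra hge
    obtain ⟨d, s, rfl, hed, hde⟩ := exists_cons_psi_of_le_of_lt ha (not_lt.1 hge) hlt
    rw [low_cons (isPrincipal_psi _ _)] at ha
    rw [normN_cons, normN] at hn
    exact absurd (ih hl.2 ha.1.2 hde (by omega)) hed.not_gt

theorem G0_fs_of_kind_one {ν : Tm} (h : kind ν = 1) : G0 (fs ν zero) = G0 ν := by
  induction ν with
  | zero | one => simp
  | psi i a =>
    have := two_le_kind_psi i a
    omega
  | add c t _ ih => rw [fs_add, G0_cons, ih h, G0_add]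

theorem mem_G0_psi_fs_of_kind_one {i : ℕ} {ν γ : Tm} (hi : i ≤ 1) (hk : kind ν = 1)
    (hγ : γ ∈ G0 (psi i ν)) : γ ∈ G0 (fs (psi i ν) (num 1)) ∨
      (kind γ = 1 ∧ fs γ zero ∈ G0 (fs (psi i ν) (num 1))) := by
  rw [fs_psi_num_one hk]
  simp only [mem_G0_psi hi, G0_fs_of_kind_one hk] at hγ ⊢
  rcases hγ with ⟨rfl, rfl⟩ | hγ
  · exact Or.inr ⟨hk, Or.inl ⟨rfl, rfl⟩⟩
  · exact Or.inl (Or.inr hγ)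

theorem MultLimit.mem_G0_fs {e γ : Tm} (h : MultLimit e) (he : Low e) (hγ : γ ∈ G0 e) :
    γ ∈ G0 (fs e (num 1)) ∨ (kind γ = 1 ∧ fs γ Tm.zero ∈ G0 (fs e (num 1))) ∨
      (MultLimit γ ∧ ∀ n, fs γ (num n) ∈ G0 (fs e (num n))) := by
  induction h with
  | base i ν hk => exact (mem_G0_psi_fs_of_kind_one he.1 hk hγ).imp_right Or.inl
  | add c t _ ih =>
    simp only [fs_add, G0_cons, Finset.mem_union]
    rcases Finset.mem_union.1 (G0_add c t ▸ hγ) with hγ | hγ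
    · exact Or.inl (Or.inl hγ)
    · exact (ih he.2.2.1 hγ).imp Or.inr
        (Or.imp (And.imp_right Or.inr) (And.imp_right fun h n => Or.inr (h n)))
  | psi i e h ih =>
    simp only [fs_psi_of_kind_two h.kind_eq_two, mem_G0_psi he.1] at hγ ⊢
    rcases hγ with ⟨rfl, rfl⟩ | hγ
    · exact Or.inr (Or.inr ⟨h, fun n => Or.inl ⟨rfl, rfl⟩⟩)
    · exact (ih he.2 hγ).imp Or.inr
        (Or.imp (And.imp_right Or.inr) (And.imp_right fun h n => Or.inr (h n)))

theorem MultLimit.lt_of_mem_G0 {e γ : Tm} (h : MultLimit e) (he : Low e) (hγ : γ ∈ G0 e)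
    (hG : ∀ δ ∈ G0 (fs e (num 1)), δ < fs e (num 1))
    (hcases : γ ∈ G0 (fs e (num 1)) ∨ (kind γ = 1 ∧ fs γ Tm.zero ∈ G0 (fs e (num 1))) ∨
      (MultLimit γ ∧ fs γ (num (normN e + 1)) ≤ e)) : γ < e := by
  have hlow := low_of_mem_G0 he hγ
  have hlt : fs e (num 1) < e := fs_lt he (admissible_num _ _) h.ne_zero
  rcases hcases with hγ | ⟨hk, hγ⟩ | ⟨hγm, hle⟩
  · exact (hG γ hγ).trans hlt
  · by_contra hge
    have := le_fs_of_lt hlow (low_fs he (admissible_num _ _)) hk (hlt.trans_le (not_lt.1 hge))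
    exact absurd (hG _ hγ) this.not_gt
  · by_contra hge
    rcases lt_or_eq_of_le (not_lt.1 hge) with heγ | rfl
    · exact absurd (hγm.lt_fs_num hlow he heγ (Nat.lt_succ_self _)) hle.not_gt
    · exact absurd (normN_lt_of_mem_G0 he hγ) (lt_irrefl _)

theorem MultLimit.isOT {e : Tm} (h : MultLimit e) (he : Low e)
    (hOT : ∀ n, IsOT (fs e (num n))) : IsOT e := by
  induction h with
  | base i ν hk =>
    obtain ⟨hi, hν⟩ := he
    have hfs := hOT 1
    rw [fs_psi_num_one hk, isOT_psi] at hfs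
    obtain ⟨-, hfsν, hG⟩ := hfs
    rw [IsOT, G0_fs_of_kind_one hk] at hfsν
    rw [G0_fs_of_kind_one hk] at hG
    refine isOT_psi.2 ⟨hi, ⟨hν, hfsν.2⟩, fun h0 γ hγ => (hG h0 γ hγ).trans ?_⟩
    exact fs_lt hν (admissible_of_kind_one _ hk) (ne_zero_of_kind_pos (by omega))
  | add c t _ ih =>
    simp only [fs_add, isOT_cons he.1] at hOT
    exact isOT_add.2 ⟨he.1, (hOT 0).1, ih he.2.2.1 fun n => (hOT n).2.1, he.2.2.2⟩
  | psi i e h ih =>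
    simp only [fs_psi_of_kind_two h.kind_eq_two, isOT_psi] at hOT
    refine isOT_psi.2 ⟨he.1, ih he.2 fun n => (hOT n).2.1, fun h0 γ hγ => ?_⟩
    refine h.lt_of_mem_G0 he.2 hγ ((hOT 1).2.2 h0)
      ((h.mem_G0_fs he.2 hγ).imp_right (Or.imp_right (And.imp_right fun hn => ?_)))
    have hlt := (hOT (normN e + 1)).2.2 h0 _ (hn _)
    exact (hlt.trans (fs_lt he.2 (admissible_num _ _) h.ne_zero)).le

/-! ### Gaps in the legal terms -/

/-- A pair `a < b` that replaces a final summand `1` by `ω` at a position where the leading term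
`1` is not admitted, so that no legal term lies in `[a, b)`. -/
inductive SuccGap : Slot → Tm → Tm → Prop
  | zero (π : Slot) : π.one = false → SuccGap π one (psi 0 zero)
  | add (π : Slot) (c a b : Tm) : SuccGap (π.tail c) a b → SuccGap π (add c a) (add c b)

/-- A pair `l < r` of limits that arises from a `SuccGap` below a collapsing function, so that no
legal term lies in `[l, r)`. -/
inductive LimitGap : Slot → Tm → Tm → Prop
  | base (π : Slot) (i : ℕ) (a b : Tm) : SuccGap (π.arg i) a b → LimitGap π (psi i a) (psi i b)
  | add (π : Slot) (c a b : Tm) : LimitGap (π.tail c) a b → LimitGap π (add c a) (add c b)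
  | psi (π : Slot) (i : ℕ) (a b : Tm) : LimitGap (π.arg i) a b → LimitGap π (psi i a) (psi i b)

section SuccGap

variable {π : Slot} {a b t : Tm}

theorem SuccGap.kind_left (h : SuccGap π a b) : kind a = 1 := by
  induction h with
  | zero => rfl
  | add _ _ _ _ _ ih => exact ih

theorem SuccGap.kind_right (h : SuccGap π a b) : kind b = 2 := by
  induction h with
  | zero => rfl
  | add _ _ _ _ _ ih => exact ih

theorem SuccGap.lt (h : SuccGap π a b) : a < b := by
  induction h with
  | zero => exact one_lt_psi _ _
  | add π c a b h ih => simpa using ih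

theorem SuccGap.hd_le_hd (h : SuccGap π a b) : hd a ≤ hd b := by
  cases h with
  | zero => exact one_le_psi _ _
  | add => exact le_rfl

theorem SuccGap.low_left (h : SuccGap π a b) (hb : Low b) : Low a := by
  induction h with
  | zero => exact low_one
  | add π c a b h ih =>
    obtain ⟨hc, hlc, hlb, -, hbc⟩ := hb
    exact ⟨hc, hlc, ih hlb, ne_zero_of_kind_pos (by rw [h.kind_left]; exact one_pos),
      h.hd_le_hd.trans hbc⟩

theorem SuccGap.omega_le_hd (h : SuccGap π a b) (hb : Low b) : Tm.psi 0 Tm.zero ≤ hd b := by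
  induction h with
  | zero => exact le_rfl
  | add _ c _ b _ ih => exact (ih hb.2.2.1).trans hb.2.2.2.2

theorem SuccGap.fs_zero_eq (h : SuccGap π a b) : fs b Tm.zero = fs a Tm.zero := by
  induction h with
  | zero => rfl
  | add π c a b h ih => rw [fs_add, fs_add, ih]

theorem SuccGap.hd_fs_ne_one (h : SuccGap π a b) (hb : Low b) : hd (fs a Tm.zero) ≠ Tm.one := by
  cases h with
  | zero => simp
  | add π c a b h =>
    have hc := (h.omega_le_hd hb.2.2.1).trans hb.2.2.2.2
    rw [fs_add, hd_cons _ _ hb.1]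
    rintro rfl
    exact not_psi_le_one _ _ hc

theorem SuccGap.legal_fs (h : SuccGap π a b) (hb : Legal π b) : Legal π (fs a Tm.zero) := by
  induction h with
  | zero => exact legal_zero _
  | add π c a b _ ih => exact legal_cons.2 ⟨hb.1, ih hb.2⟩

theorem SuccGap.le_of_legal (h : SuccGap π a b) (hb : Low b) (ht : Low t) (hlegal : Legal π t)
    (hle : a ≤ t) : b ≤ t := by
  induction h generalizing t with
  | zero π hπ =>
    refine le_trans ?_ ht.hd_le
    have h1 : hd t ≠ Tm.one := fun h => by simp [hlegal.one_of_hd_eq h] at hπ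
    have hp := ht.isPrincipal_hd (t := t) (by rintro rfl; simp at hle)
    generalize hd t = p at h1 hp
    cases p with
    | zero | add => exact absurd hp id
    | one => exact absurd rfl h1
    | psi i d => simp [Nat.pos_iff_ne_zero, eq_comm, em']
  | add π c a b h ih =>
    have ha := (SuccGap.add π c a b h).low_left hb
    rw [hb.add_eq_cons]
    rw [ha.add_eq_cons] at hle
    obtain ⟨d, s, rfl, hd, -, hls, -⟩ := ht.exists_cons (t := t) (by
      rintro rfl; exact cons_ne_zero hb.1 ((le_zero _).1 hle))
    rw [cons_le_cons hb.1 hd] at hle ⊢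
    rw [legal_cons] at hlegal
    refine hle.imp_right ?_
    rintro ⟨rfl, has⟩
    exact ⟨rfl, ih hb.2.2.1 hls hlegal.2 has⟩

theorem SuccGap.embeds_fs (h : SuccGap π a b) {x : ℕ} (hx : 1 ≤ x) :
    kind (fs b (num x)) = 1 ∧ Embeds (fs a Tm.zero) (fs (fs b (num x)) Tm.zero) ∧
      x ≤ normN (fs b (num x)) := by
  induction h with
  | zero =>
    rw [fs_psi_zero, kind_num, if_neg (by omega), normN_num]
    exact ⟨rfl, .zero _, le_rfl⟩
  | add _ c a b _ ih =>
    obtain ⟨hk, hemb, hnorm⟩ := ih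
    rw [fs_add, fs_add, cons_of_ne_zero c (ne_zero_of_kind_pos (by omega)), fs_add, normN]
    exact ⟨hk, Embeds.cons_cons (.refl _) hemb, by omega⟩

end SuccGap

theorem legal_rep {π : Slot} {i : ℕ} {a : Tm} (ha : Low a)
    (h1 : hd a = one → π.psiOneOne = true → π.outer = true) (h : Legal π (psi i a)) (n : ℕ) :
    Legal π (rep (psi i a) n) := by
  induction n generalizing π with
  | zero => exact legal_zero _
  | succ n ih =>
    refine legal_cons.2 ⟨h, ih (fun _ hpsi => (Bool.and_eq_true_iff.1 hpsi).1) ?_⟩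
    rcases i with _ | i
    · exact h
    by_cases ha1 : hd a = one
    · have hpsi : π.psiOneOne = true := Legal.one_of_hd_eq (π := π.arg (i + 1)) h ha1
      have hslot : (π.tail (psi (i + 1) a)).arg (i + 1) = π.arg (i + 1) := by
        simp [Slot.arg, Slot.tail, isPsiOneBelowOmega, isBelowOmega, ha1, hpsi, h1 ha1 hpsi]
      rw [legal_psi, hslot]
      exact h
    · exact Legal.of_hd_ne_one (π := π.arg (i + 1)) (t := a) h ha ha1 rfl rfl

section LimitGap

variable {π : Slot} {l r t γ : Tm}

theorem LimitGap.multLimit (h : LimitGap π l r) : MultLimit l := by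
  induction h with
  | base π i a b h => exact .base _ _ h.kind_left
  | add _ c a _ _ ih => exact .add _ _ ih
  | psi _ i a _ _ ih => exact .psi _ _ ih

theorem LimitGap.kind_right (h : LimitGap π l r) : kind r = 2 := by
  induction h with
  | base π i a b h => exact kind_psi_of_kind_two h.kind_right
  | add _ _ _ _ _ ih => exact ih
  | psi _ i _ b _ ih => exact kind_psi_of_kind_two ih

theorem LimitGap.lt (h : LimitGap π l r) : l < r := by
  induction h with
  | base π i a b h => simp [h.lt]
  | add π c a b h ih => simpa using ih
  | psi π i a b h ih => simpa using ih

theorem LimitGap.hd_le_hd (h : LimitGap π l r) : hd l ≤ hd r := by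
  cases h with
  | base π i a b h => simp [h.lt.le]
  | add => exact le_rfl
  | psi π i a b h => simp [h.lt.le]

theorem LimitGap.low_left (h : LimitGap π l r) (hr : Low r) : Low l := by
  induction h with
  | base π i a b h => exact ⟨hr.1, h.low_left hr.2⟩
  | add π c a b h ih =>
    obtain ⟨hc, hlc, hlb, -, hbc⟩ := hr
    exact ⟨hc, hlc, ih hlb, h.multLimit.ne_zero, h.hd_le_hd.trans hbc⟩
  | psi _ i a b _ ih => exact ⟨hr.1, ih hr.2⟩

theorem LimitGap.fs_zero_eq (h : LimitGap π l r) : fs r Tm.zero = fs l (num 1) := by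
  induction h with
  | base π i a b h => rw [fs_psi_of_kind_two h.kind_right, fs_psi_num_one h.kind_left, h.fs_zero_eq]
  | add π c a b h ih => rw [fs_add, fs_add, ih]
  | psi π i a b h ih =>
    rw [fs_psi_of_kind_two h.kind_right, fs_psi_of_kind_two h.multLimit.kind_eq_two, ih]

theorem LimitGap.le_of_legal (h : LimitGap π l r) (hr : Low r) (ht : Low t)
    (hlegal : Legal π t) (hle : l ≤ t) : r ≤ t := by
  induction h generalizing t with
  | base π i a b h =>
    by_contra hlt
    obtain ⟨d, s, rfl, had, hdb⟩ := exists_cons_psi_of_le_of_lt ht hle (not_le.1 hlt)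
    have hd := ((low_cons (isPrincipal_psi _ _)).1 ht).1.2
    exact absurd (h.le_of_legal hr.2 hd (legal_cons.1 hlegal).1 had) hdb.not_ge
  | psi π i a b _ ih =>
    by_contra hlt
    obtain ⟨d, s, rfl, had, hdb⟩ := exists_cons_psi_of_le_of_lt ht hle (not_le.1 hlt)
    have hd := ((low_cons (isPrincipal_psi _ _)).1 ht).1.2
    exact absurd (ih hr.2 hd (legal_cons.1 hlegal).1 had) hdb.not_ge
  | add π c a b h ih =>
    have hl := (LimitGap.add π c a b h).low_left hr
    rw [hr.add_eq_cons]
    rw [hl.add_eq_cons] at hle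
    obtain ⟨d, s, rfl, hd, -, hls, -⟩ := ht.exists_cons (t := t) (by
      rintro rfl; exact cons_ne_zero hr.1 ((le_zero _).1 hle))
    rw [cons_le_cons hr.1 hd] at hle ⊢
    rw [legal_cons] at hlegal
    refine hle.imp_right ?_
    rintro ⟨rfl, has⟩
    exact ⟨rfl, ih hr.2.2.1 hls hlegal.2 has⟩

theorem LimitGap.legal_fs (h : LimitGap π l r) (hr : Low r) (hlegal : Legal π r) (n : ℕ) :
    Legal π (fs l (num n)) := by
  induction h with
  | base π i a b h =>
    have hlow := low_fs (h.low_left hr.2) (admissible_num a 0)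
    rw [fs_psi_of_kind_one h.kind_left]
    exact legal_rep hlow (fun h1 => absurd h1 (h.hd_fs_ne_one hr.2)) (h.legal_fs hlegal) _
  | add π c a b _ ih => exact legal_cons.2 ⟨hlegal.1, ih hr.2.2.1 hlegal.2⟩
  | psi π i a b h ih =>
    rw [fs_psi_of_kind_two h.multLimit.kind_eq_two]
    exact ih hr.2 hlegal

theorem LimitGap.mem_G0 (h : LimitGap π l r) (hr : Low r) (hγ : γ ∈ G0 l) :
    γ ∈ G0 (fs l (num 1)) ∨ (kind γ = 1 ∧ fs γ Tm.zero ∈ G0 (fs l (num 1))) ∨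
      ∃ δ ∈ G0 r, LimitGap .top γ δ := by
  induction h with
  | base π i a b h =>
    exact (mem_G0_psi_fs_of_kind_one hr.1 h.kind_left hγ).imp_right Or.inl
  | add _ c a b _ ih =>
    simp only [fs_add, G0_cons, G0_add, Finset.mem_union] at hγ ⊢
    rcases hγ with hγ | hγ
    · exact Or.inl (Or.inl hγ)
    · exact (ih hr.2.2.1 hγ).imp Or.inr
        (Or.imp (And.imp_right Or.inr) fun ⟨δ, hδ, h⟩ => ⟨δ, Or.inr hδ, h⟩)
  | psi π i a b h ih =>
    simp only [fs_psi_of_kind_two h.multLimit.kind_eq_two, mem_G0_psi hr.1] at hγ ⊢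
    rcases hγ with ⟨rfl, rfl⟩ | hγ
    · exact Or.inr (Or.inr ⟨b, Or.inl ⟨rfl, rfl⟩, h⟩)
    · exact (ih hr.2 hγ).imp Or.inr
        (Or.imp (And.imp_right Or.inr) fun ⟨δ, hδ, h⟩ => ⟨δ, Or.inr hδ, h⟩)

theorem LimitGap.isOT (h : LimitGap π l r) (hr : IsOT r) (hlegal : Legal π r) : IsOT l := by
  have hfs := isOT_fs_zero hr
  rw [h.fs_zero_eq] at hfs
  induction h with
  | base π i a b h =>
    rw [fs_psi_num_one h.kind_left] at hfs
    refine MultLimit.isOT (.base i a h.kind_left) ⟨hr.low.1, h.low_left hr.low.2⟩ fun n => ?_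
    rw [fs_psi_of_kind_one h.kind_left]
    exact isOT_rep (isPrincipal_psi _ _) hfs _
  | add π c a b h ih =>
    obtain ⟨hc, hOTc, hOTb, -, hbc⟩ := isOT_add.1 hr
    have hfsa := ((isOT_cons hc).1 hfs).2.1
    exact isOT_add.2 ⟨hc, hOTc, ih hOTb hlegal.2 hfsa, h.multLimit.ne_zero, h.hd_le_hd.trans hbc⟩
  | psi π i a b h ih =>
    rw [fs_psi_of_kind_two h.multLimit.kind_eq_two] at hfs
    obtain ⟨hi, hOTb, hG⟩ := isOT_psi.1 hr
    obtain ⟨-, hfsa, hGfs⟩ := isOT_psi.1 hfs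
    have ha := ih hOTb hlegal hfsa
    refine isOT_psi.2 ⟨hi, ha, fun h0 γ hγ => ?_⟩
    refine h.multLimit.lt_of_mem_G0 ha.low hγ (hGfs h0)
      ((h.mem_G0 hOTb.low hγ).imp_right (Or.imp_right ?_))
    rintro ⟨δ, hδ, hγδ⟩
    refine ⟨hγδ.multLimit, not_lt.1 fun hlt => ?_⟩
    -- Otherwise the legal term `γ[‖a‖ + 1]` exceeds `a`, hence also `b`, which bounds `δ > γ`.
    have hlδ := low_of_mem_G0 hOTb.low hδ
    have hlγ := hγδ.low_left hlδ
    have hlegalγ := hγδ.legal_fs hlδ (legal_of_mem_G0 hOTb.low hlegal hδ) (normN a + 1)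
    have hlγfs := low_fs hlγ (admissible_num γ (normN a + 1))
    subst h0
    have hble := h.le_of_legal hOTb.low hlγfs hlegalγ hlt.le
    have hfsγ := fs_lt hlγ (admissible_num γ (normN a + 1)) hγδ.multLimit.ne_zero
    exact absurd (hble.trans_lt (hfsγ.trans (hγδ.lt.trans (hG rfl δ hδ)))) (lt_irrefl _)

theorem LimitGap.embeds_fs (h : LimitGap π l r) {x : ℕ} (hx : 1 ≤ x) :
    kind (fs r (num x)) = 2 ∧
      (∀ n m, n ≤ m → Embeds (fs l (num n)) (fs (fs r (num x)) (num m))) ∧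
      x ≤ normN (fs r (num x)) := by
  induction h with
  | base π i a b h =>
    obtain ⟨hk, hemb, hnorm⟩ := h.embeds_fs hx
    rw [fs_psi_of_kind_two h.kind_right, normN]
    refine ⟨kind_psi_of_kind_one hk, fun n m hnm => ?_, by omega⟩
    rw [fs_psi_of_kind_one hk, fs_psi_of_kind_one h.kind_left, tmToNat_num, tmToNat_num]
    exact Embeds.rep_rep (.psi _ hemb) hnm
  | add _ c a b _ ih =>
    obtain ⟨hk, hemb, hnorm⟩ := ih
    rw [fs_add, cons_of_ne_zero c (ne_zero_of_kind_pos (by omega)), normN]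
    refine ⟨hk, fun n m hnm => ?_, by omega⟩
    rw [fs_add, fs_add]
    exact Embeds.cons_cons (.refl _) (hemb n m hnm)
  | psi π i a b h ih =>
    obtain ⟨hk, hemb, hnorm⟩ := ih
    rw [fs_psi_of_kind_two h.kind_right, normN]
    refine ⟨kind_psi_of_kind_two hk, fun n m hnm => ?_, by omega⟩
    rw [fs_psi_of_kind_two hk, fs_psi_of_kind_two h.multLimit.kind_eq_two]
    exact .psi _ (hemb n m hnm)

end LimitGap

section

variable {f : ℕ → ℕ}

theorem exists_cons_of_mapNum_eq_cons (hf : IsNumMap f) {t d s : Tm} {i : ℕ} (ht : Low t)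
    (h : mapNum f t = cons (psi i d) s) :
    ∃ d₀ s₀, t = cons (psi i d₀) s₀ ∧ Low d₀ ∧ Low s₀ ∧ mapNum f d₀ = d ∧ mapNum f s₀ = s := by
  rcases ht.eq_num_or_cons with ⟨n, rfl⟩ | ⟨j, a, t, rfl, -, ha, ht, -⟩
  · rw [mapNum_num hf] at h
    exact absurd h (num_lt_cons_psi _ _ _ _).ne
  · rw [mapNum_cons_psi hf, cons_inj (isPrincipal_psi _ _) (isPrincipal_psi _ _)] at h
    obtain ⟨hpsi, hs⟩ := h
    obtain ⟨rfl, hd⟩ := psi.inj hpsi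
    exact ⟨a, t, rfl, ha, ht, hd, hs⟩

theorem hd_mapNum_le_psi (hf : IsNumMap f) {t a : Tm} {i : ℕ} (ht : Low t) (ha : Low a) :
    hd (mapNum f t) ≤ psi i (mapNum f a) ↔ hd t ≤ psi i a := by
  rcases ht.eq_num_or_cons with ⟨n, rfl⟩ | ⟨j, b, s, rfl, -, hb, -, -⟩
  · have hd_num_le (m : ℕ) (c : Tm) : hd (num m) ≤ psi i c :=
      (low_num m).hd_le.trans (num_lt_psi m i c).le
    rw [mapNum_num hf]
    exact iff_of_true (hd_num_le _ _) (hd_num_le _ _)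
  · rw [mapNum_cons_psi hf, hd_cons _ _ (isPrincipal_psi _ _), hd_cons _ _ (isPrincipal_psi _ _),
      psi_le_psi, psi_le_psi, mapNum_le_mapNum hf hb ha]

theorem mapNum_add_psi (f : ℕ → ℕ) (i : ℕ) (c t : Tm) :
    mapNum f (add (psi i c) t) = add (psi i (mapNum f c)) (mapNum f t) := by
  simp [mapNum]

theorem exists_psi_of_low_add {c t : Tm} (h : Low (add c t)) (hk : 2 ≤ kind t) :
    ∃ i d, c = psi i d := by
  obtain ⟨hc, -, hlt, -, hle⟩ := h
  cases c with
  | zero | add => exact absurd hc id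
  | one =>
    obtain ⟨n, rfl⟩ := hlt.exists_eq_num hle
    rw [kind_num] at hk
    split at hk <;> omega
  | psi i d => exact ⟨i, d, rfl⟩

theorem low_add_psi_of_mapNum (hf : IsNumMap f) {i : ℕ} {c t : Tm} (hc : Low c) (ht : Low t)
    (h : Low (add (psi i (mapNum f c)) (mapNum f t))) : Low (add (psi i c) t) := by
  obtain ⟨-, hlow, -, h0, hle⟩ := h
  refine ⟨isPrincipal_psi _ _, ⟨hlow.1, hc⟩, ht, ?_, (hd_mapNum_le_psi hf ht hc).1 hle⟩
  rintro rfl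
  exact h0 rfl

theorem SuccGap.exists_mapNum (hf : IsNumMap f) {π : Slot} {a b d : Tm} (h : SuccGap π a b)
    (hb : Low b) (hd : Low d) (he : mapNum f d = fs a Tm.zero) :
    ∃ a₀ b₀, Low b₀ ∧ SuccGap π a₀ b₀ ∧ mapNum f a₀ = a ∧ mapNum f b₀ = b ∧
      fs a₀ Tm.zero = d := by
  induction h generalizing d with
  | zero π hπ =>
    have hd0 : d = Tm.zero := by
      by_contra h0
      exact mapNum_ne_zero hf h0 he
    exact ⟨Tm.one, Tm.psi 0 Tm.zero, ⟨zero_le_one, low_zero⟩, .zero _ hπ, rfl, rfl, hd0.symm⟩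
  | add π c a b h ih =>
    obtain ⟨i, c, rfl⟩ := exists_psi_of_low_add hb h.kind_right.ge
    rw [fs_add] at he
    obtain ⟨c₀, s₀, rfl, hc₀, hs₀, rfl, hs⟩ := exists_cons_of_mapNum_eq_cons hf hd he
    obtain ⟨a₀, b₀, hb₀, hgap, rfl, rfl, rfl⟩ := ih hb.2.2.1 hs₀ hs
    rw [tail_psi_mapNum hf π i hc₀] at hgap
    exact ⟨Tm.add (Tm.psi i c₀) a₀, Tm.add (Tm.psi i c₀) b₀, low_add_psi_of_mapNum hf hc₀ hb₀ hb,
      .add _ _ _ _ hgap, mapNum_add_psi _ _ _ _, mapNum_add_psi _ _ _ _, rfl⟩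

theorem LimitGap.exists_mapNum (hf : IsNumMap f) {π : Slot} {l r a : Tm} (h : LimitGap π l r)
    (hr : Low r) (ha : Low a) (h1 : fs l (num 1) ≤ mapNum f a) (h2 : mapNum f a < l) :
    ∃ l₀ r₀, Low r₀ ∧ LimitGap π l₀ r₀ ∧ mapNum f l₀ = l ∧ mapNum f r₀ = r ∧
      ∀ n, mapNum f (fs l₀ (num n)) = fs l (num n) := by
  induction h generalizing a with
  | base π i b c h =>
    rw [fs_psi_num_one h.kind_left] at h1
    obtain ⟨d, s, he, hbd, hdb⟩ := exists_cons_psi_of_le_of_lt (low_mapNum hf ha) h1 h2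
    obtain ⟨d₀, s₀, rfl, hd₀, -, rfl, -⟩ := exists_cons_of_mapNum_eq_cons hf ha he
    have hfs : mapNum f d₀ = fs b Tm.zero :=
      (le_fs_of_lt (h.low_left hr.2) (low_mapNum hf hd₀) h.kind_left hdb).antisymm hbd
    obtain ⟨b₀, c₀, hc₀, hgap, rfl, rfl, rfl⟩ := h.exists_mapNum hf hr.2 hd₀ hfs
    refine ⟨Tm.psi i b₀, Tm.psi i c₀, ⟨hr.1, hc₀⟩, .base _ _ _ _ hgap, rfl, rfl, fun n => ?_⟩
    rw [fs_psi_of_kind_one h.kind_left, fs_psi_of_kind_one hgap.kind_left, mapNum_rep_psi hf, hfs]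
  | psi π i b c h ih =>
    have hk := h.multLimit.kind_eq_two
    rw [fs_psi_of_kind_two hk] at h1
    obtain ⟨d, s, he, hbd, hdb⟩ := exists_cons_psi_of_le_of_lt (low_mapNum hf ha) h1 h2
    obtain ⟨d₀, s₀, rfl, hd₀, -, rfl, -⟩ := exists_cons_of_mapNum_eq_cons hf ha he
    obtain ⟨b₀, c₀, hc₀, hgap, rfl, rfl, hfs⟩ := ih hr.2 hd₀ hbd hdb
    refine ⟨Tm.psi i b₀, Tm.psi i c₀, ⟨hr.1, hc₀⟩, .psi _ _ _ _ hgap, rfl, rfl, fun n => ?_⟩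
    rw [fs_psi_of_kind_two hk, fs_psi_of_kind_two hgap.multLimit.kind_eq_two, mapNum, hfs]
  | add π c b d h ih =>
    obtain ⟨i, c, rfl⟩ := exists_psi_of_low_add hr h.kind_right.ge
    rw [fs_add] at h1
    obtain ⟨s, he, hbs, hsb, -⟩ := exists_cons_of_le_of_lt_add
      ((LimitGap.add π _ b d h).low_left hr) (low_mapNum hf ha) h1 h2
    obtain ⟨c₀, s₀, rfl, hc₀, hs₀, rfl, rfl⟩ := exists_cons_of_mapNum_eq_cons hf ha he
    obtain ⟨b₀, d₀, hd₀, hgap, rfl, rfl, hfs⟩ := ih hr.2.2.1 hs₀ hbs hsb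
    rw [tail_psi_mapNum hf π i hc₀] at hgap
    refine ⟨Tm.add (Tm.psi i c₀) b₀, Tm.add (Tm.psi i c₀) d₀, low_add_psi_of_mapNum hf hc₀ hd₀ hr,
      .add _ _ _ _ hgap, mapNum_add_psi _ _ _ _, mapNum_add_psi _ _ _ _, fun n => ?_⟩
    rw [fs_add, fs_add, mapNum_cons_psi hf, hfs]

end

/-! ### Legality of fundamental sequences -/

theorem Legal.of_lt_Omega {π π' : Slot} {t : Tm} (h : Legal π t) (ht : Low t)
    (hlt : t < Tm.psi 1 Tm.zero) (hone : π.one = true → π'.one = true) : Legal π' t := by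
  induction t generalizing π π' with
  | zero => exact legal_zero _
  | one => exact hone h
  | psi i b =>
    obtain rfl : i = 0 := by simpa using hlt
    exact h
  | add c t ihc iht =>
    obtain ⟨hc, hlc, hlt', -, hle⟩ := ht
    rw [lt_psi_iff_hd_lt, hd_add] at hlt
    have htail : π.tail c = ⟨π.outer, true, false⟩ ∧ π'.tail c = ⟨π'.outer, true, false⟩ := by
      rcases hc.eq_one_or_exists_psi_zero hlt with rfl | ⟨b, rfl⟩ <;>
        simp [Slot.tail, isBelowOmega, isPsiOneBelowOmega]
    refine ⟨ihc h.1 hlc hlt hone, iht h.2 hlt' ?_ ?_⟩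
    · rw [lt_psi_iff_hd_lt]
      exact hle.trans_lt hlt
    · simp [htail]

theorem legal_fs_of_kind_three {π : Slot} {a z : Tm} (ha : Low a) (hk : kind a = 3)
    (h : Legal π a) (hz : Low z) (hlt : z < psi 1 zero) (hz_legal : Legal .top z) :
    Legal π (fs a z) := by
  induction a generalizing π with
  | zero | one => exact absurd hk (by simp)
  | psi i a ih =>
    obtain ⟨hi, ha⟩ := ha
    interval_cases i
    · simp at hk
    · rcases kind_cases a with hka | hka | hka | hka
      · obtain rfl := (kind_eq_zero_iff ha).1 hka
        exact hz_legal.of_lt_Omega hz hlt (by simp [Slot.top])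
      · simp [kind_psi_one, hka] at hk
      · simp [kind_psi_one, hka] at hk
      · rw [fs_psi_one_of_kind_three hka]
        exact ih ha hka h
  | add c t _ ih => exact legal_cons.2 ⟨h.1, ih ha.2.2.1 hk h.2⟩

theorem legal_fs_of_kind_one {π : Slot} {a : Tm} (hk : kind a = 1) (h : Legal π a) :
    Legal π (fs a zero) := by
  induction a generalizing π with
  | zero | one => exact legal_zero _
  | psi i a =>
    have := two_le_kind_psi i a
    omega
  | add c t _ ih => exact legal_cons.2 ⟨h.1, ih hk h.2⟩

theorem legal_psiIter {π : Slot} {a : Tm} (ha : Low a) (hk : kind a = 3) (h : Legal .top a)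
    (n : ℕ) : Legal π (psiIter (fs a) n) := by
  induction n generalizing π with
  | zero => exact legal_zero _
  | succ n ih =>
    exact legal_fs_of_kind_three ha hk h (low_psiIter ha hk n) (psiIter_lt_Omega _ _) ih

theorem Legal.fs_num_or_gap {π : Slot} {t : Tm} (h : Legal π t) (ht : Low t) (hk : kind t = 2)
    (hπ : π.psiOneOne = true → π.outer = true) :
    (∀ n, Legal π (fs t (num n))) ∨ (∃ l, LimitGap π l t) ∨ ∃ a, SuccGap π a t := by
  induction t generalizing π with
  | zero | one => simp at hk
  | psi i a ih =>
    obtain ⟨hi, ha⟩ := ht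
    rcases kind_cases a with hka | hka | hka | hka
    · obtain rfl := eq_zero_of_kind_psi_eq_two hi hk (.inl hka)
      obtain rfl := (kind_eq_zero_iff ha).1 hka
      cases hone : π.one with
      | false => exact Or.inr (Or.inr ⟨_, .zero _ hone⟩)
      | true => exact Or.inl fun n => legal_num.2 (Or.inr hone)
    · refine Or.inl fun n => ?_
      rw [fs_psi_of_kind_one hka]
      exact legal_rep (low_fs ha (admissible_of_kind_one _ hka)) (fun _ => hπ)
        (legal_fs_of_kind_one (π := π.arg i) hka h) _
    · have harg : (π.arg i).psiOneOne = true → (π.arg i).outer = true := by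
        cases i <;> simp [Slot.arg, Slot.top]
      rcases ih (π := π.arg i) h ha hka harg with hfs | ⟨l, hgap⟩ | ⟨l, hgap⟩
      · refine Or.inl fun n => ?_
        rw [fs_psi_of_kind_two hka]
        exact hfs n
      · exact Or.inr (Or.inl ⟨_, .psi _ _ _ _ hgap⟩)
      · exact Or.inr (Or.inl ⟨_, .base _ _ _ _ hgap⟩)
    · obtain rfl := eq_zero_of_kind_psi_eq_two hi hk (.inr hka)
      refine Or.inl fun n => ?_
      rw [fs_psi_zero_of_kind_three hka]
      exact legal_psiIter ha hka h _
  | add c t _ ih =>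
    have htail : (π.tail c).psiOneOne = true → (π.tail c).outer = true := fun h =>
      (Bool.and_eq_true_iff.1 h).1
    rcases ih h.2 ht.2.2.1 hk htail with hfs | ⟨l, hgap⟩ | ⟨l, hgap⟩
    · exact Or.inl fun n => legal_cons.2 ⟨h.1, hfs n⟩
    · exact Or.inr (Or.inl ⟨_, .add _ _ _ _ hgap⟩)
    · exact Or.inr (Or.inr ⟨_, .add _ _ _ _ hgap⟩)

/-! ### Successors -/

/-- The term `t + 1`. -/
def succ : Tm → Tm
  | zero => one
  | one => add one one
  | psi i a => add (psi i a) one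
  | add c t => add c (succ t)

theorem succ_ne_zero (t : Tm) : succ t ≠ zero := by cases t <;> simp [succ]

theorem succ_cons {c : Tm} (hc : IsPrincipal c) (t : Tm) : succ (cons c t) = cons c (succ t) := by
  by_cases h0 : t = zero
  · subst h0
    rw [cons_zero]
    cases c with
    | zero | add => exact absurd hc id
    | one | psi => rfl
  · rw [cons_of_ne_zero _ h0, succ, cons_of_ne_zero _ (succ_ne_zero t)]

theorem succ_num (n : ℕ) : succ (num n) = num (n + 1) := by
  induction n with
  | zero => rfl
  | succ n ih => 
    rw [num, rep_succ, succ_cons isPrincipal_one, ← num, ih]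
    rfl

theorem hd_succ {t : Tm} (h0 : t ≠ zero) : hd (succ t) = hd t := by
  cases t with
  | zero => exact absurd rfl h0
  | one | psi | add => rfl

theorem kind_succ (t : Tm) : kind (succ t) = 1 := by
  induction t with
  | zero | one | psi => rfl
  | add _ _ _ ih => exact ih

theorem G0_succ (t : Tm) : G0 (succ t) = G0 t := by
  induction t with
  | zero | one | psi => simp [succ]
  | add c t _ ih => rw [succ, G0_add, G0_add, ih]

theorem low_succ {t : Tm} (h : Low t) : Low (succ t) := by
  induction t with
  | zero => exact low_one
  | one => simp [succ]
  | psi i a => exact ⟨isPrincipal_psi _ _, h, low_one, by simp, one_le_psi _ _⟩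
  | add c t _ ih =>
    obtain ⟨hc, hlc, hlt, h0, hle⟩ := h
    exact ⟨hc, hlc, ih hlt, succ_ne_zero t, (hd_succ h0).trans_le hle⟩

theorem fs_succ {t : Tm} (h : Low t) : fs (succ t) zero = t := by
  induction t with
  | zero | one | psi => simp [succ]
  | add c t _ ih => rw [succ, fs_add, ih h.2.2.1, cons_of_ne_zero c h.2.2.2.1]

theorem succ_fs_of_kind_one {a : Tm} (ha : Low a) (hk : kind a = 1) : succ (fs a zero) = a := by
  induction a with
  | zero => simp at hk
  | one => rfl
  | psi i a =>
    have := two_le_kind_psi i a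
    omega
  | add c t _ ih =>
    rw [fs_add, succ_cons ha.1, ih ha.2.2.1 hk, cons_of_ne_zero _ ha.2.2.2.1]

theorem legal_succ_or_mapNum_succ {f : ℕ → ℕ} (hf : IsNumMap f) {t : Tm} (ht : Low t) :
    (∀ π, Legal π t → Legal π (succ t)) ∨ mapNum f (succ t) = succ (mapNum f t) := by
  induction ht using Low.consRec with
  | num n =>
    rcases Nat.eq_zero_or_pos n with rfl | hn
    · refine Or.inr ?_
      rw [succ_num, mapNum_num hf, mapNum_num hf, hf.map_zero, hf.map_one, succ_num]
    · refine Or.inl fun π h => ?_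
      rw [succ_num]
      exact legal_num.2 (Or.inr ((legal_num.1 h).resolve_left hn.ne'))
  | cons i a s hi ha hs hle _ ih =>
    rw [succ_cons (isPrincipal_psi _ _)]
    refine ih.imp (fun h π hπ => ?_) fun h => ?_
    · exact legal_cons.2 ⟨(legal_cons.1 hπ).1, h _ (legal_cons.1 hπ).2⟩
    · rw [mapNum_cons_psi hf, mapNum_cons_psi hf, succ_cons (isPrincipal_psi _ _), h]

theorem Legal.succ {π : Slot} {t : Tm} (h : Legal π t) (ht : Low t) (hlt : t < Tm.psi 1 Tm.zero)
    (h0 : t ≠ Tm.zero) : Legal π (Tm.succ t) := by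
  induction t generalizing π with
  | zero => exact absurd rfl h0
  | one => exact ⟨h, rfl⟩
  | psi i a =>
    obtain rfl : i = 0 := by simpa using hlt
    exact ⟨h, rfl⟩
  | add c t _ ih =>
    obtain ⟨-, -, hlt', h0, hle⟩ := ht
    refine ⟨h.1, ih h.2 hlt' ?_ h0⟩
    rw [lt_psi_iff_hd_lt, hd_add] at hlt
    rw [lt_psi_iff_hd_lt]
    exact hle.trans_lt hlt

theorem isOT_succ {t : Tm} (h : IsOT t) : IsOT (succ t) :=
  ⟨low_succ h.low, by rw [G0_succ]; exact h.2⟩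

theorem HardyIndex.succ {t : Tm} (h : HardyIndex t) (h0 : t ≠ Tm.zero) :
    HardyIndex (Tm.succ t) := by
  refine ⟨⟨isOT_succ h.1.1, ?_⟩, h.2.succ h.low h.1.2 h0⟩
  rw [lt_psi_iff_hd_lt, hd_succ h0, ← lt_psi_iff_hd_lt]
  exact h.1.2

/-! ### Pulling limits back along a change of the numbers -/

section LimitPreimage

variable {f : ℕ → ℕ}

theorem exists_mapNum_eq_of_kind_three (hf : IsNumMap f) {a z d : Tm} (ha : Low a)
    (hk : kind a = 3) (hd : Low d) (h1 : fs a z ≤ mapNum f d) (h2 : mapNum f d < a) :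
    ∃ e, Low e ∧ mapNum f e = a := by
  induction a generalizing d with
  | zero | one => simp at hk
  | psi i a ih =>
    obtain ⟨hi, ha⟩ := ha
    interval_cases i
    · simp at hk
    rcases kind_cases a with h | h | h | h
    · obtain rfl := (kind_eq_zero_iff ha).1 h
      exact ⟨psi 1 zero, ⟨le_rfl, low_zero⟩, rfl⟩
    · simp [kind_psi_one, h] at hk
    · simp [kind_psi_one, h] at hk
    · rw [fs_psi_one_of_kind_three h] at h1
      obtain ⟨d₁, s, heq, hle, hlt⟩ := exists_cons_psi_of_le_of_lt (low_mapNum hf hd) h1 h2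
      obtain ⟨d₀, -, -, hd₀, -, rfl, -⟩ := exists_cons_of_mapNum_eq_cons hf hd heq
      obtain ⟨e, he, rfl⟩ := ih ha h hd₀ hle hlt
      exact ⟨psi 1 e, ⟨le_rfl, he⟩, rfl⟩
  | add c t _ ih =>
    have hkt : kind t = 3 := hk
    obtain ⟨i, c, rfl⟩ := exists_psi_of_low_add ha (by omega)
    rw [fs_add] at h1
    obtain ⟨s, heq, hle, hlt, -⟩ := exists_cons_of_le_of_lt_add ha (low_mapNum hf hd) h1 h2
    obtain ⟨c₀, s₀, -, hc₀, hs₀, rfl, rfl⟩ := exists_cons_of_mapNum_eq_cons hf hd heq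
    obtain ⟨e, he, rfl⟩ := ih ha.2.2.1 hkt hs₀ hle hlt
    exact ⟨add (psi i c₀) e, low_add_psi_of_mapNum hf hc₀ he ha, mapNum_add_psi f i c₀ e⟩

/-- The limit term `ε` is the least term which `mapNum f` sends to `δ` or above, and its
fundamental sequence is sent to the terms of that of `δ` with the indices `g 0, g 1, …`. -/
structure LimitPreimage (f : ℕ → ℕ) (π : Slot) (δ ε : Tm) (g : ℕ → ℕ) : Prop where
  low : Low ε
  kind_eq_two : kind ε = 2
  legal : Legal π ε
  le_mapNum : δ ≤ mapNum f ε
  le_of_le_mapNum : ∀ τ, Low τ → δ ≤ mapNum f τ → ε ≤ τ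
  index_le : ∀ y, g y ≤ f y
  mapNum_fs : ∀ y, mapNum f (fs ε (num y)) = fs δ (num (g y))
  eq_or_multLimit : mapNum f ε = δ ∨ MultLimit ε

theorem limitPreimage_mapNum (hf : IsNumMap f) {π : Slot} {ε : Tm} {g : ℕ → ℕ} (hε : Low ε)
    (hk : kind ε = 2) (hlegal : Legal π (mapNum f ε)) (hg : ∀ y, g y ≤ f y)
    (hfs : ∀ y, mapNum f (fs ε (num y)) = fs (mapNum f ε) (num (g y))) :
    LimitPreimage f π (mapNum f ε) ε g where
  low := hε
  kind_eq_two := hk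
  legal := (legal_mapNum hf hε π).1 hlegal
  le_mapNum := le_rfl
  le_of_le_mapNum _ hτ h := (mapNum_le_mapNum hf hε hτ).1 h
  index_le := hg
  mapNum_fs := hfs
  eq_or_multLimit := .inl rfl

theorem psi_le_of_le_mapNum (hf : IsNumMap f) {i : ℕ} {a e τ : Tm} (hτ : Low τ)
    (hle : ∀ t, Low t → a ≤ mapNum f t → e ≤ t) (h : psi i a ≤ mapNum f τ) : psi i e ≤ τ := by
  by_contra! hlt
  refine absurd h (not_le.2 ?_)
  rw [lt_psi_iff_hd_lt] at hlt ⊢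
  rcases hτ.eq_num_or_cons with ⟨n, rfl⟩ | ⟨j, b, s, rfl, -, hb, -⟩
  · rw [mapNum_num hf, ← lt_psi_iff_hd_lt]
    exact num_lt_psi _ _ _
  · rw [hd_cons _ _ (isPrincipal_psi _ _), psi_lt_psi] at hlt
    rw [mapNum_cons_psi hf, hd_cons _ _ (isPrincipal_psi _ _), psi_lt_psi]
    exact hlt.imp_right fun ⟨hji, hbe⟩ =>
      ⟨hji, lt_of_not_ge fun hab => (hle b hb hab).not_gt hbe⟩

theorem limitPreimage_psi_of_kind_one (hf : IsNumMap f) {π : Slot} {i : ℕ} {a d : Tm} (hi : i ≤ 1)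
    (ha : Low a) (hk : kind a = 1) (hd : Low d) (hfs : mapNum f d = fs a zero)
    (hlegal : Legal π (psi i a)) : LimitPreimage f π (psi i a) (psi i (succ d)) id where
  low := ⟨hi, low_succ hd⟩
  kind_eq_two := kind_psi_of_kind_one (kind_succ d)
  legal := by
    rcases legal_succ_or_mapNum_succ hf hd with hsucc | hsucc
    · refine hsucc _ ((legal_mapNum hf hd _).1 ?_)
      rw [hfs]
      exact legal_fs_of_kind_one hk hlegal
    · refine (legal_mapNum hf (low_succ hd) _).1 ?_
      rw [hsucc, hfs, succ_fs_of_kind_one ha hk]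
      exact hlegal
  le_mapNum := by
    refine (psi_le_psi _ _ _ _).2 (Or.inr ⟨rfl, le_of_not_gt fun hlt => ?_⟩)
    have hd_lt : d < succ d := by
      conv_lhs => rw [← fs_succ hd]
      exact fs_lt (low_succ hd) (admissible_num _ 0) (succ_ne_zero d)
    have hle := le_fs_of_lt ha (low_mapNum hf (low_succ hd)) hk hlt
    exact (mapNum_lt_mapNum_of_lt hf hd (low_succ hd) hd_lt).not_ge (hfs ▸ hle)
  le_of_le_mapNum τ hτ := by
    refine psi_le_of_le_mapNum hf hτ fun t ht hle => le_of_not_gt fun hlt => ?_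
    have htd : t ≤ d := fs_succ hd ▸ le_fs_of_lt (low_succ hd) ht (kind_succ d) hlt
    have hta : mapNum f t ≤ fs a zero := hfs ▸ (mapNum_le_mapNum hf ht hd).2 htd
    exact (hta.trans_lt (fs_lt ha (admissible_num _ 0) (ne_zero_of_kind_pos (by omega)))).not_ge hle
  index_le _ := hf.strictMono.le_apply
  mapNum_fs y := by
    rw [fs_psi_of_kind_one (kind_succ d), fs_psi_of_kind_one hk, fs_succ hd, mapNum_rep_psi hf,
      hfs, tmToNat_num, tmToNat_num, id]
  eq_or_multLimit := .inr (.base _ _ (kind_succ d))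

theorem LimitPreimage.psi (hf : IsNumMap f) {π : Slot} {i : ℕ} {a e : Tm} {g : ℕ → ℕ}
    (h : LimitPreimage f (π.arg i) a e g) (hi : i ≤ 1) (hk : kind a = 2) :
    LimitPreimage f π (Tm.psi i a) (Tm.psi i e) g where
  low := ⟨hi, h.low⟩
  kind_eq_two := kind_psi_of_kind_two h.kind_eq_two
  legal := h.legal
  le_mapNum := (psi_le_psi _ _ _ _).2 (Or.inr ⟨rfl, h.le_mapNum⟩)
  le_of_le_mapNum _ hτ := psi_le_of_le_mapNum hf hτ h.le_of_le_mapNum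
  index_le := h.index_le
  mapNum_fs y := by
    rw [fs_psi_of_kind_two h.kind_eq_two, fs_psi_of_kind_two hk, mapNum, h.mapNum_fs]
  eq_or_multLimit := h.eq_or_multLimit.imp (congrArg (Tm.psi i)) (.psi _ _)

theorem LimitPreimage.hd_le (hf : IsNumMap f) {π : Slot} {i : ℕ} {c t e : Tm} {g : ℕ → ℕ}
    (h : LimitPreimage f π t e g) (hi : i ≤ 1) (hc : Low c) (ht : Low t)
    (hle : hd t ≤ Tm.psi i (mapNum f c)) : hd e ≤ Tm.psi i c := by
  have hlt := lt_rep_of_normN_lt (isPrincipal_psi i (mapNum f c)) ht hle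
    (Nat.lt_succ_self (normN t))
  rw [← mapNum_rep_psi hf] at hlt
  have hrep : Low (rep (Tm.psi i c) (normN t).succ) := low_rep (isPrincipal_psi _ _) ⟨hi, hc⟩ _
  simpa [hd_rep (isPrincipal_psi i c)] using hd_le_hd (h.le_of_le_mapNum _ hrep hlt.le)

theorem LimitPreimage.add (hf : IsNumMap f) {π : Slot} {i : ℕ} {c t e : Tm} {g : ℕ → ℕ}
    (h : LimitPreimage f (π.tail (Tm.psi i c)) t e g) (hc : Low c)
    (hlow : Low (Tm.add (Tm.psi i (mapNum f c)) t)) (hlegal : Legal π (Tm.psi i (mapNum f c))) :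
    LimitPreimage f π (Tm.add (Tm.psi i (mapNum f c)) t) (Tm.add (Tm.psi i c) e) g := by
  have hi : i ≤ 1 := hlow.2.1.1
  have he0 : e ≠ Tm.zero := ne_zero_of_kind_pos (by have := h.kind_eq_two; omega)
  have hlow_e : Low (Tm.add (Tm.psi i c) e) :=
    ⟨isPrincipal_psi _ _, ⟨hi, hc⟩, h.low, he0, h.hd_le hf hi hc hlow.2.2.1 hlow.2.2.2.2⟩
  have hlow_c : Low (Tm.psi i c) := ⟨hi, hc⟩
  refine ⟨hlow_e, h.kind_eq_two, ⟨(legal_mapNum hf hlow_c π).1 hlegal, h.legal⟩, ?_,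
    fun τ hτ hle => ?_, h.index_le, fun y => ?_,
    h.eq_or_multLimit.imp (fun heq => ?_) (.add _ _)⟩
  · rw [mapNum_add_psi, hlow.add_eq_cons, ← cons_of_ne_zero _ (mapNum_ne_zero hf he0),
      cons_le_cons (isPrincipal_psi _ _) (isPrincipal_psi _ _)]
    exact Or.inr ⟨rfl, h.le_mapNum⟩
  · rw [hlow_e.add_eq_cons]
    rw [hlow.add_eq_cons] at hle
    rcases hτ.eq_num_or_cons with ⟨n, rfl⟩ | ⟨j, b, s, rfl, hj, hb, hs, -⟩
    · rw [mapNum_num hf] at hle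
      exact absurd hle (num_lt_cons_psi _ _ _ _).not_ge
    rw [mapNum_cons_psi hf, cons_le_cons (isPrincipal_psi _ _) (isPrincipal_psi _ _)] at hle
    rw [cons_le_cons (isPrincipal_psi _ _) (isPrincipal_psi _ _)]
    have hlow_b : Low (Tm.psi j b) := ⟨hj, hb⟩
    exact hle.imp (mapNum_lt_mapNum hf hlow_c hlow_b).1 fun ⟨heq, hts⟩ =>
      ⟨mapNum_injOn hf hlow_c hlow_b heq, h.le_of_le_mapNum s hs hts⟩
  · rw [fs_add, fs_add, mapNum_cons_psi hf, h.mapNum_fs]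
  · rw [mapNum_add_psi, heq]

theorem exists_limitPreimage_psi (hf : IsNumMap f) {π : Slot} {i x : ℕ} {a α : Tm} (hi : i ≤ 1)
    (ha : Low a) (hk : kind (psi i a) = 2) (hlegal : Legal π (psi i a)) (hα : Low α) (hx : 1 ≤ x)
    (h1 : fs (psi i a) (num x) ≤ mapNum f α) (h2 : mapNum f α < psi i a)
    (ih : ∀ d, Low d → kind a = 2 → fs a (num x) ≤ mapNum f d → mapNum f d < a →
      ∃ ε g, LimitPreimage f (π.arg i) a ε g) :
    ∃ ε g, LimitPreimage f π (psi i a) ε g := by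
  have exists_head {c : Tm} (hc : psi i c ≤ mapNum f α) :
      ∃ d, Low d ∧ c ≤ mapNum f d ∧ mapNum f d < a := by
    obtain ⟨d, s, heq, hle, hlt⟩ := exists_cons_psi_of_le_of_lt (low_mapNum hf hα) hc h2
    obtain ⟨d₀, -, -, hd₀, -, rfl, -⟩ := exists_cons_of_mapNum_eq_cons hf hα heq
    exact ⟨d₀, hd₀, hle, hlt⟩
  rcases kind_cases a with h | h | h | h
  · obtain rfl := eq_zero_of_kind_psi_eq_two hi hk (.inl h)
    obtain rfl := (kind_eq_zero_iff ha).1 h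
    refine ⟨psi 0 zero, f, limitPreimage_mapNum (ε := psi 0 zero) hf ⟨hi, ha⟩ hk hlegal
      (fun _ => le_rfl) fun y => ?_⟩
    rw [fs_psi_zero, mapNum_num hf]
    rfl
  · rw [fs_psi_of_kind_one h, tmToNat_num] at h1
    have hone : psi i (fs a zero) ≤ rep (psi i (fs a zero)) x := by
      simpa only [rep_succ, rep_zero, cons_zero] using
        (rep_strictMono (isPrincipal_psi _ _)).monotone hx
    obtain ⟨d, hd, hle, hlt⟩ := exists_head (hone.trans h1)
    exact ⟨_, _, limitPreimage_psi_of_kind_one hf hi ha h hd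
      (le_antisymm (le_fs_of_lt ha (low_mapNum hf hd) h hlt) hle) hlegal⟩
  · rw [fs_psi_of_kind_two h] at h1
    obtain ⟨d, hd, hle, hlt⟩ := exists_head h1
    obtain ⟨e, g, he⟩ := ih d hd h hle hlt
    exact ⟨_, _, he.psi hf hi h⟩
  · obtain rfl := eq_zero_of_kind_psi_eq_two hi hk (.inr h)
    rw [fs_psi_zero_of_kind_three h, psiIter_succ] at h1
    obtain ⟨d, hd, hle, hlt⟩ := exists_head h1
    obtain ⟨e, he, rfl⟩ := exists_mapNum_eq_of_kind_three hf ha h hd hle hlt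
    have hke : kind e = 3 := kind_mapNum hf he ▸ h
    refine ⟨psi 0 e, id, limitPreimage_mapNum (ε := psi 0 e) hf ⟨hi, he⟩ (kind_psi_zero e) hlegal
      (fun _ => hf.strictMono.le_apply) fun y => ?_⟩
    rw [mapNum, fs_psi_zero_of_kind_three hke, fs_psi_zero_of_kind_three h,
      mapNum_psiIter hf he hke]
    rfl

theorem exists_limitPreimage (hf : IsNumMap f) {π : Slot} {x : ℕ} {δ α : Tm} (hδ : Low δ)
    (hk : kind δ = 2) (hlegal : Legal π δ) (hα : Low α) (hx : 1 ≤ x)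
    (h1 : fs δ (num x) ≤ mapNum f α) (h2 : mapNum f α < δ) :
    ∃ ε g, LimitPreimage f π δ ε g := by
  induction δ generalizing π α with
  | zero | one => simp at hk
  | psi i a ih =>
    exact exists_limitPreimage_psi hf hδ.1 hδ.2 hk hlegal hα hx h1 h2 fun d hd hka =>
      ih hδ.2 hka hlegal hd
  | add c t _ ih =>
    have hkt : kind t = 2 := hk
    obtain ⟨i, c, rfl⟩ := exists_psi_of_low_add hδ hkt.ge
    rw [fs_add] at h1
    obtain ⟨s, heq, hle, hlt, -⟩ := exists_cons_of_le_of_lt_add hδ (low_mapNum hf hα) h1 h2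
    obtain ⟨c₀, s₀, -, hc₀, hs₀, rfl, rfl⟩ := exists_cons_of_mapNum_eq_cons hf hα heq
    obtain ⟨e, g, he⟩ := ih hδ.2.2.1 hkt (tail_psi_mapNum hf π i hc₀ ▸ hlegal.2) hs₀ hle hlt
    exact ⟨_, _, he.add hf hc₀ hδ hlegal.1⟩

end LimitPreimage

/-! ### Indices of normal forms -/

/-- The index `α` occurs in `k`-normal forms: no larger index has the same or a smaller value of the
Hardy hierarchy at `k`. -/
def HardyNormal (k : ℕ) (α : Tm) : Prop :=
  HardyIndex α ∧ ∀ β, HardyIndex β → α < β → H α k < H β k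

theorem HardyIndex.eq_zero_of_lt_omega {α : Tm} (h : HardyIndex α) (hlt : α < psi 0 zero) :
    α = zero := by
  have hhd : hd α ≤ one := by
    by_contra! hone
    have hp := h.low.isPrincipal_hd (by rintro rfl; simp at hone)
    rw [lt_psi_iff_hd_lt] at hlt
    revert hlt hone hp
    cases hd α <;> simp
  obtain ⟨n, rfl⟩ := h.low.exists_eq_num hhd
  obtain rfl : n = 0 := (legal_num.1 h.2).resolve_right (by simp [Slot.top])
  rfl

theorem SuccGap.eq_omega {π : Slot} {a b : Tm} (h : SuccGap π a b) (hb : Low b)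
    (hlt : b < Tm.psi 1 Tm.zero) : π.one = false ∧ b = Tm.psi 0 Tm.zero := by
  induction h with
  | zero π hπ => exact ⟨hπ, rfl⟩
  | add π c a b _ ih =>
    rw [lt_psi_iff_hd_lt] at hlt
    have hb_lt : b < Tm.psi 1 Tm.zero := by
      rw [lt_psi_iff_hd_lt]
      exact hb.2.2.2.2.trans_lt hlt
    have htail := (ih hb.2.2.1 hb_lt).1
    rcases IsPrincipal.eq_one_or_exists_psi_zero hb.1 hlt with rfl | ⟨d, rfl⟩ <;>
      simp [Slot.tail, isBelowOmega] at htail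

section

variable {f : ℕ → ℕ} {k : ℕ} {α : Tm}

theorem hardyIndex_mapNum (hf : IsNumMap f) {a : Tm} (ha : Low a) :
    HardyIndex (mapNum f a) ↔ HardyIndex a := by
  rw [HardyIndex, HardyIndex, CountableOT, CountableOT, isOT_mapNum hf ha, mapNum_lt_Omega hf ha,
    legal_mapNum hf ha]

/-! ### Limits with an illegal fundamental sequence -/

theorem LimitGap.hardyIndex_fs {l r : Tm} (h : LimitGap .top l r) (hr : HardyIndex r) (n : ℕ) :
    HardyIndex (fs l (num n)) := by
  have hl : CountableOT l := ⟨h.isOT hr.1.1 hr.2, h.lt.trans hr.1.2⟩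
  exact ⟨hl.fs_num n, h.legal_fs hr.low hr.2 n⟩

theorem LimitGap.H_fs_le_H {π : Slot} {l r : Tm} {n : ℕ} (h : LimitGap π l r) (hr : CountableOT r)
    (hl : CountableOT (fs l (num n))) (hk : 1 ≤ k)
    (hn : n ≤ H (Tm.hardyIter r (k + 1) k) (k + 1) + 1) :
    H (fs l (num n)) (k + 1) ≤ H r (k + 1) := by
  set x := H (Tm.hardyIter r (k + 1) k) (k + 1) with hx
  have hkx : k + 1 ≤ x := le_H (hr.hardyIter _ _)
  obtain ⟨hkind, hembeds, hnorm⟩ := h.embeds_fs (x := x) (by omega)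
  rw [H_of_kind_two hr h.kind_right, hardyIter_succ, ← hx]
  set s := fs r (num x)
  have hs : CountableOT s := hr.fs_num x
  rw [H_of_kind_two hs hkind, hardyIter_succ]
  refine H_mono hl (hs.fs_num _) (hembeds _ _ (hn.trans ?_)) (by omega) le_rfl
  have hs_norm : normN s ≤ normN (Tm.hardyIter s (k + 1) k) := by
    obtain ⟨j, rfl⟩ := Nat.exists_eq_add_of_le' hk
    have hkj := le_H (k := j + 1 + 1) (hs.hardyIter (j + 1 + 1) j)
    exact normN_le_normN_fs hs.low hkind (by omega)
  have hlt := normN_lt_H (k := k + 1) (by omega) (hs.hardyIter (k + 1) k)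
  omega

theorem Embeds.H_le_H_hardyIter {a b : Tm} (h : Embeds a b) (ha : CountableOT a)
    (hb : CountableOT b) (hka : kind a = 2) (hb0 : b ≠ Tm.zero) (hk : 1 ≤ k) :
    H a k ≤ H (hardyIter b (k + 1) k) (k + 1) := by
  rcases h.embedsInFs_or_parallelFs ha.low hb.low hb0 with hin | hpar
  · obtain ⟨j, rfl⟩ := Nat.exists_eq_add_of_le' hk
    have hle := le_H (k := j + 1 + 1) (hb.hardyIter (j + 1 + 1) j)
    rw [hardyIter_succ]
    exact H_mono ha (hb.fs_num _) (hin.embeds_fs_num (by omega)) hk (by omega)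
  · rw [H_of_kind_two ha hka]
    refine H_mono (ha.hardyIter _ _) (hb.hardyIter _ _) ?_ hk (by omega)
    exact embeds_hardyIter (fun _ _ => hpar.embeds_fs_num)
      (fun n n' hemb => H_mono (ha.hardyIter _ n) (hb.hardyIter _ n') hemb hk (by omega)) le_rfl

theorem HardyNormal.exists_mapNum_lt_fs (hn : HardyNormal k α) (hk : 2 ≤ k) (hf : IsNumMap f)
    {l r : Tm} (h : LimitGap .top l r) (hr : HardyIndex r) (hlt : mapNum f α < r) :
    ∃ n, mapNum f α < fs l (num n) ∧ n ≤ H (hardyIter r (k + 1) k) (k + 1) + 1 := by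
  have hα := hn.1.low
  have hindex := (hardyIndex_mapNum hf hα).2 hn.1
  have hlt_l : mapNum f α < l := lt_of_not_ge fun hle =>
    (h.le_of_legal hr.low hindex.low hindex.2 hle).not_gt hlt
  by_cases h1 : mapNum f α < fs l (num 1)
  · exact ⟨1, h1, by omega⟩
  obtain ⟨l₀, r₀, hr₀, hgap, hl, rfl, hfs⟩ :=
    h.exists_mapNum hf hr.low hα (not_lt.1 h1) hlt_l
  have hl₀ := hgap.low_left hr₀
  have hindex₀ : HardyIndex r₀ := (hardyIndex_mapNum hf hr₀).1 hr
  have hαl₀ : α < l₀ := by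
    rwa [← mapNum_lt_mapNum hf hα hl₀, hl]
  refine ⟨normN α + 1, ?_, ?_⟩
  · rw [← hfs, mapNum_lt_mapNum hf hα (low_fs hl₀ (admissible_num _ _))]
    exact hgap.multLimit.lt_fs_num hl₀ hα hαl₀ (Nat.lt_succ_self _)
  · have hr0 : mapNum f r₀ ≠ Tm.zero :=
      mapNum_ne_zero hf (ne_zero_of_kind_pos (by rw [hgap.kind_right]; omega))
    have hH := (embeds_mapNum hf hr₀).H_le_H_hardyIter hindex₀.1 hr.1 hgap.kind_right hr0
      (k := k) (by omega)
    have hnorm := normN_lt_H hk hn.1.1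
    have hnormal := hn.2 r₀ hindex₀ (hαl₀.trans hgap.lt)
    omega

/-! ### Limits with a legal fundamental sequence -/

theorem LimitPreimage.hardyIndex_fs {δ ε : Tm} {g : ℕ → ℕ} {π : Slot} (h : LimitPreimage f π δ ε g)
    (hf : IsNumMap f) (hδ : ∀ n, HardyIndex (fs δ (num n))) (n : ℕ) :
    HardyIndex (fs ε (num n)) := by
  rw [← hardyIndex_mapNum hf (low_fs h.low (admissible_num _ _)), h.mapNum_fs]
  exact hδ _

theorem LimitPreimage.hardyIndex {δ ε : Tm} {g : ℕ → ℕ} (h : LimitPreimage f .top δ ε g)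
    (hf : IsNumMap f) (hδ : HardyIndex δ) (hfs : ∀ n, HardyIndex (fs δ (num n))) :
    HardyIndex ε := by
  have hot : IsOT ε := by
    rcases h.eq_or_multLimit with heq | hmult
    · rw [← isOT_mapNum hf h.low, heq]
      exact hδ.1.1
    · exact hmult.isOT h.low fun n => (h.hardyIndex_fs hf hfs n).1.1
  have hle : ε ≤ Tm.psi 1 Tm.zero :=
    h.le_of_le_mapNum _ ⟨le_rfl, low_zero⟩ hδ.1.2.le
  have hne : ε ≠ Tm.psi 1 Tm.zero := by
    rintro rfl
    exact absurd h.kind_eq_two (by simp [kind_psi_one])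
  exact ⟨⟨hot, lt_of_le_of_ne hle hne⟩, h.legal⟩

theorem HardyNormal.fs_num (hn : HardyNormal k α) (hk : 2 ≤ k) {ε : Tm} (hε : Low ε)
    (hkε : kind ε = 2) {n : ℕ} (hfs : HardyIndex (fs ε (num n))) (h1 : fs ε (num n) ≤ α)
    (h2 : α < ε) : HardyNormal k (fs ε (num n)) := by
  refine ⟨hfs, fun β hβ hlt => ?_⟩
  by_cases hβε : β < ε
  · exact H_lt_H hfs.1 hβ.1 (embeds_fs_num_of_le hε hkε β n hβ.1.1 hlt.le hβε) hlt.ne hk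
  · have hle : H (fs ε (num n)) k ≤ H α k :=
      H_mono hfs.1 hn.1.1 (embeds_fs_num_of_le hε hkε α n hn.1.1.1 h1 h2) (by omega) le_rfl
    exact hle.trans_lt (hn.2 β hβ (h2.trans_le (not_lt.1 hβε)))

theorem fs_num_le_iff_H_le {a : Tm} (ha : CountableOT a) (hka : kind a = 2) (hk : 2 ≤ k)
    {n m : ℕ} : fs a (num n) ≤ fs a (num m) ↔ H (fs a (num n)) k ≤ H (fs a (num m)) k := by
  rw [(fs_num_strictMono ha.low hka).le_iff_le, (H_fs_num_strictMono ha hka hk).le_iff_le]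

theorem LimitPreimage.mapNum_hardyIter_le {δ ε : Tm} {g : ℕ → ℕ} (h : LimitPreimage f .top δ ε g)
    (hf : IsNumMap f) (hk : 2 ≤ k) (hδ : HardyIndex δ) (hkδ : kind δ = 2)
    (hδfs : ∀ n, HardyIndex (fs δ (num n))) (hn : HardyNormal k α)
    (hfH : ∀ γ, HardyNormal k γ → γ < α → f (H γ k) = H (mapNum f γ) (k + 1))
    (hle : hardyIter δ (k + 1) (k + 1) ≤ mapNum f α) (hαε : α < ε) {b : ℕ} (hb : b ≤ k) :
    mapNum f (hardyIter ε k b) ≤ hardyIter δ (k + 1) b := by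
  have hεfs := h.hardyIndex_fs hf hδfs
  induction b with
  | zero =>
    have hg : g 0 = 0 := Nat.le_zero.1 ((h.index_le 0).trans_eq hf.map_zero)
    exact (hg ▸ h.mapNum_fs 0).le
  | succ b ih =>
    have ih := ih (by omega)
    rw [hardyIter_succ, hardyIter_succ, h.mapNum_fs, (fs_num_strictMono hδ.low hkδ).le_iff_le]
    refine (h.index_le _).trans ?_
    have hlt_δ : hardyIter δ (k + 1) b < hardyIter δ (k + 1) (k + 1) :=
      hardyIter_strictMono hδ.1 hkδ (by omega) (by omega)
    obtain ⟨n, hεn⟩ := exists_hardyIter_eq ε k b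
    obtain ⟨m, hδm⟩ := exists_hardyIter_eq δ (k + 1) b
    rw [hεn] at ih ⊢
    have hlt : fs ε (num n) < α := by
      rw [← mapNum_lt_mapNum hf (hεfs n).low hn.1.low]
      exact (ih.trans_lt hlt_δ).trans_le hle
    have hnormal := hn.fs_num hk h.low h.kind_eq_two (hεfs n) hlt.le hαε
    rw [hfH _ hnormal hlt, hδm, h.mapNum_fs]
    rwa [hδm, h.mapNum_fs, fs_num_le_iff_H_le hδ.1 hkδ (k := k + 1) (by omega)] at ih

theorem HardyNormal.mapNum_lt_hardyIter (hn : HardyNormal k α) (hk : 2 ≤ k) (hf : IsNumMap f)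
    (hfH : ∀ γ, HardyNormal k γ → γ < α → f (H γ k) = H (mapNum f γ) (k + 1)) {δ : Tm}
    (hδ : HardyIndex δ) (hkδ : kind δ = 2) (hδfs : ∀ n, HardyIndex (fs δ (num n)))
    (hlt : mapNum f α < δ) : mapNum f α < hardyIter δ (k + 1) (k + 1) := by
  by_contra! hle
  have hx : 1 ≤ H (hardyIter δ (k + 1) k) (k + 1) :=
    (Nat.le_add_left 1 k).trans (le_H (hδ.1.hardyIter _ _))
  obtain ⟨ε, g, h⟩ := exists_limitPreimage hf hδ.low hkδ hδ.2 hn.1.low hx hle hlt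
  have hε := h.hardyIndex hf hδ hδfs
  have hαε : α < ε := (mapNum_lt_mapNum hf hn.1.low h.low).1 (hlt.trans_le h.le_mapNum)
  have hmap : mapNum f (hardyIter ε k k) ≤ mapNum f α :=
    ((h.mapNum_hardyIter_le hf hk hδ hkδ hδfs hn hfH hle hαε le_rfl).trans
      (hardyIter_lt_succ hδ.1 hkδ (by omega) k).1.le).trans hle
  have hεα : hardyIter ε k k ≤ α :=
    (mapNum_le_mapNum hf (hε.1.hardyIter k k).low hn.1.low).1 hmap
  have hemb : Embeds (hardyIter ε k k) α := by
    obtain ⟨n, heq⟩ := exists_hardyIter_eq ε k k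
    rw [heq] at hεα ⊢
    exact embeds_fs_num_of_le h.low h.kind_eq_two α n hn.1.1.1 hεα hαε
  have hH := H_mono (hε.1.hardyIter k k) hn.1.1 hemb (k := k) (by omega) le_rfl
  rw [← H_of_kind_two hε.1 h.kind_eq_two] at hH
  exact hH.not_gt (hn.2 ε hε hαε)

/-! ### Normality of the image of an index -/

theorem HardyNormal.H_mapNum_lt_H_of_kind_two (hn : HardyNormal k α) (hk : 2 ≤ k)
    (hf : IsNumMap f) (hfH : ∀ γ, HardyNormal k γ → γ < α → f (H γ k) = H (mapNum f γ) (k + 1))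
    {δ : Tm} (hδ : HardyIndex δ) (hkδ : kind δ = 2) (hlt : mapNum f α < δ)
    (ih : ∀ β, HardyIndex β → β < δ → mapNum f α < β →
      H (mapNum f α) (k + 1) < H β (k + 1)) :
    H (mapNum f α) (k + 1) < H δ (k + 1) := by
  have hδ0 : δ ≠ Tm.zero := ne_zero_of_kind_pos (by omega)
  rcases hδ.2.fs_num_or_gap hδ.low hkδ (by simp [Slot.top]) with hlegal | ⟨l, hgap⟩ | ⟨a, hgap⟩
  · have hfs (n : ℕ) : HardyIndex (fs δ (num n)) := ⟨hδ.1.fs_num n, hlegal n⟩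
    have hlt_iter := hn.mapNum_lt_hardyIter hk hf hfH hδ hkδ hfs hlt
    rw [H_of_kind_two hδ.1 hkδ]
    exact ih _ (hfs _) (hardyIter_lt hδ.low hδ0 _ _) hlt_iter
  · obtain ⟨n, hlt_n, hle⟩ := hn.exists_mapNum_lt_fs hk hf hgap hδ hlt
    have hl := hgap.hardyIndex_fs hδ n
    have hl0 : l ≠ Tm.zero := ne_zero_of_kind_pos (by rw [hgap.multLimit.kind_eq_two]; omega)
    have hl_lt := (fs_lt (hgap.low_left hδ.low) (admissible_num _ n) hl0).trans hgap.lt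
    exact (ih _ hl hl_lt hlt_n).trans_le (hgap.H_fs_le_H hδ.1 hl.1 (by omega) hle)
  · obtain ⟨-, rfl⟩ := hgap.eq_omega hδ.low hδ.1.2
    have hindex := (hardyIndex_mapNum hf hn.1.low).2 hn.1
    rw [hindex.eq_zero_of_lt_omega hlt]
    exact H_lt_H countableOT_zero hδ.1 (.zero _) hδ0.symm (by omega)

theorem HardyNormal.mapNum (hn : HardyNormal k α) (hk : 2 ≤ k) (hf : IsNumMap f)
    (hfH : ∀ γ, HardyNormal k γ → γ < α → f (H γ k) = H (mapNum f γ) (k + 1)) :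
    HardyNormal (k + 1) (mapNum f α) := by
  have hindex : HardyIndex (Tm.mapNum f α) := (hardyIndex_mapNum hf hn.1.low).2 hn.1
  refine ⟨hindex, fun δ hδ => ?_⟩
  refine CountableOT.induction (P := fun δ => HardyIndex δ → Tm.mapNum f α < δ →
    H (Tm.mapNum f α) (k + 1) < H δ (k + 1)) (fun δ _ ih hδ hlt => ?_) hδ.1 hδ
  have ih' (β : Tm) (hβ : HardyIndex β) (hβδ : β < δ) (hlt : Tm.mapNum f α < β) :=
    ih β hβ.1 hβδ hβ hlt
  rcases hδ.1.zero_or_kind with rfl | hkδ | hkδ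
  · exact absurd hlt (not_lt_zero _)
  · have hfs : HardyIndex (fs δ Tm.zero) := ⟨hδ.1.fs_zero, legal_fs_of_kind_one hkδ hδ.2⟩
    have hfs_lt : fs δ Tm.zero < δ :=
      fs_lt hδ.low (admissible_num _ 0) (ne_zero_of_kind_pos (by omega))
    have hH : H (Tm.mapNum f α) (k + 1) ≤ H (fs δ Tm.zero) (k + 1) := by
      rcases (le_fs_of_lt hδ.low hindex.low hkδ hlt).lt_or_eq with h | h
      · exact (ih' _ hfs hfs_lt h).le
      · rw [h]
    rw [H_of_kind_one hδ.1 hkδ]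
    have hpos := le_H (k := k + 1) hindex.1
    nlinarith
  · exact hn.H_mapNum_lt_H_of_kind_two hk hf hfH hδ hkδ hlt ih'

end

/-! ### Normal forms and base change -/

theorem finite_setOf_low_normN_le (n : ℕ) : {t | Low t ∧ normN t ≤ n}.Finite := by
  induction n with
  | zero =>
    refine (Set.finite_singleton zero).subset fun t ⟨hlow, hn⟩ => ?_
    by_contra h
    have := normN_pos h hlow
    omega
  | succ n ih =>
    refine ((Set.toFinite {zero, one}).union
      (((ih.image (psi 0)).union (ih.image (psi 1))).union (ih.image2 add ih))).subset ?_
    rintro (_ | _ | ⟨i, a⟩ | ⟨a, b⟩) ⟨hlow, hn⟩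
    · simp
    · simp
    · rw [low_psi] at hlow
      rw [normN] at hn
      have ha : Low a ∧ normN a ≤ n := ⟨hlow.2, by omega⟩
      obtain rfl | rfl : i = 0 ∨ i = 1 := by omega
      · exact .inr (.inl (.inl ⟨a, ha, rfl⟩))
      · exact .inr (.inl (.inr ⟨a, ha, rfl⟩))
    · obtain ⟨hp, ha, hb, hb0, -⟩ := (low_add _ _).1 hlow
      rw [normN] at hn
      have ha_pos := normN_pos hp.ne_zero ha
      have hb_pos := normN_pos hb0 hb
      exact .inr (.inr ⟨a, ⟨ha, by omega⟩, b, ⟨hb, by omega⟩, rfl⟩)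

/-- `α` is the index of the `k`-normal form of `m`. -/
def IsNormalForm (k m : ℕ) (α : Tm) : Prop :=
  HardyIndex α ∧ H α k ≤ m ∧ ∀ β, HardyIndex β → α < β → m < H β k

theorem hardyIndex_zero : HardyIndex zero := ⟨countableOT_zero, by simp⟩

section

variable {k m n : ℕ} {α β : Tm}

theorem exists_isNormalForm (hk : 2 ≤ k) (hm : k ≤ m) : ∃ α, IsNormalForm k m α := by
  have hfin : {α | HardyIndex α ∧ H α k ≤ m}.Finite :=
    (finite_setOf_low_normN_le m).subset fun t ht =>
      ⟨ht.1.low, (normN_lt_H hk ht.1.1).le.trans ht.2⟩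
  obtain ⟨α, hα, hmax⟩ := hfin.exists_maximal ⟨zero, hardyIndex_zero, (H_zero k).trans_le hm⟩
  refine ⟨α, hα.1, hα.2, fun β hβ hlt => ?_⟩
  by_contra! hle
  exact hlt.not_ge (hmax ⟨hβ, hle⟩ hlt.le)

theorem IsNormalForm.unique (hα : IsNormalForm k m α) (hβ : IsNormalForm k m β) : α = β := by
  rcases lt_trichotomy α β with h | h | h
  · exact absurd hβ.2.1 (hα.2.2 β hβ.1 h).not_ge
  · exact h
  · exact absurd hα.2.1 (hβ.2.2 α hα.1 h).not_ge

theorem isNormalForm_iff : IsNormalForm k m α ↔ InOT0 α ∧ TLt α OmegaT ∧ H α k ≤ m ∧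
    ∀ β : Tm, InOT0 β → TLt β OmegaT → TLt α β → m < H β k := by
  constructor
  · rintro ⟨hα, hle, hmax⟩
    obtain ⟨hot, hlt⟩ := hardyIndex_iff.1 hα
    exact ⟨hot, hlt, hle, fun β hβ hβΩ hαβ =>
      hmax β (hardyIndex_iff.2 ⟨hβ, hβΩ⟩) (lt_of_tlt hαβ)⟩
  · rintro ⟨hot, hlt, hle, hmax⟩
    have hα := hardyIndex_iff.2 ⟨hot, hlt⟩
    refine ⟨hα, hle, fun β hβ hαβ => ?_⟩
    obtain ⟨hβot, hβΩ⟩ := hardyIndex_iff.1 hβ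
    exact hmax β hβot hβΩ ((hα.tlt_iff hβ).2 hαβ)

theorem IsNormalForm.nfAlpha_eq (h : IsNormalForm k m α) : nfAlpha k m = α :=
  (isNormalForm_iff.2 (Classical.epsilon_spec (p := fun α => InOT0 α ∧ TLt α OmegaT ∧ H α k ≤ m ∧
    ∀ β : Tm, InOT0 β → TLt β OmegaT → TLt α β → m < H β k) ⟨α, isNormalForm_iff.1 h⟩)).unique h

theorem IsNormalForm.hardyNormal (h : IsNormalForm k m α) : HardyNormal k α :=
  ⟨h.1, fun β hβ hlt => h.2.1.trans_lt (h.2.2 β hβ hlt)⟩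

theorem HardyNormal.isNormalForm (h : HardyNormal k α) : IsNormalForm k (H α k) α :=
  ⟨h.1, le_rfl, h.2⟩

theorem H_pos (hk : 1 ≤ k) (hα : CountableOT α) : 0 < H α k := hk.trans (le_H hα)

theorem bcN_of_lt (h : m < k) : bcN k m = m := by rw [bcN, dif_pos h]

theorem bcN_self (k : ℕ) : bcN k k = k + 1 := by rw [bcN, dif_neg (lt_irrefl k), dif_pos rfl]

theorem bcT_zero (k : ℕ) : bcT k zero = zero := by rw [bcT]

theorem isNormalForm_self (hk : 2 ≤ k) : IsNormalForm k k zero := by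
  refine ⟨hardyIndex_zero, (H_zero k).le, fun β hβ hlt => ?_⟩
  have hH := H_lt_H countableOT_zero hβ.1 (.zero _) hlt.ne hk
  rwa [H_zero] at hH

theorem IsNormalForm.bcN_eq (h : IsNormalForm k m α) (hk : 2 ≤ k) (hm : k ≤ m) :
    bcN k m = H (bcT k α) (k + 1) * (m / H α k) + bcN k (m % H α k) := by
  rcases hm.eq_or_lt with rfl | hlt
  · obtain rfl := h.unique (isNormalForm_self hk)
    rw [bcT_zero, H_zero, H_zero, bcN_self, Nat.div_self (by omega), Nat.mod_self, mul_one,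
      bcN_of_lt (by omega), add_zero]
  · have hguard : normN α < m ∧ 0 < H α k ∧ H α k ≤ m :=
      ⟨(normN_lt_H hk h.1.1).trans_le h.2.1, H_pos (by omega) h.1.1, h.2.1⟩
    rw [bcN, dif_neg hm.not_gt, dif_neg hlt.ne', h.nfAlpha_eq, dif_pos hguard]

theorem HardyNormal.bcN_H (h : HardyNormal k α) (hk : 2 ≤ k) :
    bcN k (H α k) = H (bcT k α) (k + 1) := by
  rw [h.isNormalForm.bcN_eq hk (le_H h.1.1), Nat.div_self (H_pos (by omega) h.1.1), Nat.mod_self,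
    bcN_of_lt (by omega), mul_one, add_zero]

theorem bcT_eq_mapNum {f : ℕ → ℕ} {t : Tm} (ht : Low t) (hf : ∀ n ≤ normN t, bcN k n = f n) :
    bcT k t = mapNum f t := by
  induction t with
  | zero => rw [bcT_zero, mapNum]
  | one => rw [bcT, mapNum]
  | psi i a ih =>
    rw [bcT, mapNum, ih ht.2 fun n hn => hf n (hn.trans (Nat.le_add_left _ _))]
  | add a b iha ihb =>
    have hle := tmToNat_le_normN (add a b)
    obtain ⟨hp, ha, hb, hb0, -⟩ := (low_add _ _).1 ht
    rw [bcT, mapNum]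
    split
    · rw [natToTm_eq_num, hf _ hle]
    · rw [normN] at hf
      rw [dif_pos ⟨normN_pos hp.ne_zero ha, normN_pos hb0 hb⟩,
        iha ha fun n hn => hf n (by omega), ihb hb fun n hn => hf n (by omega)]

theorem exists_isNumMap_of_strictMonoOn {g : ℕ → ℕ} (hn : 2 ≤ n) (hg : StrictMonoOn g (Set.Iio n))
    (h0 : g 0 = 0) (h1 : g 1 = 1) : ∃ f, IsNumMap f ∧ ∀ x < n, g x = f x := by
  refine ⟨fun x => if x < n then g x else g (n - 1) + (x + 1 - n), ⟨fun a b hab => ?_, ?_, ?_⟩,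
    fun x hx => (if_pos hx).symm⟩
  · split_ifs with ha hb
    · exact hg ha hb hab
    · have := hg.monotoneOn ha (Set.mem_Iio.2 (by omega : n - 1 < n)) (by omega : a ≤ n - 1)
      omega
    · omega
    · omega
  · rwa [if_pos (by omega)]
  · rwa [if_pos (by omega)]

theorem exists_bcT_eq_mapNum (hk : 2 ≤ k) (hn : k ≤ n)
    (hmono : StrictMonoOn (bcN k) (Set.Iio n)) :
    ∃ f, IsNumMap f ∧ (∀ x < n, bcN k x = f x) ∧
      ∀ t, CountableOT t → H t k ≤ n → bcT k t = mapNum f t := by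
  obtain ⟨f, hf, hfn⟩ := exists_isNumMap_of_strictMonoOn (hk.trans hn) hmono
    (bcN_of_lt (by omega)) (bcN_of_lt (by omega))
  refine ⟨f, hf, hfn, fun t ht hle => bcT_eq_mapNum ht.low fun x hx => hfn x ?_⟩
  exact (hx.trans_lt (normN_lt_H hk ht)).trans_le hle

/-! ### Strict monotonicity of base change -/

theorem succ_mul_div_add_mod_lt_pow {e : ℕ} (hk : 0 < k) (h : m < k ^ e) :
    (k + 1) * (m / k) + m % k < (k + 1) ^ e := by
  cases e with
  | zero =>
    obtain rfl : m = 0 := by simpa using h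
    simp
  | succ e =>
    have hdiv : m / k < (k + 1) ^ e :=
      (Nat.div_lt_of_lt_mul (by rwa [pow_succ'] at h)).trans_le
        (Nat.pow_le_pow_left (Nat.le_succ k) e)
    have hmod := Nat.mod_lt m hk
    calc (k + 1) * (m / k) + m % k < (k + 1) * (m / k + 1) := by rw [mul_add]; omega
      _ ≤ (k + 1) * (k + 1) ^ e := Nat.mul_le_mul_left _ hdiv
      _ = (k + 1) ^ (e + 1) := (pow_succ' _ _).symm

theorem H_mul_le_H (hk : 2 ≤ k) (hα : CountableOT α) (hβ : CountableOT β) (h : H α k < H β k) :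
    H α k * k ≤ H β k := by
  obtain ⟨e, -, hαe⟩ := exists_H_eq_pow hα k
  obtain ⟨e', -, hβe⟩ := exists_H_eq_pow hβ k
  rw [hαe, hβe] at h ⊢
  rw [← pow_succ]
  exact Nat.pow_le_pow_right (by omega) ((Nat.pow_lt_pow_iff_right hk).1 h)

theorem IsNormalForm.div_lt (h : IsNormalForm k m α) (h0 : α ≠ zero) : m / H α k < k := by
  have hlt : α < succ α := by
    conv_lhs => rw [← fs_succ h.1.low]
    exact fs_lt (low_succ h.1.low) (admissible_num _ 0) (succ_ne_zero α)
  have hindex := h.1.succ h0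
  have hm := h.2.2 _ hindex hlt
  rw [H_of_kind_one hindex.1 (kind_succ α), fs_succ h.1.low] at hm
  exact Nat.div_lt_of_lt_mul hm

theorem IsNormalForm.bcN_lt_H (h : IsNormalForm k m α) (hk : 2 ≤ k) (hm : k ≤ m)
    (hα : HardyNormal (k + 1) (bcT k α)) (hmod : bcN k (m % H α k) < H (bcT k α) (k + 1))
    (hβ : HardyIndex β) (hlt : bcT k α < β) : bcN k m < H β (k + 1) := by
  rw [h.bcN_eq hk hm]
  by_cases h0 : α = zero
  · subst h0
    rw [bcT_zero] at hlt ⊢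
    rw [H_zero, H_zero, bcN_of_lt (Nat.mod_lt m (by omega))]
    obtain ⟨e, e', hle, hke, hke'⟩ :=
      exists_H_eq_pow_of_embeds hβ.1 hβ.1 (.refl β) (by omega : 1 ≤ k) (Nat.le_succ k)
    have hmβ := h.2.2 β hβ hlt
    rw [hke] at hmβ
    rw [hke']
    exact (succ_mul_div_add_mod_lt_pow (by omega) hmβ).trans_le
      (Nat.pow_le_pow_right (by omega) hle)
  · have hdiv := h.div_lt h0
    calc H (bcT k α) (k + 1) * (m / H α k) + bcN k (m % H α k)
        < H (bcT k α) (k + 1) * (m / H α k + 1) := by rw [mul_add]; omega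
      _ ≤ H (bcT k α) (k + 1) * (k + 1) := Nat.mul_le_mul_left _ (by omega)
      _ ≤ H β (k + 1) := H_mul_le_H (by omega) hα.1.1 hβ.1 (hα.2 β hβ hlt)

theorem IsNormalForm.bcN_mod_lt (h : IsNormalForm k m α) (hk : 2 ≤ k)
    (hmono : StrictMonoOn (bcN k) (Set.Iic m)) :
    bcN k (m % H α k) < H (bcT k α) (k + 1) := by
  rw [← h.hardyNormal.bcN_H hk]
  exact hmono (Nat.mod_le _ _) h.2.1 (Nat.mod_lt _ (H_pos (by omega) h.1.1))

theorem IsNormalForm.bcN_lt_bcN (hm : IsNormalForm k m α) (hn : IsNormalForm k n α) (hk : 2 ≤ k)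
    (hkm : k ≤ m) (hmn : m < n) (hmono : StrictMonoOn (bcN k) (Set.Iic m)) :
    bcN k m < bcN k n := by
  rw [hm.bcN_eq hk hkm, hn.bcN_eq hk (hkm.trans hmn.le)]
  rcases (Nat.div_le_div_right (c := H α k) hmn.le).lt_or_eq with hdiv | hdiv
  · have hmod := hm.bcN_mod_lt hk hmono
    have hmul := Nat.mul_le_mul_left (H (bcT k α) (k + 1)) (Nat.succ_le_of_lt hdiv)
    rw [Nat.succ_eq_add_one, mul_add] at hmul
    omega
  · rw [hdiv, Nat.add_lt_add_iff_left]
    have hmod : m % H α k < n % H α k := by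
      have hdm := Nat.div_add_mod m (H α k)
      have hdn := Nat.div_add_mod n (H α k)
      rw [hdiv] at hdm
      omega
    refine hmono (Nat.mod_le _ _) ?_ hmod
    exact (Nat.mod_lt n (H_pos (by omega) hm.1.1)).le.trans hm.2.1

theorem bcN_lt_bcN_of_strictMonoOn (hk : 2 ≤ k)
    (hnormal : ∀ γ, HardyNormal k γ → H γ k < n → HardyNormal (k + 1) (bcT k γ))
    (hmono : StrictMonoOn (bcN k) (Set.Iio n)) (hmn : m < n) : bcN k m < bcN k n := by
  rcases lt_or_ge n k with hn | hn
  · rwa [bcN_of_lt hn, bcN_of_lt (hmn.trans hn)]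
  obtain ⟨f, hf, -, hfT⟩ := exists_bcT_eq_mapNum hk hn hmono
  obtain ⟨β, hβ⟩ := exists_isNormalForm hk hn
  have hβ' : HardyIndex (bcT k β) := by
    rw [hfT β hβ.1.1 hβ.2.1, hardyIndex_mapNum hf hβ.1.low]
    exact hβ.1
  have hle : H (bcT k β) (k + 1) ≤ bcN k n := by
    rw [hβ.bcN_eq hk hn]
    have hdiv := Nat.div_pos hβ.2.1 (H_pos (by omega) hβ.1.1)
    exact (Nat.le_mul_of_pos_right _ hdiv).trans (Nat.le_add_right _ _)
  rcases lt_or_ge m k with hm | hm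
  · rw [bcN_of_lt hm]
    have := le_H (k := k + 1) hβ'.1
    omega
  obtain ⟨γ, hγ⟩ := exists_isNormalForm hk hm
  have hmono_m := hmono.mono fun x (hx : x ≤ m) => hx.trans_lt hmn
  rcases lt_trichotomy γ β with hlt | rfl | hlt
  · have hlt' : bcT k γ < bcT k β := by
      rw [hfT γ hγ.1.1 (hγ.2.1.trans hmn.le), hfT β hβ.1.1 hβ.2.1,
        mapNum_lt_mapNum hf hγ.1.low hβ.1.low]
      exact hlt
    exact (hγ.bcN_lt_H hk hm (hnormal γ hγ.hardyNormal (hγ.2.1.trans_lt hmn))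
      (hγ.bcN_mod_lt hk hmono_m) hβ' hlt').trans_le hle
  · exact hγ.bcN_lt_bcN hβ hk hm hmn hmono_m
  · exact absurd ((hβ.2.2 γ hγ.1 hlt).trans_le hγ.2.1) hmn.not_gt

theorem strictMonoOn_bcN (hk : 2 ≤ k)
    (hnormal : ∀ γ, HardyNormal k γ → H γ k < n → HardyNormal (k + 1) (bcT k γ)) :
    StrictMonoOn (bcN k) (Set.Iic n) := by
  suffices ∀ b ≤ n, ∀ a < b, bcN k a < bcN k b from fun a _ b hb hab => this b hb a hab
  intro b
  induction b using Nat.strong_induction_on with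
  | _ b ih =>
    intro hb a hab
    exact bcN_lt_bcN_of_strictMonoOn hk (fun γ hγ hlt => hnormal γ hγ (hlt.trans_le hb))
      (fun x _ y hy hxy => ih y hy (hy.le.trans hb) x hxy) hab

theorem HardyNormal.baseChange (hα : HardyNormal k α) (hk : 2 ≤ k) :
    HardyNormal (k + 1) (bcT k α) := by
  refine CountableOT.induction
    (P := fun α => HardyNormal k α → HardyNormal (k + 1) (bcT k α)) (fun α _ ih hα => ?_) hα.1.1 hα
  have hmono : StrictMonoOn (bcN k) (Set.Iic (H α k)) := by
    refine strictMonoOn_bcN hk fun γ hγ hlt => ih γ hγ.1.1 (lt_of_not_ge fun hle => ?_) hγ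
    rcases hle.lt_or_eq with h | rfl
    · exact (hα.2 γ hγ.1 h).not_gt hlt
    · exact lt_irrefl _ hlt
  obtain ⟨f, hf, hfN, hfT⟩ := exists_bcT_eq_mapNum hk (le_H hα.1.1)
    (hmono.mono Set.Iio_subset_Iic_self)
  rw [hfT α hα.1.1 le_rfl]
  refine hα.mapNum hk hf fun γ hγ hlt => ?_
  have hH := hγ.2 α hα.1 hlt
  rw [← hfT γ hγ.1.1 hH.le, ← hfN _ hH, hγ.bcN_H hk]

theorem bcN_strictMono (hk : 2 ≤ k) : StrictMono (bcN k) := fun _ b hab =>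
  strictMonoOn_bcN hk (n := b) (fun _ hγ _ => hγ.baseChange hk) hab.le Set.self_mem_Iic hab

end

end Tm

open Tm

/-- Normal forms are preserved under base change: if `m =_k H_α(k)·p + q` then
`m[k←k+1] =_(k+1) H_(α')(k+1)·p + q[k←k+1]`, with `α'` and `p` again maximal. -/
theorem normal_form_preserved_by_base_change (k m p q : ℕ) (hk : 2 ≤ k)
    (hm : k ≤ m) (α : Tm) (hα : InOT0 α) (hαW : TLt α OmegaT)
    (hαmax : ∀ β : Tm, InOT0 β → TLt β OmegaT → TLt α β → m < H β k)
    (hp1 : 1 ≤ p) (hpm : H α k * p ≤ m) (hpmax : m < H α k * (p + 1))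
    (hq : q = m - H α k * p) :
    bcN k m = H (bcT k α) (k + 1) * p + bcN k q ∧
    InOT0 (bcT k α) ∧ TLt (bcT k α) OmegaT ∧
    (∀ β : Tm, InOT0 β → TLt β OmegaT → TLt (bcT k α) β → bcN k m < H β (k + 1)) ∧
    H (bcT k α) (k + 1) * p ≤ bcN k m ∧
    bcN k m < H (bcT k α) (k + 1) * (p + 1) := by
  have hform : IsNormalForm k m α :=
    isNormalForm_iff.2 ⟨hα, hαW, (Nat.le_mul_of_pos_right _ hp1).trans hpm, hαmax⟩
  have hdiv : m / H α k = p := Nat.div_eq_of_lt_le (by linarith) (by linarith)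
  have hmod : m % H α k = q := by rw [hq, ← hdiv, Nat.mod_eq_sub]
  have hnormal := hform.hardyNormal.baseChange hk
  have hrem := hform.bcN_mod_lt hk ((bcN_strictMono hk).strictMonoOn _)
  have heq := hform.bcN_eq hk hm
  obtain ⟨hot, hΩ⟩ := hardyIndex_iff.1 hnormal.1
  refine ⟨by rw [heq, hdiv, hmod], hot, hΩ, fun β hβ hβΩ hlt => ?_, ?_, ?_⟩
  · exact hform.bcN_lt_H hk hm hnormal hrem (hardyIndex_iff.2 ⟨hβ, hβΩ⟩) (lt_of_tlt hlt)
  · rw [heq, hdiv]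
    exact Nat.le_add_right _ _
  · rw [heq, hdiv, mul_add, mul_one]
    exact Nat.add_lt_add_left hrem _
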